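/- Let k be an algebraically closed field, S a polynomial ring over k, and I ⊆ S a homogeneous ideal of height 3 generated by n quadrics. If I has an associated prime p with height(p) = 3 and Hilbert–Samuel multiplicity e(S/p) = 3, then pd_S(S/I) ≤ n+7. -/

import Mathlib

open CategoryTheory Opposite

universe u

/-- The height of an ideal: the infimum of the heights (in the prime spectrum,
ordered by inclusion) of the primes containing it. -/
noncomputable def Ideal.heightENat {R : Type u} [CommRing R] (I : Ideal R) : ℕ∞ :=
  ⨅ (p : PrimeSpectrum R) (_ : I ≤ p.asIdeal), Order.height p

/-- The projective dimension of an `R`-module `M`: the least `n` such that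
`Ext^i(M, N) = 0` for all `i > n` and all modules `N` (and `⊤` if no such `n` exists). -/
noncomputable def projDim (R : Type u) [CommRing R] (M : Type u) [AddCommGroup M]
    [Module R M] : ℕ∞ :=
  sInf ((↑) '' {n : ℕ | ∀ i : ℕ, n < i → ∀ N : ModuleCat.{u} R,
    Subsingleton (((Ext R (ModuleCat.{u} R) i).obj (op (ModuleCat.of R M))).obj N)})

/-- The Hilbert function of the standard graded ring `S/J`, where
`S = k[x_1, ..., x_N]`: the `k`-dimension of the degree-`d` graded piece of `S/J`. -/
noncomputable def hilbertFunction (k : Type u) [Field k] {N : ℕ}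
    (J : Ideal (MvPolynomial (Fin N) k)) (d : ℕ) : ℕ :=
  Module.finrank k (Submodule.map (Ideal.Quotient.mkₐ k J).toLinearMap
    (MvPolynomial.homogeneousSubmodule (Fin N) k d))

open scoped Classical in
/-- The Hilbert–Samuel multiplicity `e(S/J)` of the graded ring `S/J`:
`(deg P)!` times the leading coefficient of the Hilbert polynomial `P` of `S/J`,
i.e. of the polynomial agreeing with the Hilbert function in all large degrees
(the degree of the Hilbert polynomial being `dim(S/J) - 1`). -/
noncomputable def hilbertSamuelMultiplicity (k : Type u) [Field k] {N : ℕ}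
    (J : Ideal (MvPolynomial (Fin N) k)) : ℚ :=
  if h : ∃ P : Polynomial ℚ, ∀ᶠ d : ℕ in Filter.atTop,
      (hilbertFunction k J d : ℚ) = P.eval (d : ℚ)
  then (h.choose.natDegree).factorial * h.choose.leadingCoeff
  else 0

/-!
The projective dimension of `S ⧸ I` is at most the number of linear forms whose subalgebra contains
generators of `I`: that subalgebra is the image of a polynomial ring over which `S` is flat, so
Hilbert's syzygy theorem applies there. For `n` quadrics it therefore suffices to find seven linear
forms `x, ℓ₁, …, ℓ₆` such that each generator is `x * l` plus a polynomial in `ℓ₁, …, ℓ₆`.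

Projecting from a smooth point shows that a nondegenerate homogeneous prime has multiplicity
greater than its codimension. A prime `p` of codimension and multiplicity `3` hence contains
`s ≥ 1` independent linear forms. If `s = 3`, its multiplicity would be `1`. If `s = 2`, it is a
cubic hypersurface in a linear space, so every quadric in `p`, and hence `I`, lies in the ideal of
two linear forms, whose height is at most `2`. So `s = 1`, and modulo the linear form `x` the prime
becomes a nondegenerate prime `p'` of codimension `2` and multiplicity `3`. The images of the
generators include independent quadrics `q₁`, `q₂`, since otherwise `I` would lie in an ideal with
two generators. They cut out a complete intersection of degree `4`, which consists of `p'` and a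
linear prime `(u, v)`. Writing `q₁ = a u + b v` and `q₂ = c u + d v`, the quadrics in `p'` are
spanned by `q₁`, `q₂` and `a d - b c`, which are polynomials in the six linear forms
`a, b, c, d, u, v`.
-/

section HilbertSyzygy

open Polynomial TensorProduct

lemma subsingleton_ext_of_hasProjectiveDimensionLE {R : Type u} [CommRing R]
    (M : ModuleCat.{u} R) (d : ℕ) [HasProjectiveDimensionLE M d] {i : ℕ} (hi : d < i)
    (Y : ModuleCat.{u} R) :
    Subsingleton (((Ext R (ModuleCat.{u} R) i).obj (op M)).obj Y) := by
  obtain ⟨j, rfl⟩ : ∃ j, i = j + 1 := ⟨i - 1, by lia⟩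
  let P := projectiveResolution M
  suffices h : Limits.IsZero (((Ext R (ModuleCat.{u} R) (j + 1)).obj (op M)).obj Y) from
    ModuleCat.subsingleton_of_isZero h
  refine Limits.IsZero.of_iso ?_ (P.isoExt (j + 1) Y)
  rw [← HomologicalComplex.exactAt_iff_isZero_homology,
    HomologicalComplex.exactAt_iff' _ j (j + 1) (j + 2) (by simp) (by simp),
    ShortComplex.moduleCat_exact_iff]
  intro x hx
  have hcocycle : P.complex.d (j + 2) (j + 1) ≫ (show P.complex.X (j + 1) ⟶ Y from x) = 0 := hx
  have hclass : P.extMk (Y := Y) x (j + 2) rfl hcocycle = 0 :=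
    Abelian.Ext.eq_zero_of_hasProjectiveDimensionLT _ (d + 1) (by lia)
  exact (P.extMk_eq_zero_iff x (j + 2) rfl hcocycle j rfl).1 hclass

lemma projDim_le_of_hasProjectiveDimensionLE {R : Type u} [CommRing R] (M : Type u)
    [AddCommGroup M] [Module R M] (d : ℕ) [HasProjectiveDimensionLE (ModuleCat.of R M) d] :
    projDim R M ≤ d :=
  sInf_le ⟨d, fun _ hi _ => subsingleton_ext_of_hasProjectiveDimensionLE _ d hi _, rfl⟩

lemma shortExact_of_exact {R : Type u} [CommRing R] {A B C : Type u} [AddCommGroup A]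
    [AddCommGroup B] [AddCommGroup C] [Module R A] [Module R B] [Module R C]
    {f : A →ₗ[R] B} {g : B →ₗ[R] C} (hf : Function.Injective f) (hfg : Function.Exact f g)
    (hg : Function.Surjective g) :
    (ShortComplex.mk (ModuleCat.ofHom f) (ModuleCat.ofHom g)
      (ModuleCat.hom_ext (LinearMap.ext hfg.apply_apply_eq_zero))).ShortExact where
  exact := (ShortComplex.ShortExact.moduleCat_exact_iff_function_exact _).2 hfg
  mono_f := (ModuleCat.mono_iff_injective _).2 hf
  epi_g := (ModuleCat.epi_iff_surjective _).2 hg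

lemma hasProjectiveDimensionLE_baseChange {R S : Type u} [CommRing R] [CommRing S]
    [Algebra R S] [Module.Flat R S] (d : ℕ) (M : Type u) [AddCommGroup M] [Module R M]
    [h : HasProjectiveDimensionLE (ModuleCat.of R M) d] :
    HasProjectiveDimensionLE (ModuleCat.of S (S ⊗[R] M)) d := by
  induction d generalizing M with
  | zero =>
    rw [← projective_iff_hasProjectiveDimensionLE_zero, ← IsProjective.iff_projective] at h ⊢
    infer_instance
  | succ d ih =>
    obtain ⟨L, _, _, _, f, hf⟩ : ∃ (L : Type u) (_ : AddCommGroup L) (_ : Module R L)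
        (_ : Module.Free R L) (f : L →ₗ[R] M), Function.Surjective f :=
      ⟨M →₀ R, inferInstance, inferInstance, inferInstance, Finsupp.linearCombination R id,
        Finsupp.linearCombination_id_surjective R M⟩
    have : HasProjectiveDimensionLE (ModuleCat.of R (LinearMap.ker f)) d :=
      ((LinearMap.shortExact_shortComplexKer hf).hasProjectiveDimensionLT_X₃_iff d
        ((IsProjective.iff_projective (P := L)).1 inferInstance)).1 h
    have hker : Function.Exact (LinearMap.ker f).subtype f := LinearMap.exact_subtype_ker_map f
    have hexact : Function.Exact ((LinearMap.ker f).subtype.baseChange S) (f.baseChange S) := by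
      have h := lTensor_exact S hker hf
      exact h
    have hS := shortExact_of_exact (f := (LinearMap.ker f).subtype.baseChange S)
      (g := f.baseChange S)
      (Module.Flat.lTensor_preserves_injective_linearMap (M := S) _ (Subtype.val_injective))
      hexact
      (LinearMap.lTensor_surjective S hf)
    exact (hS.hasProjectiveDimensionLT_X₃_iff d
      ((IsProjective.iff_projective (P := S ⊗[R] L)).1 inferInstance)).2
      (ih (LinearMap.ker f))

section CharacteristicSequence

variable {R M : Type u} [CommRing R] [AddCommGroup M] [Module R M] [Module R[X] M]
  [IsScalarTower R R[X] M]

variable (R M) in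
/-- The evaluation map `∑ Xⁱ ⊗ mᵢ ↦ ∑ Xⁱ • mᵢ` presenting an `R[X]`-module `M` as a quotient of
the induced module `R[X] ⊗[R] M`, modelled as `PolynomialModule R M`. -/
noncomputable def polynomialModuleCounit : PolynomialModule R M →ₗ[R[X]] M :=
  (LinearMap.id (R := R) (M := M)).liftBaseChange R[X] ∘ₗ
    (PolynomialModule.polynomialTensorProductLEquivPolynomialModule R M).symm.toLinearMap

lemma polynomialModuleCounit_single (i : ℕ) (m : M) :
    polynomialModuleCounit R M (PolynomialModule.single R i m) = (X ^ i : R[X]) • m := by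
  have : (PolynomialModule.polynomialTensorProductLEquivPolynomialModule R M).symm
      (PolynomialModule.single R i m) = (X ^ i : R[X]) ⊗ₜ[R] m := by
    rw [LinearEquiv.symm_apply_eq, ← monomial_one_right_eq_X_pow]
    simp [PolynomialModule.polynomialTensorProductLEquivPolynomialModule]
    rfl
  simp [polynomialModuleCounit, this]

variable (R M) in
/-- The relations `Xⁱ⁺¹ ⊗ m - Xⁱ ⊗ (X • m)` of the presentation `polynomialModuleCounit`. -/
noncomputable def polynomialModuleRelation :
    PolynomialModule R M →ₗ[R[X]] PolynomialModule R M where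
  toFun z := (X : R[X]) • z - PolynomialModule.map R (Module.toModuleEnd R M (X : R[X])) z
  map_add' y z := by rw [smul_add, map_add]; abel
  map_smul' p z := by
    rw [PolynomialModule.map_smul, Algebra.algebraMap_self, Polynomial.map_id, RingHom.id_apply,
      smul_sub, smul_comm]

lemma polynomialModuleRelation_apply (z : PolynomialModule R M) :
    polynomialModuleRelation R M z =
      (X : R[X]) • z - PolynomialModule.map R (Module.toModuleEnd R M (X : R[X])) z :=
  rfl

lemma polynomialModuleRelation_single (i : ℕ) (m : M) :
    polynomialModuleRelation R M (PolynomialModule.single R i m) =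
      PolynomialModule.single R (i + 1) m - PolynomialModule.single R i ((X : R[X]) • m) := by
  rw [polynomialModuleRelation_apply, ← monomial_one_one_eq_X,
    PolynomialModule.monomial_smul_single, one_smul, add_comm, PolynomialModule.map_single]
  rfl

lemma coeff_polynomialModuleRelation_succ (z : PolynomialModule R M) (n : ℕ) :
    (polynomialModuleRelation R M z).coeff (n + 1) =
      z.coeff n - (X : R[X]) • z.coeff (n + 1) := by
  induction z using PolynomialModule.induction_linear with
  | zero => simp
  | add y z hy hz =>
    simp only [map_add, PolynomialModule.coeff_add, Finsupp.add_apply, smul_add] at hy hz ⊢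
    rw [hy, hz]; abel
  | single i m =>
    rw [polynomialModuleRelation_single]
    change (Finsupp.single (i + 1) m - Finsupp.single i ((X : R[X]) • m)) (n + 1) = _
    simp only [Finsupp.coe_sub, Pi.sub_apply, Finsupp.single_apply, PolynomialModule.coeff_single,
      smul_ite, smul_zero, add_left_inj]

lemma polynomialModuleRelation_injective : Function.Injective (polynomialModuleRelation R M) := by
  rw [injective_iff_map_eq_zero]
  intro z hz
  have hstep (n : ℕ) : z.coeff n = (X : R[X]) • z.coeff (n + 1) := by
    rw [← sub_eq_zero, ← coeff_polynomialModuleRelation_succ, hz]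
    simp
  have hiter (j n : ℕ) : z.coeff n = (X : R[X]) ^ j • z.coeff (n + j) := by
    induction j with
    | zero => simp
    | succ j ih => rw [ih, hstep (n + j), smul_smul, ← pow_succ, add_assoc]
  rw [← PolynomialModule.coeff_eq_zero]
  ext n
  obtain ⟨b, hb⟩ := z.coeff.support.bddAbove
  have hvanish : z.coeff (n + (b + 1)) = 0 := by
    by_contra h
    have := hb (Finsupp.mem_support_iff.2 h)
    lia
  rw [hiter (b + 1) n, hvanish, smul_zero, Finsupp.zero_apply]

lemma polynomialModule_exact :
    Function.Exact (polynomialModuleRelation R M) (polynomialModuleCounit R M) := by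
  have hcomp (z : PolynomialModule R M) :
      polynomialModuleCounit R M (polynomialModuleRelation R M z) = 0 := by
    induction z using PolynomialModule.induction_linear with
    | zero => simp
    | add y z hy hz => rw [map_add, map_add, hy, hz, add_zero]
    | single i m =>
      rw [polynomialModuleRelation_single, map_sub, polynomialModuleCounit_single,
        polynomialModuleCounit_single, smul_smul, pow_succ, sub_self]
  have hreduce (z : PolynomialModule R M) :
      z - PolynomialModule.single R 0 (polynomialModuleCounit R M z) ∈
        (polynomialModuleRelation R M).range := by
    induction z using PolynomialModule.induction_linear with
    | zero => simp
    | add y z hy hz =>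
      convert add_mem hy hz using 1
      rw [map_add, PolynomialModule.single_add]; abel
    | single i m =>
      rw [polynomialModuleCounit_single]
      induction i generalizing m with
      | zero => simp
      | succ i ih =>
        convert add_mem ((polynomialModuleRelation R M).mem_range_self
          (PolynomialModule.single R i m)) (ih ((X : R[X]) • m)) using 1
        rw [polynomialModuleRelation_single, smul_smul, ← pow_succ]; abel
  refine fun z => ⟨fun hz => ?_, ?_⟩
  · simpa [hz] using hreduce z
  · rintro ⟨w, rfl⟩
    exact hcomp w

lemma polynomialModuleCounit_surjective : Function.Surjective (polynomialModuleCounit R M) :=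
  fun m => ⟨PolynomialModule.single R 0 m, by
    rw [polynomialModuleCounit_single, pow_zero, one_smul]⟩

end CharacteristicSequence

lemma hasProjectiveDimensionLE_polynomial {R : Type u} [CommRing R] (d : ℕ)
    (hR : ∀ (M : Type u) [AddCommGroup M] [Module R M],
      HasProjectiveDimensionLE (ModuleCat.of R M) d)
    (M : Type u) [AddCommGroup M] [Module R[X] M] :
    HasProjectiveDimensionLE (ModuleCat.of R[X] M) (d + 1) := by
  let : Module R M := Module.compHom M (algebraMap R R[X])
  have : IsScalarTower R R[X] M := IsScalarTower.of_algebraMap_smul fun _ _ => rfl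
  have hinduced : HasProjectiveDimensionLE (ModuleCat.of R[X] (PolynomialModule R M)) d := by
    have := hR M
    have := hasProjectiveDimensionLE_baseChange (R := R) (S := R[X]) d M
    exact ModuleCat.hasProjectiveDimensionLE_of_linearEquiv
      (M := ModuleCat.of R[X] (R[X] ⊗[R] M)) (N := ModuleCat.of R[X] (PolynomialModule R M))
      (PolynomialModule.polynomialTensorProductLEquivPolynomialModule R M) d
  exact (shortExact_of_exact polynomialModuleRelation_injective polynomialModule_exact
    polynomialModuleCounit_surjective).hasProjectiveDimensionLT_X₃ (d + 1) hinduced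
    (hasProjectiveDimensionLT_of_ge _ (d + 1) _ (by lia))

attribute [local instance] RingHomInvPair.of_ringEquiv in
lemma hasProjectiveDimensionLE_of_ringEquiv {R S : Type u} [CommRing R] [CommRing S]
    (e : R ≃+* S) (d : ℕ)
    (hR : ∀ (M : Type u) [AddCommGroup M] [Module R M],
      HasProjectiveDimensionLE (ModuleCat.of R M) d)
    (M : Type u) [AddCommGroup M] [Module S M] :
    HasProjectiveDimensionLE (ModuleCat.of S M) d := by
  let : Module R M := Module.compHom M e.toRingHom
  have := RingHomInvPair.of_ringEquiv e.symm
  have := hR M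
  let e' : (ModuleCat.of R M) ≃ₛₗ[RingHomClass.toRingHom e] (ModuleCat.of S M) :=
    { AddEquiv.refl M with map_smul' := fun _ _ => rfl }
  exact ModuleCat.hasProjectiveDimensionLE_of_semiLinearEquiv e e' d

lemma hasProjectiveDimensionLE_mvPolynomial (k : Type u) [Field k] (m : ℕ) :
    ∀ (M : Type u) [AddCommGroup M] [Module (MvPolynomial (Fin m) k) M],
      HasProjectiveDimensionLE (ModuleCat.of (MvPolynomial (Fin m) k) M) m := by
  induction m with
  | zero =>
    refine hasProjectiveDimensionLE_of_ringEquiv (R := k)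
      (MvPolynomial.isEmptyRingEquiv k (Fin 0)).symm 0 fun M _ _ => ?_
    rw [← projective_iff_hasProjectiveDimensionLE_zero, ← IsProjective.iff_projective]
    infer_instance
  | succ m ih =>
    exact hasProjectiveDimensionLE_of_ringEquiv (MvPolynomial.finSuccEquiv k m).symm.toRingEquiv
      (m + 1) (fun M _ _ => hasProjectiveDimensionLE_polynomial m ih M)

lemma projDim_quotient_map_le_of_flat {k : Type u} [Field k] {m : ℕ} {S : Type u} [CommRing S]
    {g : MvPolynomial (Fin m) k →+* S} (hg : g.Flat) (J : Ideal (MvPolynomial (Fin m) k)) :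
    projDim S (S ⧸ J.map g) ≤ m := by
  let := g.toAlgebra
  have : Module.Flat (MvPolynomial (Fin m) k) S := hg
  have := hasProjectiveDimensionLE_mvPolynomial k m (MvPolynomial (Fin m) k ⧸ J)
  have := hasProjectiveDimensionLE_baseChange (R := MvPolynomial (Fin m) k) (S := S) m
    (MvPolynomial (Fin m) k ⧸ J)
  have : HasProjectiveDimensionLE (ModuleCat.of S (S ⧸ J.map g)) m :=
    ModuleCat.hasProjectiveDimensionLE_of_linearEquiv
      (M := ModuleCat.of S (S ⊗[MvPolynomial (Fin m) k] (MvPolynomial (Fin m) k ⧸ J)))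
      (N := ModuleCat.of S (S ⧸ J.map g))
      (Algebra.TensorProduct.quotIdealMapEquivTensorQuot S J).symm.toLinearEquiv m
  exact projDim_le_of_hasProjectiveDimensionLE _ m

end HilbertSyzygy

section LinearSubstitution

open MvPolynomial

section CommRing

variable {R : Type*} [CommRing R] {σ τ υ : Type*}

variable (R σ) in
/-- The variables, as a basis of the module of linear forms. -/
noncomputable def linearFormBasis : Module.Basis σ R (homogeneousSubmodule σ R 1) :=
  (Module.Basis.span (linearIndependent_X σ R)).map
    (LinearEquiv.ofEq _ _ homogeneousSubmodule_one_eq_span_X.symm)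

@[simp]
lemma coe_linearFormBasis (i : σ) : (linearFormBasis R σ i : MvPolynomial σ R) = X i := by
  simp [linearFormBasis, Module.Basis.span_apply]

/-- The substitution of linear forms for variables prescribed by a linear map on linear forms. -/
noncomputable def linearSubst (φ : homogeneousSubmodule σ R 1 →ₗ[R] homogeneousSubmodule τ R 1) :
    MvPolynomial σ R →ₐ[R] MvPolynomial τ R :=
  aeval fun i => (φ (linearFormBasis R σ i) : MvPolynomial τ R)

lemma linearSubst_coe (φ : homogeneousSubmodule σ R 1 →ₗ[R] homogeneousSubmodule τ R 1)
    (v : homogeneousSubmodule σ R 1) : linearSubst φ v = φ v := by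
  suffices h : (linearSubst φ).toLinearMap ∘ₗ (homogeneousSubmodule σ R 1).subtype =
      (homogeneousSubmodule τ R 1).subtype ∘ₗ φ from LinearMap.congr_fun h v
  exact (linearFormBasis R σ).ext fun i => by simp [linearSubst]

lemma linearSubst_comp (ψ : homogeneousSubmodule τ R 1 →ₗ[R] homogeneousSubmodule υ R 1)
    (φ : homogeneousSubmodule σ R 1 →ₗ[R] homogeneousSubmodule τ R 1) :
    linearSubst (ψ ∘ₗ φ) = (linearSubst ψ).comp (linearSubst φ) := by
  ext1 i
  rw [← coe_linearFormBasis, AlgHom.comp_apply, linearSubst_coe, linearSubst_coe, linearSubst_coe]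
  rfl

lemma linearSubst_id : linearSubst (LinearMap.id (R := R) (M := homogeneousSubmodule σ R 1)) =
    AlgHom.id R _ := by
  ext1 i
  rw [← coe_linearFormBasis, linearSubst_coe]
  rfl

lemma isHomogeneous_linearSubst
    (φ : homogeneousSubmodule σ R 1 →ₗ[R] homogeneousSubmodule τ R 1)
    {f : MvPolynomial σ R} {d : ℕ} (hf : f.IsHomogeneous d) :
    (linearSubst φ f).IsHomogeneous d := by
  have := hf.aeval (fun i => (φ (linearFormBasis R σ i) : MvPolynomial τ R)) (n := 1)
    fun i => (φ _).2
  rwa [one_mul] at this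

variable {φ : homogeneousSubmodule σ R 1 →ₗ[R] homogeneousSubmodule τ R 1}
  {ψ : homogeneousSubmodule τ R 1 →ₗ[R] homogeneousSubmodule σ R 1}

lemma linearSubst_linearSubst (h : φ ∘ₗ ψ = LinearMap.id) (g : MvPolynomial τ R) :
    linearSubst φ (linearSubst ψ g) = g := by
  rw [← AlgHom.comp_apply, ← linearSubst_comp, h, linearSubst_id, AlgHom.id_apply]

lemma ker_linearSubst (h : φ ∘ₗ ψ = LinearMap.id) :
    RingHom.ker (linearSubst φ) =
      Ideal.span (Subtype.val '' (LinearMap.ker φ : Set (homogeneousSubmodule σ R 1))) := by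
  set K : Ideal (MvPolynomial σ R) :=
    Ideal.span (Subtype.val '' (LinearMap.ker φ : Set (homogeneousSubmodule σ R 1)))
  have hretract (f : MvPolynomial σ R) : f - linearSubst ψ (linearSubst φ f) ∈ K := by
    suffices hq : (Ideal.Quotient.mkₐ R K).comp ((linearSubst ψ).comp (linearSubst φ)) =
        Ideal.Quotient.mkₐ R K from
      Ideal.Quotient.eq.1 (AlgHom.congr_fun hq f).symm
    ext1 i
    have hX : X i - linearSubst ψ (linearSubst φ (X i)) ∈ K := by
      refine Ideal.subset_span ⟨linearFormBasis R σ i - ψ (φ (linearFormBasis R σ i)), ?_, ?_⟩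
      · rw [SetLike.mem_coe, LinearMap.mem_ker, map_sub, sub_eq_zero]
        exact (LinearMap.congr_fun h (φ (linearFormBasis R σ i))).symm
      · rw [← coe_linearFormBasis, linearSubst_coe, linearSubst_coe]
        rfl
    exact (Ideal.Quotient.eq.2 hX).symm
  refine le_antisymm (fun f hf => ?_) (Ideal.span_le.2 ?_)
  · simpa [RingHom.mem_ker.1 hf] using hretract f
  · rintro _ ⟨v, hv, rfl⟩
    rw [SetLike.mem_coe, RingHom.mem_ker, linearSubst_coe, LinearMap.mem_ker.1 hv]
    rfl

end CommRing

section Field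

variable {k : Type*} [Field k] {σ τ : Type*}

lemma finrank_homogeneousSubmodule [Fintype σ] (d : ℕ) :
    Module.finrank k (homogeneousSubmodule σ k d) = (Fintype.card σ + d - 1).choose d := by
  classical
  have hs : {e : σ →₀ ℕ | e.degree = d} = ((Finset.univ : Finset σ).finsuppAntidiag d : Set _) := by
    ext e
    simp [Finset.mem_finsuppAntidiag, Finsupp.degree_eq_sum]
  rw [homogeneousSubmodule_eq_finsupp_supported, hs,
    (AddMonoidAlgebra.supportedEquivFinsupp (R := k) _).finrank_eq]
  simp only [Finset.coe_sort_coe, Module.finrank_finsupp_self, Fintype.card_coe]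
  rw [Finset.card_finsuppAntidiag_nat_eq_choose, Finset.card_univ]

instance finiteDimensional_homogeneousSubmodule [Finite σ] (d : ℕ) :
    FiniteDimensional k (homogeneousSubmodule σ k d) :=
  (Submodule.fg_iff_finiteDimensional _).1 (homogeneousSubmodule_fg σ k d)

lemma exists_linearSubst_ker_eq [Fintype σ] (L : Submodule k (homogeneousSubmodule σ k 1)) :
    ∃ (M : ℕ) (φ : homogeneousSubmodule σ k 1 →ₗ[k] homogeneousSubmodule (Fin M) k 1)
      (ψ : homogeneousSubmodule (Fin M) k 1 →ₗ[k] homogeneousSubmodule σ k 1),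
      φ ∘ₗ ψ = LinearMap.id ∧ LinearMap.ker φ = L ∧
        Module.finrank k L + M = Fintype.card σ := by
  let e := (Module.finBasis k (homogeneousSubmodule σ k 1 ⧸ L)).equiv
    (linearFormBasis k (Fin (Module.finrank k (homogeneousSubmodule σ k 1 ⧸ L)))) (Equiv.refl _)
  obtain ⟨ψ, hψ⟩ := (e.toLinearMap ∘ₗ L.mkQ).exists_rightInverse_of_surjective
    (LinearMap.range_eq_top.2 (e.surjective.comp L.mkQ_surjective))
  refine ⟨_, e.toLinearMap ∘ₗ L.mkQ, ψ, hψ, ?_, ?_⟩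
  · rw [LinearEquiv.ker_comp, Submodule.ker_mkQ]
  · rw [add_comm, Submodule.finrank_quotient_add_finrank, finrank_homogeneousSubmodule]
    simp

lemma flat_rename_inl (ι κ : Type*) :
    (rename Sum.inl : MvPolynomial ι k →ₐ[k] MvPolynomial (ι ⊕ κ) k).toRingHom.Flat := by
  let e := (sumAlgEquiv k κ ι).symm.trans (renameEquiv k (Equiv.sumComm κ ι))
  have hrename : (rename Sum.inl : MvPolynomial ι k →ₐ[k] MvPolynomial (ι ⊕ κ) k).toRingHom =
      (e.toRingEquiv : _ →+* _).comp (algebraMap (MvPolynomial ι k)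
        (MvPolynomial κ (MvPolynomial ι k))) := by
    refine MvPolynomial.ringHom_ext (fun a => ?_) fun i => ?_
    · simp [e, MvPolynomial.algebraMap_eq]
    · simp [e, MvPolynomial.algebraMap_eq]
  rw [hrename]
  exact RingHom.Flat.comp ((RingHom.flat_algebraMap_iff).2 inferInstance)
    (RingHom.Flat.of_bijective e.bijective)

lemma exists_basis_sum_extending {V : Type*} {W : Type u} [AddCommGroup V] [Module k V]
    [AddCommGroup W] [Module k W] {φ : V →ₗ[k] W} (hφ : Function.Injective φ)
    (b : Module.Basis σ k V) :
    ∃ (κ : Type u) (B : Module.Basis (σ ⊕ κ) k W), ∀ i, B (Sum.inl i) = φ (b i) := by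
  obtain ⟨C, hC⟩ := Submodule.exists_isCompl (LinearMap.range φ)
  exact ⟨_, ((b.map (LinearEquiv.ofInjective φ hφ)).prod (Module.Basis.ofVectorSpace k C)).map
    (Submodule.prodEquivOfIsCompl _ C hC), fun i => by simp⟩

lemma flat_linearSubst {φ : homogeneousSubmodule σ k 1 →ₗ[k] homogeneousSubmodule τ k 1}
    (hφ : Function.Injective φ) : (linearSubst φ).toRingHom.Flat := by
  obtain ⟨κ, B, hB⟩ := exists_basis_sum_extending hφ (linearFormBasis k σ)
  let e := B.equiv (linearFormBasis k (σ ⊕ κ)) (Equiv.refl _)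
  let E := AlgEquiv.ofAlgHom (linearSubst e.symm.toLinearMap) (linearSubst e.toLinearMap)
    (by rw [← linearSubst_comp, e.symm_comp, linearSubst_id])
    (by rw [← linearSubst_comp, e.comp_symm, linearSubst_id])
  have hE : linearSubst φ = E.toAlgHom.comp (rename Sum.inl) := by
    ext1 i
    calc linearSubst φ (X i) = φ (linearFormBasis k σ i) := by
          rw [← linearSubst_coe, coe_linearFormBasis]
      _ = e.symm (linearFormBasis k (σ ⊕ κ) (Sum.inl i)) := by simp [e, hB]
      _ = E.toAlgHom.comp (rename Sum.inl) (X i) := by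
          rw [AlgHom.comp_apply, rename_X, ← coe_linearFormBasis]
          exact (linearSubst_coe e.symm.toLinearMap _).symm
  rw [hE]
  exact (flat_rename_inl _ _).comp (RingHom.Flat.of_bijective E.bijective)

lemma exists_flat_adjoin_le_range [Finite σ] {ι : Type*} [Fintype ι]
    (ℓ : ι → homogeneousSubmodule σ k 1) :
    ∃ (s : ℕ) (ρ : MvPolynomial (Fin s) k →ₐ[k] MvPolynomial σ k), s ≤ Fintype.card ι ∧
      ρ.toRingHom.Flat ∧
      Algebra.adjoin k (Set.range fun i => (ℓ i : MvPolynomial σ k)) ≤ ρ.range := by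
  let V := Submodule.span k (Set.range ℓ)
  have : Module.Free k V := Module.Free.of_divisionRing k V
  let e := (linearFormBasis k _).equiv (Module.finBasis k V) (Equiv.refl _)
  refine ⟨_, linearSubst (V.subtype ∘ₗ e.toLinearMap), finrank_range_le_card ℓ,
    flat_linearSubst (V.subtype_injective.comp e.injective), Algebra.adjoin_le ?_⟩
  rintro _ ⟨i, rfl⟩
  refine ⟨e.symm ⟨ℓ i, Submodule.subset_span ⟨i, rfl⟩⟩, ?_⟩
  exact (linearSubst_coe _ _).trans (by simp)

end Field

lemma projDim_le_of_mem_adjoin {k : Type u} [Field k] {N : ℕ} {ι κ : Type*} [Fintype ι]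
    {ℓ : ι → MvPolynomial (Fin N) k} (hℓ : ∀ i, (ℓ i).IsHomogeneous 1)
    {f : κ → MvPolynomial (Fin N) k} (hf : ∀ j, f j ∈ Algebra.adjoin k (Set.range ℓ)) :
    projDim (MvPolynomial (Fin N) k) (MvPolynomial (Fin N) k ⧸ Ideal.span (Set.range f)) ≤
      Fintype.card ι := by
  obtain ⟨s, ρ, hs, hρ, hrange⟩ := exists_flat_adjoin_le_range fun i =>
    (⟨ℓ i, hℓ i⟩ : homogeneousSubmodule (Fin N) k 1)
  choose g hg using fun j => hrange (hf j)
  have hI : Ideal.span (Set.range f) = (Ideal.span (Set.range g)).map ρ.toRingHom := by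
    rw [Ideal.map_span, ← Set.range_comp]
    exact congrArg _ (congrArg _ (funext fun j => (hg j).symm))
  rw [hI]
  exact (projDim_quotient_map_le_of_flat hρ _).trans (by exact_mod_cast hs)

end LinearSubstitution

section SmoothPoint

open MvPolynomial

lemma mk_finsupp_degree_lt (δ t : ℕ) :
    Cardinal.mk {e : Fin δ →₀ ℕ | e.degree < t + 1} = (t + δ).choose δ := by
  classical
  have hset : {e : Fin δ →₀ ℕ | e.degree < t + 1} =
      ((Finset.range (t + 1)).biUnion
        fun j => (Finset.univ : Finset (Fin δ)).finsuppAntidiag j : Finset (Fin δ →₀ ℕ)) := by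
    ext e
    simp [Finsupp.degree_eq_sum]
  have hdisj : ((Finset.range (t + 1) : Finset ℕ) : Set ℕ).PairwiseDisjoint
      fun j => (Finset.univ : Finset (Fin δ)).finsuppAntidiag j := by
    intro i _ j _ hij
    rw [Function.onFun, Finset.disjoint_left]
    intro e hi hj
    simp only [Finset.mem_finsuppAntidiag] at hi hj
    exact hij (hi.1.symm.trans hj.1)
  rw [hset, Finset.coe_sort_coe, Cardinal.mk_coe_finset, Finset.card_biUnion hdisj, Nat.cast_inj]
  simp only [Finset.card_finsuppAntidiag_nat_eq_choose, Finset.card_univ, Fintype.card_fin]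
  rcases δ with _ | m
  · rw [Finset.sum_range_succ']
    simp
  · have hsymm : ∀ j, (m + 1 + j - 1).choose j = (j + m).choose m := fun j => by
      rw [show m + 1 + j - 1 = j + m by lia, Nat.choose_symm_add]
    simp only [hsymm, Nat.sum_range_add_choose]
    ring_nf

lemma choose_le_rank_quotient_idealOfVars_pow (k : Type u) [Field k] (δ t : ℕ) :
    ((t + δ).choose δ : Cardinal.{u}) ≤
      Module.rank k (MvPolynomial (Fin δ) k ⧸ idealOfVars (Fin δ) k ^ (t + 1)) := by
  let T : Set (Fin δ →₀ ℕ) := {e | e.degree < t + 1}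
  let q := (Ideal.Quotient.mkₐ k (idealOfVars (Fin δ) k ^ (t + 1))).toLinearMap
  have hmon : LinearIndependent k fun e : T => monomial (e : Fin δ →₀ ℕ) (1 : k) := by
    have := (basisMonomials (Fin δ) k).linearIndependent
    rw [coe_basisMonomials] at this
    exact this.comp _ Subtype.coe_injective
  have hli : LinearIndependent k (q ∘ fun e : T => monomial (e : Fin δ →₀ ℕ) (1 : k)) := by
    refine hmon.map (Submodule.disjoint_def.2 fun x hx hx' => ?_)
    rw [LinearMap.mem_ker, AlgHom.toLinearMap_apply, Ideal.Quotient.mkₐ_eq_mk,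
      Ideal.Quotient.eq_zero_iff_mem, mem_pow_idealOfVars_iff'] at hx'
    ext e
    by_cases he : e.degree < t + 1
    · exact hx' e he
    · have hle : Submodule.span k (Set.range fun e : T => monomial (e : Fin δ →₀ ℕ) (1 : k)) ≤
          LinearMap.ker (lcoeff k e) := by
        refine Submodule.span_le.2 ?_
        rintro _ ⟨⟨e', he'⟩, rfl⟩
        have hne : e' ≠ e := by rintro rfl; exact he he'
        simp [lcoeff, coeff_monomial, hne]
      simpa [lcoeff] using hle hx
  simpa only [T, mk_finsupp_degree_lt, Cardinal.lift_natCast, Cardinal.lift_uzero] using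
    hli.cardinal_lift_le_rank

lemma trdeg_eq_of_isAlgebraic (k R K : Type u) [Field k] [CommRing R] [IsDomain R] [Algebra k R]
    [CommRing K] [IsDomain K] [Algebra k K] [Algebra R K] [IsScalarTower k R K] [FaithfulSMul R K]
    [Algebra.IsAlgebraic R K] : Algebra.trdeg k K = Algebra.trdeg k R := by
  have h := _root_.trdeg_add_eq k R (A := K)
  rwa [trdeg_eq_zero (R := R), add_zero, eq_comm] at h

lemma isAlgebraic_of_etale (A T : Type u) [CommRing A] [IsDomain A] [CommRing T] [IsDomain T]
    [Algebra A T] [Algebra.Etale A T] : Algebra.IsAlgebraic A T := by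
  have : FaithfulSMul A T := Module.IsTorsionFree.to_faithfulSMul
  have : FaithfulSMul A (FractionRing T) := .trans A T _
  let : Algebra (FractionRing A) (FractionRing T) := FractionRing.liftAlgebra A _
  have : IsScalarTower A (FractionRing A) (FractionRing T) := inferInstance
  have : Algebra.FormallyUnramified T (FractionRing T) :=
    .of_isLocalization (nonZeroDivisors T)
  have : Algebra.FormallyUnramified A (FractionRing T) := .comp A T _
  have : Algebra.FormallyUnramified (FractionRing A) (FractionRing T) :=
    .of_restrictScalars A _ _
  have : Algebra.EssFiniteType T (FractionRing T) :=
    .of_isLocalization _ (nonZeroDivisors T)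
  have : Algebra.EssFiniteType A (FractionRing T) := .comp A T _
  have : Algebra.EssFiniteType (FractionRing A) (FractionRing T) := .of_comp A _ _
  have := (Algebra.FormallyUnramified.iff_isSeparable (FractionRing A) (FractionRing T)).1 ‹_›
  have : Algebra.IsAlgebraic A (FractionRing T) :=
    (IsFractionRing.comap_isAlgebraic_iff (K := FractionRing A)).2 inferInstance
  exact .tower_bot_of_injective (FaithfulSMul.algebraMap_injective T (FractionRing T))

lemma exists_etale_localization (k R : Type u) [Field k] [PerfectField k] [CommRing R] [IsDomain R]
    [Algebra k R] [Algebra.FiniteType k R] {δ : ℕ} (hδ : Algebra.trdeg k R = δ) :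
    ∃ f : R, f ≠ 0 ∧ ∃ (_ : Algebra (MvPolynomial (Fin δ) k) (Localization.Away f)),
      IsScalarTower k (MvPolynomial (Fin δ) k) (Localization.Away f) ∧
      Algebra.Etale (MvPolynomial (Fin δ) k) (Localization.Away f) := by
  have : Algebra.FinitePresentation k R := .of_finiteType.1 inferInstance
  have : Algebra.IsSmoothAt k (⊥ : Ideal R) := by
    have : (⊥ : Ideal R).primeCompl = nonZeroDivisors R := by
      ext x
      simp [Ideal.primeCompl]
    have : IsLocalization (⊥ : Ideal R).primeCompl (FractionRing R) := by
      rw [this]; infer_instance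
    exact .of_equiv ((IsLocalization.algEquiv (⊥ : Ideal R).primeCompl
      (FractionRing R) (Localization.AtPrime (⊥ : Ideal R))).restrictScalars k)
  obtain ⟨f, hf, n, _, _, _⟩ :=
    Algebra.IsSmoothAt.exists_isStandardEtale_mvPolynomial (R := k) (p := (⊥ : Ideal R))
  have hf0 : Submonoid.powers f ≤ nonZeroDivisors R :=
    powers_le_nonZeroDivisors_of_noZeroDivisors hf
  have : IsDomain (Localization.Away f) := IsLocalization.isDomain_localization hf0
  have : Algebra.IsAlgebraic R (Localization.Away f) :=
    IsLocalization.isAlgebraic _ (Submonoid.powers f)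
  have : FaithfulSMul R (Localization.Away f) :=
    (faithfulSMul_iff_algebraMap_injective _ _).2 (IsLocalization.injective _ hf0)
  have := isAlgebraic_of_etale (MvPolynomial (Fin n) k) (Localization.Away f)
  have : FaithfulSMul (MvPolynomial (Fin n) k) (Localization.Away f) :=
    Module.IsTorsionFree.to_faithfulSMul
  have hn : n = δ := by
    have h := (trdeg_eq_of_isAlgebraic k R (Localization.Away f)).symm.trans
      (trdeg_eq_of_isAlgebraic k (MvPolynomial (Fin n) k) (Localization.Away f))
    simpa [hδ] using h.symm
  subst hn
  exact ⟨f, hf, _, ‹_›, inferInstance⟩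

lemma nonempty_algHom_of_finiteType (k T : Type u) [Field k] [IsAlgClosed k] [CommRing T]
    [Nontrivial T] [Algebra k T] [Algebra.FiniteType k T] : Nonempty (T →ₐ[k] k) := by
  obtain ⟨m, hm⟩ := Ideal.exists_maximal T
  let := Ideal.Quotient.field m
  have : Algebra.FiniteType k (T ⧸ m) := .of_surjective (Ideal.Quotient.mkₐ k m)
    (Ideal.Quotient.mkₐ_surjective k m)
  have : Module.Finite k (T ⧸ m) := finite_of_finite_type_of_isJacobsonRing k (T ⧸ m)
  have h := IsAlgClosed.algebraMap_bijective_of_isIntegral (k := k) (K := T ⧸ m)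
  exact ⟨(AlgEquiv.ofBijective (Algebra.ofId k _) h).symm.toAlgHom.comp (Ideal.Quotient.mkₐ k m)⟩

lemma exists_algHom_lift_of_isNilpotent {k T B : Type u} [Field k] [CommRing T] [Algebra k T]
    [CommRing B] [Algebra k B] {δ : ℕ} [Algebra (MvPolynomial (Fin δ) k) T]
    [IsScalarTower k (MvPolynomial (Fin δ) k) T]
    [Algebra.FormallySmooth (MvPolynomial (Fin δ) k) T] (φ : T →ₐ[k] k) {I : Ideal B}
    (hI : IsNilpotent I) {b : Fin δ → B} (hb : ∀ i, b i ∈ I) :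
    ∃ ψ : T →ₐ[k] B, (∀ i, ψ (algebraMap _ T (X i : MvPolynomial (Fin δ) k)) =
        b i + algebraMap k B (φ (algebraMap _ T (X i : MvPolynomial (Fin δ) k)))) ∧
      ∀ x, ψ x - algebraMap k B (φ x) ∈ I := by
  let c : Fin δ → k := fun i => φ (algebraMap (MvPolynomial (Fin δ) k) T (X i))
  let χ : MvPolynomial (Fin δ) k →ₐ[k] B := aeval fun i => b i + algebraMap k B (c i)
  let : Algebra (MvPolynomial (Fin δ) k) B := χ.toRingHom.toAlgebra
  have : IsScalarTower k (MvPolynomial (Fin δ) k) B :=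
    .of_algebraMap_eq fun x => (χ.commutes x).symm
  let g₀ : T →ₐ[k] B ⧸ I := (Algebra.ofId k (B ⧸ I)).comp φ
  have hg₀ : g₀.comp (IsScalarTower.toAlgHom k (MvPolynomial (Fin δ) k) T) =
      (Ideal.Quotient.mkₐ k I).comp χ := by
    ext i
    simp [g₀, χ, c, Ideal.Quotient.eq_zero_iff_mem.2 (hb i), Algebra.ofId_apply]
  let g : T →ₐ[MvPolynomial (Fin δ) k] B ⧸ I :=
    { g₀.toRingHom with commutes' := fun a => DFunLike.congr_fun hg₀ a }
  obtain ⟨ψ, hψ⟩ := Algebra.FormallySmooth.exists_lift I hI g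
  refine ⟨ψ.restrictScalars k, fun i => ?_, fun x => ?_⟩
  · rw [AlgHom.restrictScalars_apply, AlgHom.commutes]
    exact aeval_X _ i
  · rw [← Ideal.Quotient.eq_zero_iff_mem, map_sub, sub_eq_zero]
    exact DFunLike.congr_fun hψ x

lemma isUnit_of_sub_algebraMap_isNilpotent {k A : Type u} [Field k] [CommRing A] [Algebra k A]
    {a : A} {c : k} (hc : c ≠ 0) (ha : IsNilpotent (a - algebraMap k A c)) : IsUnit a := by
  have hunit : IsUnit (algebraMap k A c) := (IsUnit.mk0 c hc).map _
  simpa using ha.isUnit_add_left_of_commute hunit (Commute.all _ _)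

lemma range_comp_algebraMap_of_isNilpotent {k R T B : Type u} [Field k] [CommRing R] [Algebra k R]
    [CommRing T] [Algebra k T] [Algebra R T] [IsScalarTower k R T] [CommRing B] [Algebra k B]
    (f : R) [IsLocalization.Away f T] {φ : T →ₐ[k] k} {ψ : T →ₐ[k] B}
    (hψ : ∀ x, IsNilpotent (ψ x - algebraMap k B (φ x))) :
    (ψ.comp (IsScalarTower.toAlgHom k R T)).range = ψ.range := by
  set ρ := ψ.comp (IsScalarTower.toAlgHom k R T)
  have hf : φ (algebraMap R T f) ≠ 0 :=
    ((IsLocalization.Away.algebraMap_isUnit (S := T) f).map φ).ne_zero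
  have hnil : IsNilpotent ((⟨ρ f, ρ.mem_range_self f⟩ : ρ.range) -
      algebraMap k ρ.range (φ (algebraMap R T f))) :=
    (IsNilpotent.map_iff (f := ρ.range.val) Subtype.val_injective).1 (hψ (algebraMap R T f))
  obtain ⟨⟨c, hc⟩, hcf⟩ := (isUnit_of_sub_algebraMap_isNilpotent hf hnil).exists_left_inv
  have hcf : c * ψ (algebraMap R T f) = 1 := congrArg Subtype.val hcf
  refine le_antisymm (AlgHom.range_comp_le_range _ ψ) ?_
  rintro _ ⟨x, rfl⟩
  obtain ⟨n, a, ha⟩ := IsLocalization.Away.surj f x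
  have hx : ψ x = c ^ n * ρ a := calc
    ψ x = ψ x * (c * ψ (algebraMap R T f)) ^ n := by rw [hcf, one_pow, mul_one]
    _ = c ^ n * ψ (x * algebraMap R T f ^ n) := by rw [map_mul, map_pow]; ring
    _ = c ^ n * ρ a := by rw [ha]; rfl
  change ψ x ∈ ρ.range
  rw [hx]
  exact mul_mem (pow_mem hc n) (ρ.mem_range_self a)

/-- A `k`-point of `Spec R` whose infinitesimal neighbourhoods are at least as large as those of a
point of affine `δ`-space, as is the case for a smooth point when `dim R = δ`. -/
def HasLargeNeighborhoods {k R : Type u} [Field k] [CommRing R] [Algebra k R] (φ : R →ₐ[k] k)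
    (δ : ℕ) : Prop :=
  ∀ t : ℕ, ((t + δ).choose δ : Cardinal.{u}) ≤ Module.rank k (R ⧸ RingHom.ker φ ^ (t + 1))

lemma exists_algHom_hasLargeNeighborhoods {k R : Type u} [Field k] [IsAlgClosed k] [CommRing R]
    [IsDomain R] [Algebra k R] [Algebra.FiniteType k R] {δ : ℕ} (hδ : Algebra.trdeg k R = δ) :
    ∃ φ : R →ₐ[k] k, HasLargeNeighborhoods φ δ := by
  obtain ⟨f, hf, _, _, _⟩ := exists_etale_localization k R hδ
  have : IsDomain (Localization.Away f) := IsLocalization.isDomain_localization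
    (powers_le_nonZeroDivisors_of_noZeroDivisors hf)
  have : Algebra.FiniteType k (Localization.Away f) :=
    .trans (S := MvPolynomial (Fin δ) k) inferInstance inferInstance
  obtain ⟨φ⟩ := nonempty_algHom_of_finiteType k (Localization.Away f)
  refine ⟨φ.comp (IsScalarTower.toAlgHom k R _), fun t => ?_⟩
  refine (choose_le_rank_quotient_idealOfVars_pow k δ t).trans ?_
  let J := idealOfVars (Fin δ) k
  let I : Ideal (MvPolynomial (Fin δ) k ⧸ J ^ (t + 1)) := J.map (Ideal.Quotient.mk _)
  have hI : I ^ (t + 1) = ⊥ := by rw [← Ideal.map_pow, Ideal.map_quotient_self]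
  obtain ⟨ψ, hψX, hψ⟩ := exists_algHom_lift_of_isNilpotent φ ⟨t + 1, hI⟩
    (b := fun i => Ideal.Quotient.mk _ (X i))
    fun i => Ideal.mem_map_of_mem _ (Ideal.subset_span ⟨i, rfl⟩)
  have hψnil : ∀ x, IsNilpotent (ψ x - algebraMap k _ (φ x)) := fun x =>
    ⟨t + 1, by simpa only [hI, Ideal.mem_bot] using Ideal.pow_mem_pow (hψ x) (t + 1)⟩
  let ρ := ψ.comp (IsScalarTower.toAlgHom k R (Localization.Away f))
  have hρ : Function.Surjective ρ := by
    rw [← AlgHom.range_eq_top, range_comp_algebraMap_of_isNilpotent f hψnil, eq_top_iff,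
      ← (Ideal.Quotient.mkₐ k (J ^ (t + 1))).range_eq_top.2 (Ideal.Quotient.mkₐ_surjective k _),
      ← Algebra.map_top, ← adjoin_range_X, AlgHom.map_adjoin, Algebra.adjoin_le_iff]
    rintro _ ⟨_, ⟨i, rfl⟩, rfl⟩
    rw [Ideal.Quotient.mkₐ_eq_mk, eq_sub_of_add_eq (hψX i).symm]
    exact sub_mem (ψ.mem_range_self _) (Subalgebra.algebraMap_mem _ _)
  have hker : RingHom.ker (φ.comp (IsScalarTower.toAlgHom k R (Localization.Away f))) ^ (t + 1) ≤
      RingHom.ker ρ := by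
    rw [RingHom.ker_eq_comap_bot ρ, ← Ideal.map_le_iff_le_comap, Ideal.map_pow, ← hI]
    refine Ideal.pow_right_mono (Ideal.map_le_iff_le_comap.2 fun x hx => ?_) _
    have hx : φ (algebraMap R _ x) = 0 := hx
    rw [Ideal.mem_comap, ← sub_zero (ρ x), ← map_zero (algebraMap k _), ← hx]
    exact hψ (algebraMap R _ x)
  exact LinearMap.rank_le_of_surjective (Ideal.Quotient.liftₐ _ ρ fun _ hx => hker hx).toLinearMap
    (Ideal.Quotient.lift_surjective_of_surjective _ (fun _ hx => hker hx) hρ)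

end SmoothPoint

section Projection

variable {k A B : Type*} [Field k] [CommRing A] [Algebra k A] [CommRing B] [Algebra k B]

instance finiteDimensional_submodule_mul (U V : Submodule k A) [hU : FiniteDimensional k U]
    [hV : FiniteDimensional k V] : FiniteDimensional k (U * V : Submodule k A) :=
  (Submodule.fg_iff_finiteDimensional _).1
    (((Submodule.fg_iff_finiteDimensional U).2 hU).mul
      ((Submodule.fg_iff_finiteDimensional V).2 hV))

instance finiteDimensional_submodule_pow (U : Submodule k A) [hU : FiniteDimensional k U] (n : ℕ) :
    FiniteDimensional k (U ^ n : Submodule k A) :=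
  (Submodule.fg_iff_finiteDimensional _).1 (((Submodule.fg_iff_finiteDimensional U).2 hU).pow n)

lemma finrank_one_submodule [Nontrivial A] : Module.finrank k (1 : Submodule k A) = 1 := by
  rw [Submodule.one_eq_span, ← Module.finrank_self k]
  exact (LinearEquiv.toSpanNonzeroSingleton k A 1 one_ne_zero).finrank_eq.symm

lemma pow_le_toSubmodule {U : Submodule k A} {S : Subalgebra k A}
    (h : U ≤ Subalgebra.toSubmodule S) (n : ℕ) : U ^ n ≤ Subalgebra.toSubmodule S := by
  induction n with
  | zero => exact (pow_zero U).trans_le (Submodule.one_le.2 S.one_mem)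
  | succ n ih =>
    rw [pow_succ, Submodule.mul_le]
    exact fun x hx y hy => S.mul_mem (ih hx) (h hy)

lemma map_mulLeft_pow (U : Submodule k A) (c : A) (n : ℕ) :
    U.map (LinearMap.mulLeft k c) ^ n = (U ^ n).map (LinearMap.mulLeft k (c ^ n)) := by
  have map_mulLeft (c : A) (U : Submodule k A) :
      U.map (LinearMap.mulLeft k c) = Submodule.span k {c} * U := by
    ext x
    simp [Submodule.mem_span_singleton_mul, Submodule.mem_map]
  rw [map_mulLeft, map_mulLeft, mul_pow, Submodule.span_pow, Set.singleton_pow]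

lemma finrank_map_mulLeft_pow [IsDomain A] (U : Submodule k A) {c : A} (hc : c ≠ 0) (n : ℕ) :
    Module.finrank k (U.map (LinearMap.mulLeft k c) ^ n : Submodule k A) =
      Module.finrank k (U ^ n : Submodule k A) := by
  rw [map_mulLeft_pow]
  exact (Submodule.equivMapOfInjective (LinearMap.mulLeft k (c ^ n))
    (mul_right_injective₀ (pow_ne_zero n hc)) _).finrank_eq.symm

lemma finrank_map_pow {f : A →ₐ[k] B} (hf : Function.Injective f) (U : Submodule k A) (n : ℕ) :
    Module.finrank k (U.map f.toLinearMap ^ n : Submodule k B) =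
      Module.finrank k (U ^ n : Submodule k A) := by
  rw [← Submodule.map_pow]
  exact (Submodule.equivMapOfInjective f.toLinearMap hf _).finrank_eq.symm

lemma map_comap_val_adjoin (U : Submodule k A) :
    (U.comap (Algebra.adjoin k (U : Set A)).val.toLinearMap).map
      (Algebra.adjoin k (U : Set A)).val.toLinearMap = U := by
  rw [Submodule.map_comap_eq, inf_eq_right]
  exact fun x hx => ⟨⟨x, Algebra.subset_adjoin hx⟩, rfl⟩

instance finiteDimensional_comap_val_adjoin (U : Submodule k A) [FiniteDimensional k U] :
    FiniteDimensional k (U.comap (Algebra.adjoin k (U : Set A)).val.toLinearMap) :=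
  ((Submodule.equivMapOfInjective (Algebra.adjoin k (U : Set A)).val.toLinearMap
    Subtype.val_injective _).trans
      (LinearEquiv.ofEq _ _ (map_comap_val_adjoin U))).symm.finiteDimensional

lemma finiteType_adjoin (U : Submodule k A) [hU : FiniteDimensional k U] :
    Algebra.FiniteType k (Algebra.adjoin k (U : Set A)) := by
  obtain ⟨s, hs⟩ := (Submodule.fg_iff_finiteDimensional U).2 hU
  exact (Subalgebra.fg_iff_finiteType _).1 ⟨s, by rw [← Algebra.adjoin_span, hs]⟩

lemma eq_one_sup_inf_ker {U : Submodule k A} (h1 : 1 ∈ U) (φ : A →ₐ[k] k) :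
    U = 1 ⊔ U ⊓ LinearMap.ker φ.toLinearMap := by
  refine le_antisymm (fun x hx => Submodule.mem_sup.2 ?_)
    (sup_le (Submodule.one_le.2 h1) inf_le_left)
  refine ⟨algebraMap k A (φ x), Submodule.mem_one.2 ⟨_, rfl⟩, x - algebraMap k A (φ x),
    ⟨sub_mem hx ?_, by simp⟩, by ring⟩
  rw [Algebra.algebraMap_eq_smul_one]
  exact U.smul_mem _ h1

lemma pow_succ_le_pow_sup_pow_succ {U V : Submodule k A} (h : U = 1 ⊔ V) (n : ℕ) :
    U ^ (n + 1) ≤ U ^ n ⊔ V ^ (n + 1) := by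
  have hVU : V ≤ U := h ▸ le_sup_right
  induction n with
  | zero => simpa using h.le
  | succ n ih => calc
      U ^ (n + 1 + 1) = U ^ (n + 1) ⊔ U ^ (n + 1) * V := by
        conv_lhs => rw [pow_succ, h, Submodule.mul_sup, mul_one, ← h]
      _ ≤ U ^ (n + 1) ⊔ (U ^ n ⊔ V ^ (n + 1)) * V := by gcongr
      _ = U ^ (n + 1) ⊔ (U ^ n * V ⊔ V ^ (n + 1 + 1)) := by rw [Submodule.sup_mul, ← pow_succ]
      _ ≤ U ^ (n + 1) ⊔ (U ^ (n + 1) ⊔ V ^ (n + 1 + 1)) := by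
        rw [pow_succ U n]
        gcongr
      _ = U ^ (n + 1) ⊔ V ^ (n + 1 + 1) := by rw [← sup_assoc, sup_idem]

lemma inf_ker_pow_le (U : Submodule k A) (φ : A →ₐ[k] k) (n : ℕ) :
    (U ⊓ LinearMap.ker φ.toLinearMap) ^ n ≤ (RingHom.ker φ ^ n).restrictScalars k := by
  induction n with
  | zero => simp
  | succ n ih =>
    rw [pow_succ, Submodule.mul_le]
    intro x hx y hy
    rw [Submodule.restrictScalars_mem, pow_succ]
    exact Ideal.mul_mem_mul (ih hx) hy.2

lemma pow_sup_ker_pow_eq_top {U : Submodule k A} (h1 : 1 ∈ U)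
    (hU : Algebra.adjoin k (U : Set A) = ⊤) (φ : A →ₐ[k] k) (n : ℕ) :
    U ^ n ⊔ (RingHom.ker φ ^ n).restrictScalars k = ⊤ := by
  set W : Submodule k A := U ^ n ⊔ (RingHom.ker φ ^ n).restrictScalars k
  have mul_mem_of_mem (x : A) (hx : x ∈ U) (w : A) (hw : w ∈ W) : x * w ∈ W := by
    obtain ⟨a, ha, b, hb, rfl⟩ := Submodule.mem_sup.1 hw
    rw [mul_add]
    refine add_mem ?_ (Submodule.mem_sup_right (Ideal.mul_mem_left _ _ hb))
    have hxa : x * a ∈ U ^ (n + 1) := pow_succ' U n ▸ Submodule.mul_mem_mul hx ha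
    refine (pow_succ_le_pow_sup_pow_succ (eq_one_sup_inf_ker h1 φ) n).trans
      (sup_le_sup_left ((inf_ker_pow_le U φ (n + 1)).trans ?_) _) hxa
    exact fun y hy => Ideal.pow_le_pow_right n.le_succ hy
  have mul_mem_of_adjoin (x : A) (hx : x ∈ Algebra.adjoin k (U : Set A)) :
      ∀ w ∈ W, x * w ∈ W := by
    induction hx using Algebra.adjoin_induction with
    | mem x hx => exact mul_mem_of_mem x hx
    | algebraMap r =>
      intro w hw
      rw [← Algebra.smul_def]
      exact W.smul_mem _ hw
    | add x y _ _ hx hy =>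
      intro w hw
      rw [add_mul]
      exact add_mem (hx w hw) (hy w hw)
    | mul x y _ _ hx hy =>
      intro w hw
      rw [mul_assoc]
      exact hx _ (hy w hw)
  have one_mem : (1 : A) ∈ W :=
    Submodule.mem_sup_left (by simpa using Submodule.pow_mem_pow U h1 n)
  refine eq_top_iff.2 fun x _ => ?_
  simpa using mul_mem_of_adjoin x (hU ▸ Algebra.mem_top) 1 one_mem

lemma finrank_inf_ker_pow_add_choose_le {k A : Type u} [Field k] [CommRing A] [Algebra k A]
    {U : Submodule k A} [FiniteDimensional k U] (h1 : 1 ∈ U)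
    (hU : Algebra.adjoin k (U : Set A) = ⊤) {φ : A →ₐ[k] k} {δ : ℕ}
    (hφ : HasLargeNeighborhoods φ δ) (t : ℕ) :
    Module.finrank k ((U ⊓ LinearMap.ker φ.toLinearMap) ^ (t + 1) : Submodule k A) +
      (t + δ).choose δ ≤ Module.finrank k (U ^ (t + 1) : Submodule k A) := by
  let q : (U ^ (t + 1) : Submodule k A) →ₗ[k] A ⧸ RingHom.ker φ ^ (t + 1) :=
    (Ideal.Quotient.mkₐ k _).toLinearMap ∘ₗ (U ^ (t + 1)).subtype
  have q_surjective : Function.Surjective q := by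
    intro y
    obtain ⟨x, rfl⟩ := Ideal.Quotient.mk_surjective y
    obtain ⟨a, ha, b, hb, rfl⟩ :=
      Submodule.mem_sup.1 ((pow_sup_ker_pow_eq_top h1 hU φ (t + 1)).ge (Submodule.mem_top (x := x)))
    refine ⟨⟨a, ha⟩, ?_⟩
    change Ideal.Quotient.mk _ a = _
    rw [map_add, Ideal.Quotient.eq_zero_iff_mem.2 hb, add_zero]
  have : Module.Finite k (A ⧸ RingHom.ker φ ^ (t + 1)) := .of_surjective q q_surjective
  have choose_le : (t + δ).choose δ ≤ Module.finrank k (A ⧸ RingHom.ker φ ^ (t + 1)) := by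
    rw [← Nat.cast_le (α := Cardinal.{u}), Module.finrank_eq_rank]
    exact hφ t
  have le_ker : ((U ⊓ LinearMap.ker φ.toLinearMap) ^ (t + 1)).comap (U ^ (t + 1)).subtype ≤
      LinearMap.ker q := fun x hx =>
    Ideal.Quotient.eq_zero_iff_mem.2 (inf_ker_pow_le U φ (t + 1) hx)
  have finrank_le := Submodule.finrank_mono le_ker
  rw [(Submodule.comapSubtypeEquivOfLe (pow_le_pow_left' inf_le_left _)).finrank_eq] at finrank_le
  have rank_nullity := LinearMap.finrank_range_add_finrank_ker q
  rw [LinearMap.range_eq_top.2 q_surjective, finrank_top] at rank_nullity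
  omega

variable {F : Type*} [Field F] [Algebra k F]

lemma restrictScalars_adjoin_adjoin_of_eq_one_sup {U U' : Submodule k F} {u : F}
    (hu : u ≠ 0) (h1 : 1 ∈ U') (hU : U = 1 ⊔ U'.map (LinearMap.mulLeft k u)) :
    (IntermediateField.adjoin (IntermediateField.adjoin k (U' : Set F)) {u}).restrictScalars k =
      IntermediateField.adjoin k (U : Set F) := by
  have mul_mem_U (x : F) (hx : x ∈ U') : u * x ∈ U := hU ▸ Submodule.mem_sup_right ⟨x, hx, rfl⟩
  have u_mem : u ∈ U := mul_one u ▸ mul_mem_U 1 h1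
  rw [IntermediateField.adjoin_adjoin_left]
  refine le_antisymm (IntermediateField.adjoin_le_iff.2 ?_) (IntermediateField.adjoin_le_iff.2 ?_)
  · rintro x (hx | rfl)
    · rw [← inv_mul_cancel_left₀ hu x]
      exact mul_mem (inv_mem (IntermediateField.subset_adjoin k _ u_mem))
        (IntermediateField.subset_adjoin k _ (mul_mem_U x hx))
    · exact IntermediateField.subset_adjoin k _ u_mem
  · intro x hx
    obtain ⟨_, hc, _, ⟨y, hy, rfl⟩, rfl⟩ := Submodule.mem_sup.1 (hU.le hx)
    obtain ⟨c, rfl⟩ := Submodule.mem_one.1 hc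
    exact add_mem (IntermediateField.algebraMap_mem _ c)
      (mul_mem (IntermediateField.subset_adjoin k _ (.inr rfl))
        (IntermediateField.subset_adjoin k _ (.inl hy)))

end Projection

section MinimalDegree

section Transcendence

variable (k : Type u) {F : Type u} [Field k] [Field F] [Algebra k F]

open scoped IntermediateField.algebraAdjoinAdjoin in
lemma trdeg_intermediateField_adjoin (S : Set F) :
    Algebra.trdeg k (IntermediateField.adjoin k S) = Algebra.trdeg k (Algebra.adjoin k S) := by
  have : Algebra.IsAlgebraic (Algebra.adjoin k S) (IntermediateField.adjoin k S) :=
    IsLocalization.isAlgebraic _ (nonZeroDivisors _)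
  exact trdeg_eq_of_isAlgebraic k _ _

variable {L : Type u} [Field L] [Algebra k L] [Algebra L F] [IsScalarTower k L F] {u : F}

lemma trdeg_adjoin_of_isAlgebraic (hu : IsAlgebraic L u) :
    Algebra.trdeg k (IntermediateField.adjoin L {u}) = Algebra.trdeg k L := by
  have : Algebra.IsAlgebraic L (IntermediateField.adjoin L {u}) :=
    IntermediateField.isAlgebraic_adjoin_simple hu.isIntegral
  exact trdeg_eq_of_isAlgebraic k L _

lemma trdeg_adjoin_of_transcendental (hu : Transcendental L u) :
    Algebra.trdeg k (IntermediateField.adjoin L {u}) = Algebra.trdeg k L + 1 := by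
  have hai : AlgebraicIndependent L (fun _ : PUnit.{u + 1} => u) :=
    algebraicIndependent_unique_type_iff.2 hu
  have e := hai.aevalEquiv
  rw [Set.range_const] at e
  rw [← trdeg_add_eq k L (A := IntermediateField.adjoin L {u}), trdeg_intermediateField_adjoin,
    ← e.trdeg_eq, MvPolynomial.trdeg_of_isDomain]
  simp

end Transcendence

section Projection

variable {k F : Type u} [Field k] [Field F] [Algebra k F]

lemma exists_eq_one_sup_finrank_pow_add_choose_le [IsAlgClosed k] (U : Submodule k F)
    [FiniteDimensional k U] (h1 : 1 ∈ U) {δ : ℕ}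
    (hδ : Algebra.trdeg k (Algebra.adjoin k (U : Set F)) = δ) :
    ∃ V : Submodule k F, U = 1 ⊔ V ∧ ∀ t : ℕ,
      Module.finrank k (V ^ (t + 1) : Submodule k F) + (t + δ).choose δ ≤
        Module.finrank k (U ^ (t + 1) : Submodule k F) := by
  let R := Algebra.adjoin k (U : Set F)
  have := finiteType_adjoin U
  obtain ⟨φ, hφ⟩ := exists_algHom_hasLargeNeighborhoods hδ
  let W : Submodule k R := U.comap R.val.toLinearMap
  have map_W : W.map R.val.toLinearMap = U := map_comap_val_adjoin U
  have one_mem : (1 : R) ∈ W := h1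
  refine ⟨(W ⊓ LinearMap.ker φ.toLinearMap).map R.val.toLinearMap, ?_, fun t => ?_⟩
  · rw [← Submodule.map_one R.val, ← Submodule.map_sup, ← eq_one_sup_inf_ker one_mem φ, map_W]
  · have hW := finrank_inf_ker_pow_add_choose_le one_mem Algebra.adjoin_adjoin_coe_preimage hφ t
    rwa [← finrank_map_pow (f := R.val) Subtype.val_injective,
      ← finrank_map_pow (f := R.val) Subtype.val_injective, map_W] at hW

lemma exists_projection [IsAlgClosed k] (U : Submodule k F) [FiniteDimensional k U]
    (h1 : 1 ∈ U) (hU : 2 ≤ Module.finrank k U) {δ : ℕ}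
    (hδ : Algebra.trdeg k (Algebra.adjoin k (U : Set F)) = δ) :
    ∃ (u : F) (U' : Submodule k F), u ≠ 0 ∧ 1 ∈ U' ∧ FiniteDimensional k U' ∧
      U = 1 ⊔ U'.map (LinearMap.mulLeft k u) ∧
      Module.finrank k U = Module.finrank k U' + 1 ∧
      ∀ t : ℕ, Module.finrank k (U' ^ (t + 1) : Submodule k F) + (t + δ).choose δ ≤
        Module.finrank k (U ^ (t + 1) : Submodule k F) := by
  obtain ⟨V, hUV, hV⟩ := exists_eq_one_sup_finrank_pow_add_choose_le U h1 hδ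
  have : FiniteDimensional k V := Submodule.finiteDimensional_of_le (hUV ▸ le_sup_right : V ≤ U)
  have : FiniteDimensional k (1 : Submodule k F) := Submodule.finiteDimensional_of_le
    (Submodule.one_le.2 h1)
  have finrank_U_le : Module.finrank k U ≤ 1 + Module.finrank k V := by
    conv_lhs => rw [hUV]
    rw [← finrank_one_submodule (k := k) (A := F)]
    exact Submodule.finrank_add_le_finrank_add_finrank 1 V
  obtain ⟨u, huV, hu⟩ : ∃ u ∈ V, u ≠ 0 := by
    refine Submodule.exists_mem_ne_zero_of_ne_bot fun h => ?_
    rw [h, finrank_bot] at finrank_U_le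
    omega
  have hpow := finrank_map_mulLeft_pow V (inv_ne_zero hu)
  refine ⟨u, V.map (LinearMap.mulLeft k u⁻¹), hu, ⟨u, huV, inv_mul_cancel₀ hu⟩, inferInstance,
    ?_, ?_, fun t => hpow (t + 1) ▸ hV t⟩
  · rw [← Submodule.map_comp, ← LinearMap.mulLeft_mul, mul_inv_cancel₀ hu, LinearMap.mulLeft_one,
      Submodule.map_id, ← hUV]
  · have h0 := hV 0
    have h1 := hpow 1
    rw [pow_one, pow_one] at h1
    rw [zero_add, zero_add, pow_one, pow_one, Nat.choose_self] at h0
    omega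

lemma eq_zero_of_sum_pow_mul_eq_zero {L : Type*} [CommRing L] [Algebra L F] {u : F}
    (hu : Transcendental L u) {n : ℕ} {w : Fin n → L}
    (hw : ∑ j : Fin n, u ^ (j : ℕ) * algebraMap L F (w j) = 0) : w = 0 := by
  let P : Polynomial L := ∑ j : Fin n, Polynomial.monomial j (w j)
  have hP : Polynomial.aeval u P = 0 := by
    rw [← hw, map_sum]
    exact Finset.sum_congr rfl fun j _ => by rw [Polynomial.aeval_monomial, mul_comm]
  have hP0 : P = 0 := by_contra fun hne => hu ⟨P, hne, hP⟩
  funext j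
  simpa [P, Polynomial.coeff_monomial, Fin.val_inj] using congrArg (Polynomial.coeff · j) hP0

lemma sum_finrank_pow_le_of_transcendental {U U' : Submodule k F} [FiniteDimensional k U]
    [FiniteDimensional k U'] {u : F} (hU : U = 1 ⊔ U'.map (LinearMap.mulLeft k u))
    (hu : Transcendental (IntermediateField.adjoin k (U' : Set F)) u) (n : ℕ) :
    ∑ j ∈ Finset.range (n + 1), Module.finrank k (U' ^ j : Submodule k F) ≤
      Module.finrank k (U ^ n : Submodule k F) := by
  let Φ : (Π j : Fin (n + 1), (U' ^ (j : ℕ) : Submodule k F)) →ₗ[k] F :=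
    ∑ j : Fin (n + 1),
      LinearMap.mulLeft k (u ^ (j : ℕ)) ∘ₗ (U' ^ (j : ℕ)).subtype ∘ₗ LinearMap.proj j
  have Φ_apply (w) : Φ w = ∑ j : Fin (n + 1), u ^ (j : ℕ) * (w j : F) := by simp [Φ]
  have pow_le_adjoin (j : ℕ) :
      U' ^ j ≤ Subalgebra.toSubmodule (IntermediateField.adjoin k (U' : Set F)).toSubalgebra :=
    pow_le_toSubmodule (fun _ hx => IntermediateField.subset_adjoin k _ hx) j
  have Φ_injective : Function.Injective Φ := by
    refine (injective_iff_map_eq_zero Φ).2 fun w hw => ?_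
    have := eq_zero_of_sum_pow_mul_eq_zero hu (w := fun j => ⟨w j, pow_le_adjoin j (w j).2⟩)
      ((Φ_apply w).symm.trans hw)
    funext j
    exact Subtype.ext (congrArg (algebraMap _ F) (congrFun this j))
  have range_le : LinearMap.range Φ ≤ U ^ n := by
    rintro _ ⟨w, rfl⟩
    rw [Φ_apply]
    refine sum_mem fun j _ => ?_
    have hle : (U' ^ (j : ℕ)).map (LinearMap.mulLeft k (u ^ (j : ℕ))) ≤ U ^ n := by
      rw [← map_mulLeft_pow]
      exact (pow_le_pow_left' (hU ▸ le_sup_right) _).trans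
        (pow_le_pow_right₀ (hU ▸ le_sup_left) (by omega))
    exact hle ⟨w j, (w j).2, rfl⟩
  rw [Finset.sum_range, ← Module.finrank_pi_fintype k, ← LinearMap.finrank_range_of_inj Φ_injective]
  exact Submodule.finrank_mono range_le

end Projection

section Induction

variable {k F : Type u} [Field k] [Field F] [Algebra k F]

/-- The powers of `U` are at least as large as the graded pieces of the homogeneous coordinate
ring of a `δ`-dimensional variety of minimal degree spanning a projective space of dimension
`finrank k U - 1`. -/
def HasMinimalDegreeBound (U : Submodule k F) (δ : ℕ) : Prop :=
  δ + 1 ≤ Module.finrank k U ∧ ∀ t : ℕ,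
    (t + 1 + δ).choose δ + (Module.finrank k U - (δ + 1)) * (t + δ).choose δ ≤
      Module.finrank k (U ^ (t + 1) : Submodule k F)

lemma HasMinimalDegreeBound.of_birational {U U' : Submodule k F} {δ : ℕ}
    (h : HasMinimalDegreeBound U' δ) (hU : Module.finrank k U = Module.finrank k U' + 1)
    (hpow : ∀ t : ℕ, Module.finrank k (U' ^ (t + 1) : Submodule k F) + (t + δ).choose δ ≤
      Module.finrank k (U ^ (t + 1) : Submodule k F)) :
    HasMinimalDegreeBound U δ := by
  refine ⟨by have := h.1; omega, fun t => ?_⟩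
  rw [hU, Nat.sub_add_comm h.1, add_mul, one_mul, ← add_assoc]
  exact (Nat.add_le_add_right (h.2 t) _).trans (hpow t)

lemma HasMinimalDegreeBound.of_cone {U U' : Submodule k F} {δ : ℕ}
    (h : HasMinimalDegreeBound U' δ) (hU : Module.finrank k U = Module.finrank k U' + 1)
    (hsum : ∀ n : ℕ, ∑ j ∈ Finset.range (n + 1), Module.finrank k (U' ^ j : Submodule k F) ≤
      Module.finrank k (U ^ n : Submodule k F)) :
    HasMinimalDegreeBound U (δ + 1) := by
  refine ⟨by have := h.1; omega, fun t => ?_⟩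
  refine le_trans ?_ (hsum (t + 1))
  have hockey := Nat.sum_range_add_choose (t + 1) δ
  rw [Finset.sum_range_succ', zero_add, Nat.choose_self] at hockey
  have finrank_pow_zero : Module.finrank k (U' ^ 0 : Submodule k F) = 1 := by
    rw [pow_zero, finrank_one_submodule]
  rw [Finset.sum_range_succ', finrank_pow_zero, hU, Nat.add_sub_add_right, ← add_assoc,
    ← add_assoc, ← hockey, ← Nat.sum_range_add_choose t δ, add_right_comm, Finset.mul_sum,
    ← Finset.sum_add_distrib]
  exact Nat.add_le_add_right (Finset.sum_le_sum fun j _ => h.2 j) 1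

lemma hasMinimalDegreeBound_one : HasMinimalDegreeBound (1 : Submodule k F) 0 := by
  exact ⟨finrank_one_submodule.ge, fun t => by
    rw [one_pow, finrank_one_submodule]
    simp⟩

lemma hasMinimalDegreeBound [IsAlgClosed k] (U : Submodule k F) [FiniteDimensional k U]
    (h1 : 1 ∈ U) {δ : ℕ} (hδ : Algebra.trdeg k (IntermediateField.adjoin k (U : Set F)) = δ) :
    HasMinimalDegreeBound U δ := by
  have one_le_U : 1 ≤ U := Submodule.one_le.2 h1
  obtain ⟨n, hn⟩ := Nat.exists_eq_add_of_le'
    (finrank_one_submodule.ge.trans (Submodule.finrank_mono one_le_U))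
  induction n generalizing U δ with
  | zero =>
    obtain rfl : 1 = U := Submodule.eq_of_le_of_finrank_eq one_le_U
      (finrank_one_submodule.trans hn.symm)
    have adjoin_eq : IntermediateField.adjoin k ((1 : Submodule k F) : Set F) = ⊥ :=
      IntermediateField.adjoin_eq_bot_iff.2 fun x hx => Submodule.mem_one.1 hx
    have trdeg_eq : Algebra.trdeg k (⊥ : IntermediateField k F) = 0 := trdeg_eq_zero_iff.2
      inferInstance
    rw [adjoin_eq, trdeg_eq] at hδ
    obtain rfl : 0 = δ := by exact_mod_cast hδ
    exact hasMinimalDegreeBound_one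
  | succ n ih =>
    obtain ⟨u, U', hu, h1U', _, hU, hfinrank, hpow⟩ := exists_projection U h1 (by omega)
      (trdeg_intermediateField_adjoin k (U : Set F) ▸ hδ)
    have htr : Algebra.trdeg k
        (IntermediateField.adjoin (IntermediateField.adjoin k (U' : Set F)) {u}) = δ := by
      rw [← hδ, ← restrictScalars_adjoin_adjoin_of_eq_one_sup hu h1U' hU]
      rfl
    by_cases halg : IsAlgebraic (IntermediateField.adjoin k (U' : Set F)) u
    · rw [trdeg_adjoin_of_isAlgebraic k halg] at htr
      exact (ih U' h1U' htr (Submodule.one_le.2 h1U') (by omega)).of_birational hfinrank hpow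
    · rw [trdeg_adjoin_of_transcendental k halg] at htr
      obtain ⟨δ', hδ'⟩ := Cardinal.lt_aleph0.1
        ((self_le_add_right _ 1).trans_lt (htr ▸ Cardinal.natCast_lt_aleph0))
      obtain rfl : δ' + 1 = δ := by
        rw [hδ'] at htr
        exact_mod_cast htr
      exact (ih U' h1U' hδ' (Submodule.one_le.2 h1U') (by omega)).of_cone hfinrank
        (sum_finrank_pow_le_of_transcendental hU halg)

end Induction

end MinimalDegree

section UpperBound

open MvPolynomial

lemma finrank_restrictTotalDegree (k : Type u) [Field k] (δ n : ℕ) :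
    Module.finrank k (restrictTotalDegree (Fin δ) k n) = (n + δ).choose δ := by
  rw [restrictTotalDegree, Module.finrank_eq_nat_card_basis (basisRestrictSupport k _)]
  have hset : {e : Fin δ →₀ ℕ | (e.sum fun _ m => m) ≤ n} = {e | e.degree < n + 1} := by
    ext e
    simp only [Set.mem_ofPred_eq, Nat.lt_succ_iff, Finsupp.degree_apply, Finsupp.sum]
  rw [hset, Nat.card, mk_finsupp_degree_lt, Cardinal.toNat_natCast]

lemma restrictTotalDegree_one_pow_le (k σ : Type*) [Field k] (n : ℕ) :
    restrictTotalDegree σ k 1 ^ n ≤ restrictTotalDegree σ k n := by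
  induction n with
  | zero =>
    rw [pow_zero, Submodule.one_le, mem_restrictTotalDegree, totalDegree_one]
  | succ n ih =>
    rw [pow_succ, Submodule.mul_le]
    intro p hp q hq
    have hp := ih hp
    rw [mem_restrictTotalDegree] at hp hq ⊢
    exact (totalDegree_mul p q).trans (by gcongr)

section Generators

variable {k A B : Type*} [Field k] [CommRing A] [Algebra k A] [CommRing B] [Algebra k B]

lemma finrank_mul_le (U V : Submodule k A) [FiniteDimensional k U] [FiniteDimensional k V] :
    Module.finrank k (U * V : Submodule k A) ≤ Module.finrank k U * Module.finrank k V := by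
  rw [← Submodule.mulMap_range, ← Module.finrank_tensorProduct]
  exact LinearMap.finrank_range_le _

lemma exists_mem_pow_of_mem_adjoin {U : Submodule k A} (h1 : 1 ∈ U) {x : A}
    (hx : x ∈ Algebra.adjoin k (U : Set A)) : ∃ n : ℕ, x ∈ U ^ n := by
  have pow_mono {m n : ℕ} (h : m ≤ n) : U ^ m ≤ U ^ n :=
    pow_le_pow_right₀ (Submodule.one_le.2 h1) h
  induction hx using Algebra.adjoin_induction with
  | mem x hx => exact ⟨1, by simpa using hx⟩
  | algebraMap r => exact ⟨0, pow_zero U ▸ Submodule.algebraMap_mem r⟩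
  | add x y _ _ hx hy =>
    obtain ⟨m, hm⟩ := hx
    obtain ⟨n, hn⟩ := hy
    exact ⟨max m n, add_mem (pow_mono (le_max_left m n) hm) (pow_mono (le_max_right m n) hn)⟩
  | mul x y _ _ hx hy =>
    obtain ⟨m, hm⟩ := hx
    obtain ⟨n, hn⟩ := hy
    exact ⟨m + n, pow_add U m n ▸ Submodule.mul_mem_mul hm hn⟩

variable [Algebra B A] [IsScalarTower k B A]

lemma exists_mem_map_pow_mul {V : Submodule k B} (h1 : 1 ∈ V)
    (hV : Algebra.adjoin k (V : Set B) = ⊤) {s : Set A} (hs : Submodule.span B s = ⊤) (x : A) :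
    ∃ n : ℕ, x ∈ V.map (IsScalarTower.toAlgHom k B A).toLinearMap ^ n * Submodule.span k s := by
  set W := V.map (IsScalarTower.toAlgHom k B A).toLinearMap with hW
  have one_mem_W : (1 : A) ∈ W := ⟨1, h1, map_one (algebraMap B A)⟩
  have pow_mono {m n : ℕ} (h : m ≤ n) : W ^ m * Submodule.span k s ≤ W ^ n * Submodule.span k s :=
    mul_le_mul_left (pow_le_pow_right₀ (Submodule.one_le.2 one_mem_W) h) _
  have hx : x ∈ Submodule.span B s := hs ▸ Submodule.mem_top
  induction hx using Submodule.span_induction with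
  | mem x hx => exact ⟨0, by simpa using Submodule.subset_span hx⟩
  | zero => exact ⟨0, zero_mem _⟩
  | add x y _ _ hx hy =>
    obtain ⟨m, hm⟩ := hx
    obtain ⟨n, hn⟩ := hy
    exact ⟨max m n, add_mem (pow_mono (le_max_left m n) hm) (pow_mono (le_max_right m n) hn)⟩
  | smul b x _ hx =>
    obtain ⟨n, hn⟩ := hx
    obtain ⟨m, hm⟩ := exists_mem_pow_of_mem_adjoin h1 (hV ▸ Algebra.mem_top (x := b))
    refine ⟨m + n, ?_⟩
    rw [pow_add, mul_assoc, Algebra.smul_def, hW, ← Submodule.map_pow]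
    exact Submodule.mul_mem_mul ⟨b, hm, rfl⟩ hn

lemma pow_mul_le_pow_mul {U W M : Submodule k A} {a : ℕ} (h : U * M ≤ W ^ a * M) (t : ℕ) :
    U ^ t * M ≤ W ^ (a * t) * M := by
  induction t with
  | zero => simp
  | succ t ih => calc
      U ^ (t + 1) * M = U ^ t * (U * M) := by rw [pow_succ, mul_assoc]
      _ ≤ U ^ t * (W ^ a * M) := mul_le_mul_right h _
      _ = W ^ a * (U ^ t * M) := mul_left_comm _ _ _
      _ ≤ W ^ a * (W ^ (a * t) * M) := mul_le_mul_right ih _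
      _ = W ^ (a * (t + 1)) * M := by rw [← mul_assoc, ← pow_add, add_comm, ← mul_add_one]

lemma exists_forall_pow_le_map_pow_mul [Module.Finite B A] {V : Submodule k B} (h1 : 1 ∈ V)
    (hV : Algebra.adjoin k (V : Set B) = ⊤) (U : Submodule k A) [hU : FiniteDimensional k U] :
    ∃ (a : ℕ) (M : Submodule k A), FiniteDimensional k M ∧ ∀ t : ℕ,
      U ^ t ≤ V.map (IsScalarTower.toAlgHom k B A).toLinearMap ^ (a * t) * M := by
  obtain ⟨s, hs⟩ := Module.Finite.fg_top (R := B) (M := A)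
  let M := Submodule.span k (insert 1 (s : Set A))
  have hs' : Submodule.span B (insert 1 (s : Set A)) = ⊤ :=
    top_le_iff.1 (hs.ge.trans (Submodule.span_mono (Set.subset_insert _ _)))
  choose n hn using exists_mem_map_pow_mul h1 hV hs'
  set W := V.map (IsScalarTower.toAlgHom k B A).toLinearMap
  have one_mem_W : (1 : A) ∈ W := ⟨1, h1, map_one (algebraMap B A)⟩
  have : FiniteDimensional k M := .span_of_finite k (s.finite_toSet.insert 1)
  obtain ⟨T, hT⟩ : (U * M).FG := (Submodule.fg_iff_finiteDimensional _).2 inferInstance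
  have mul_le : U * M ≤ W ^ T.sup n * M := by
    rw [← hT, Submodule.span_le]
    exact fun x hx => mul_le_mul_left
      (pow_le_pow_right₀ (Submodule.one_le.2 one_mem_W) (Finset.le_sup hx)) M (hn x)
  refine ⟨T.sup n, M, inferInstance, fun t => le_trans ?_ (pow_mul_le_pow_mul mul_le t)⟩
  exact le_mul_of_one_le_right' (Submodule.one_le.2 (Submodule.subset_span (.inl rfl)))

end Generators

variable {k A : Type u} [Field k] [CommRing A] [IsDomain A] [Algebra k A]

lemma exists_finrank_pow_le_of_finiteType [Algebra.FiniteType k A] (U : Submodule k A)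
    [FiniteDimensional k U] {δ : ℕ} (hδ : Algebra.trdeg k A = δ) :
    ∃ C : ℕ, ∀ t : ℕ, Module.finrank k (U ^ t : Submodule k A) ≤ C * (t + 1) ^ δ := by
  obtain ⟨m, g, g_injective, g_finite⟩ := exists_finite_inj_algHom_of_fg k A
  let _ : Algebra (MvPolynomial (Fin m) k) A := g.toRingHom.toAlgebra
  have : IsScalarTower k (MvPolynomial (Fin m) k) A := .of_algebraMap_eq fun x =>
    (g.commutes x).symm
  have : Module.Finite (MvPolynomial (Fin m) k) A := g_finite
  have : FaithfulSMul (MvPolynomial (Fin m) k) A :=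
    (faithfulSMul_iff_algebraMap_injective _ _).2 g_injective
  obtain rfl : δ = m := by
    have := trdeg_eq_of_isAlgebraic k (MvPolynomial (Fin m) k) A
    rw [hδ, MvPolynomial.trdeg_of_isDomain] at this
    exact_mod_cast this.trans (by simp : _ = (m : Cardinal.{u}))
  let V := restrictTotalDegree (Fin δ) k 1
  have one_mem : (1 : MvPolynomial (Fin δ) k) ∈ V := by
    simp [V, mem_restrictTotalDegree]
  have adjoin_V : Algebra.adjoin k (V : Set (MvPolynomial (Fin δ) k)) = ⊤ := by
    rw [eq_top_iff, ← adjoin_range_X]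
    refine Algebra.adjoin_mono ?_
    rintro _ ⟨i, rfl⟩
    exact (mem_restrictTotalDegree _ _ _).2 (totalDegree_X i).le
  obtain ⟨a, M, _, hM⟩ := exists_forall_pow_le_map_pow_mul one_mem adjoin_V U
  refine ⟨(a + δ) ^ δ * Module.finrank k M, fun t => ?_⟩
  let W := V.map (IsScalarTower.toAlgHom k (MvPolynomial (Fin δ) k) A).toLinearMap
  have finrank_W_pow_le : Module.finrank k (W ^ (a * t) : Submodule k A) ≤
      (a + δ) ^ δ * (t + 1) ^ δ := calc
    _ = Module.finrank k (V ^ (a * t) : Submodule k _) := finrank_map_pow g_injective V (a * t)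
    _ ≤ (a * t + δ).choose δ :=
      (Submodule.finrank_mono (restrictTotalDegree_one_pow_le k _ (a * t))).trans_eq
        (finrank_restrictTotalDegree k δ (a * t))
    _ ≤ (a * t + δ) ^ δ := Nat.choose_le_pow _ _
    _ ≤ ((a + δ) * (t + 1)) ^ δ := by gcongr; nlinarith
    _ = _ := mul_pow _ _ _
  calc Module.finrank k (U ^ t : Submodule k A)
      ≤ Module.finrank k (W ^ (a * t) * M : Submodule k A) := Submodule.finrank_mono (hM t)
    _ ≤ Module.finrank k (W ^ (a * t) : Submodule k A) * Module.finrank k M := finrank_mul_le _ _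
    _ ≤ (a + δ) ^ δ * (t + 1) ^ δ * Module.finrank k M := Nat.mul_le_mul_right _ finrank_W_pow_le
    _ = _ := mul_right_comm _ _ _

lemma exists_finrank_pow_le (U : Submodule k A) [FiniteDimensional k U] {δ : ℕ}
    (hδ : Algebra.trdeg k (Algebra.adjoin k (U : Set A)) = δ) :
    ∃ C : ℕ, ∀ t : ℕ, Module.finrank k (U ^ t : Submodule k A) ≤ C * (t + 1) ^ δ := by
  have := finiteType_adjoin U
  obtain ⟨C, hC⟩ := exists_finrank_pow_le_of_finiteType
    (U.comap (Algebra.adjoin k (U : Set A)).val.toLinearMap) hδ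
  refine ⟨C, fun t => (hC t).trans_eq' ?_⟩
  rw [← finrank_map_pow (f := (Algebra.adjoin k (U : Set A)).val) Subtype.val_injective,
    map_comap_val_adjoin]

end UpperBound

section GradedDomain

variable {k A F : Type u} [Field k] [CommRing A] [Algebra k A] [Field F] [Algebra k F]
  [Algebra A F] [IsScalarTower k A F]

/-- The degree-zero fractions `v / w` with `v ∈ V`: for a graded domain `A` generated by its
linear forms `V`, and `w ∈ V`, these generate the coordinate ring of the affine chart `w ≠ 0`. -/
def dehomogenization (F : Type u) [Field F] [Algebra k F] [Algebra A F] [IsScalarTower k A F]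
    (V : Submodule k A) (w : A) : Submodule k F :=
  (V.map (IsScalarTower.toAlgHom k A F).toLinearMap).map (LinearMap.mulLeft k (algebraMap A F w)⁻¹)

instance finiteDimensional_dehomogenization (V : Submodule k A) [FiniteDimensional k V] (w : A) :
    FiniteDimensional k (dehomogenization F V w) := by
  unfold dehomogenization
  infer_instance

variable {V : Submodule k A} {w : A}

lemma one_mem_dehomogenization (hw : w ∈ V) (hw0 : algebraMap A F w ≠ 0) :
    1 ∈ dehomogenization F V w :=
  ⟨_, ⟨w, hw, rfl⟩, inv_mul_cancel₀ hw0⟩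

lemma exists_pow_mul_eq_of_mem_dehomogenization_pow (hw0 : algebraMap A F w ≠ 0) {n : ℕ} {x : F}
    (hx : x ∈ dehomogenization F V w ^ n) :
    ∃ b ∈ V ^ n, algebraMap A F w ^ n * x = algebraMap A F b := by
  rw [dehomogenization, map_mulLeft_pow, ← Submodule.map_pow] at hx
  obtain ⟨_, ⟨b, hb, rfl⟩, rfl⟩ := hx
  refine ⟨b, hb, ?_⟩
  rw [LinearMap.mulLeft_apply, ← mul_assoc, ← mul_pow, mul_inv_cancel₀ hw0, one_pow, one_mul]
  rfl

lemma finrank_dehomogenization_pow [FaithfulSMul A F] (hw0 : algebraMap A F w ≠ 0) (n : ℕ) :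
    Module.finrank k (dehomogenization F V w ^ n : Submodule k F) =
      Module.finrank k (V ^ n : Submodule k A) := by
  rw [dehomogenization, finrank_map_mulLeft_pow _ (inv_ne_zero hw0)]
  exact finrank_map_pow (f := IsScalarTower.toAlgHom k A F)
    (FaithfulSMul.algebraMap_injective A F) V n

lemma transcendental_adjoin_dehomogenization [IsDomain A] [FaithfulSMul A F]
    (hV : iSupIndep fun n : ℕ => V ^ n) (hw : w ∈ V) (hw0 : algebraMap A F w ≠ 0) :
    Transcendental (Algebra.adjoin k (dehomogenization F V w : Set F)) (algebraMap A F w) := by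
  have h1 := one_mem_dehomogenization hw hw0
  rw [transcendental_iff]
  intro p hp
  choose e he using fun j => exists_mem_pow_of_mem_adjoin h1 (p.coeff j).2
  let D := p.support.sup e
  have hcoeff (j : ℕ) : (p.coeff j : F) ∈ dehomogenization F V w ^ D := by
    by_cases hj : j ∈ p.support
    · exact pow_le_pow_right₀ (Submodule.one_le.2 h1) (Finset.le_sup hj) (he j)
    · rw [Polynomial.notMem_support_iff.1 hj]
      exact zero_mem _
  choose b hb hbw using fun j => exists_pow_mul_eq_of_mem_dehomogenization_pow hw0 (hcoeff j)
  have hsum : ∑ j ∈ Finset.range (p.natDegree + 1), w ^ j * b j = 0 := by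
    apply FaithfulSMul.algebraMap_injective A F
    rw [map_zero, ← mul_zero (algebraMap A F w ^ D), ← hp, Polynomial.aeval_eq_sum_range,
      map_sum, Finset.mul_sum]
    refine Finset.sum_congr rfl fun j _ => ?_
    rw [map_mul, map_pow, ← hbw, Subalgebra.smul_def, smul_eq_mul]
    ring
  have hzero := iSupIndep_iff_finsetSum_eq_zero_imp_eq_zero _ |>.1
    (hV.comp (add_right_injective D)) _ _ (fun j _ => ?_) hsum
  · ext j
    rw [Polynomial.coeff_zero]
    by_cases hj : j ∈ Finset.range (p.natDegree + 1)
    · have hbj := hbw j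
      rw [(mul_eq_zero.1 (hzero j hj)).resolve_left
        (pow_ne_zero j fun h => hw0 (h ▸ map_zero _)), map_zero] at hbj
      exact (mul_eq_zero.1 hbj).resolve_left (pow_ne_zero D hw0)
    · rw [Polynomial.coeff_eq_zero_of_natDegree_lt (by simpa using hj)]
  · rw [Function.comp_apply, add_comm, pow_add]
    exact Submodule.mul_mem_mul (Submodule.pow_mem_pow _ hw j) (hb j)

lemma restrictScalars_adjoin_simple_dehomogenization [IsFractionRing A F]
    (hadj : Algebra.adjoin k (V : Set A) = ⊤) (hw0 : algebraMap A F w ≠ 0) :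
    IntermediateField.adjoin
      (IntermediateField.adjoin k (dehomogenization F V w : Set F)) {algebraMap A F w} = ⊤ := by
  set L := IntermediateField.adjoin k (dehomogenization F V w : Set F)
  set E := IntermediateField.adjoin L {algebraMap A F w}
  have hVE : V ≤ (Subalgebra.toSubmodule
      ((E.restrictScalars k).toSubalgebra.comap (IsScalarTower.toAlgHom k A F))) := by
    intro v hv
    have hvL : (algebraMap A F w)⁻¹ * algebraMap A F v ∈ L :=
      IntermediateField.subset_adjoin k _ ⟨_, ⟨v, hv, rfl⟩, rfl⟩
    have := mul_mem (IntermediateField.mem_adjoin_simple_self L (algebraMap A F w))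
      (E.algebraMap_mem ⟨_, hvL⟩)
    rwa [IntermediateField.algebraMap_apply, mul_inv_cancel_left₀ hw0] at this
  have hAE (a : A) : algebraMap A F a ∈ E :=
    Algebra.adjoin_le hVE (hadj ▸ Algebra.mem_top (x := a))
  refine eq_top_iff.2 fun x _ => ?_
  obtain ⟨a, b, -, rfl⟩ := IsFractionRing.div_surjective (A := A) x
  exact div_mem (hAE a) (hAE b)

open scoped IntermediateField.algebraAdjoinAdjoin in
lemma trdeg_adjoin_dehomogenization_add_one [IsDomain A] [IsFractionRing A F]
    (hadj : Algebra.adjoin k (V : Set A) = ⊤) (hV : iSupIndep fun n : ℕ => V ^ n)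
    (hw : w ∈ V) (hw0 : algebraMap A F w ≠ 0) :
    Algebra.trdeg k (IntermediateField.adjoin k (dehomogenization F V w : Set F)) + 1 =
      Algebra.trdeg k A := by
  have hfaithful : FaithfulSMul A F :=
    (faithfulSMul_iff_algebraMap_injective A F).2 (IsFractionRing.injective A F)
  have halgebraic : Algebra.IsAlgebraic A F := IsLocalization.isAlgebraic _ (nonZeroDivisors A)
  have htower : IsScalarTower (Algebra.adjoin k (dehomogenization F V w : Set F))
      (IntermediateField.adjoin k (dehomogenization F V w : Set F)) F :=
    .of_algebraMap_eq fun _ => rfl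
  have htr := transcendental_adjoin_dehomogenization hV hw hw0
  rw [Transcendental, IsFractionRing.isAlgebraic_iff _
    (IntermediateField.adjoin k (dehomogenization F V w : Set F))] at htr
  rw [← trdeg_adjoin_of_transcendental k htr,
    restrictScalars_adjoin_simple_dehomogenization hadj hw0, ← trdeg_eq_of_isAlgebraic k A F]
  exact (IntermediateField.topEquiv.restrictScalars k).trdeg_eq

end GradedDomain

section HilbertFunction

open MvPolynomial

attribute [local instance] MvPolynomial.gradedAlgebra

variable {k : Type u} [Field k] {N : ℕ} {J : Ideal (MvPolynomial (Fin N) k)}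

lemma hilbertFunction_eq_finrank_pow (J : Ideal (MvPolynomial (Fin N) k)) (d : ℕ) :
    hilbertFunction k J d = Module.finrank k
      (((homogeneousSubmodule (Fin N) k 1).map (Ideal.Quotient.mkₐ k J).toLinearMap) ^ d :
        Submodule k (MvPolynomial (Fin N) k ⧸ J)) := by
  rw [hilbertFunction, ← homogeneousSubmodule_one_pow, Submodule.map_pow]

lemma adjoin_map_homogeneousSubmodule_one (J : Ideal (MvPolynomial (Fin N) k)) :
    Algebra.adjoin k ((homogeneousSubmodule (Fin N) k 1).map
      (Ideal.Quotient.mkₐ k J).toLinearMap : Set (MvPolynomial (Fin N) k ⧸ J)) = ⊤ := by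
  rw [eq_top_iff, ← (AlgHom.range_eq_top _).2 (Ideal.Quotient.mkₐ_surjective k J),
    ← Algebra.map_top, ← adjoin_range_X, AlgHom.map_adjoin]
  refine Algebra.adjoin_mono ?_
  rintro _ ⟨_, ⟨i, rfl⟩, rfl⟩
  exact ⟨X i, isHomogeneous_X k i, rfl⟩

lemma iSupIndep_map_homogeneousSubmodule_one_pow
    (hJ : J.IsHomogeneous (homogeneousSubmodule (Fin N) k)) :
    iSupIndep fun n : ℕ => ((homogeneousSubmodule (Fin N) k 1).map
      (Ideal.Quotient.mkₐ k J).toLinearMap) ^ n := by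
  simp only [← Submodule.map_pow, homogeneousSubmodule_one_pow]
  refine (iSupIndep_iff_finsetSum_eq_zero_imp_eq_zero _).2 fun s v hv hsum d hd => ?_
  choose! c hc hcv using hv
  have hmem : ∑ i ∈ s, c i ∈ J := by
    rw [← Ideal.Quotient.eq_zero_iff_mem, map_sum, ← hsum]
    exact Finset.sum_congr rfl hcv
  have hd_mem := homogeneousComponent_mem_of_mem hJ hmem d
  rw [map_sum, Finset.sum_eq_single_of_mem d hd fun i hi hid => ?_,
    homogeneousComponent_of_mem (hc d hd), if_pos rfl] at hd_mem
  · exact hcv d hd ▸ Ideal.Quotient.eq_zero_iff_mem.2 hd_mem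
  · rw [homogeneousComponent_of_mem (hc i hi), if_neg hid.symm]

lemma exists_finrank_pow_eq_hilbertFunction {P : Ideal (MvPolynomial (Fin N) k)} [P.IsPrime]
    (F : Type u) [Field F] [Algebra k F] [Algebra (MvPolynomial (Fin N) k ⧸ P) F]
    [IsScalarTower k (MvPolynomial (Fin N) k ⧸ P) F]
    [IsFractionRing (MvPolynomial (Fin N) k ⧸ P) F]
    (hP : P.IsHomogeneous (homogeneousSubmodule (Fin N) k)) {δ : ℕ}
    (hδ : Algebra.trdeg k (MvPolynomial (Fin N) k ⧸ P) = (δ + 1 : ℕ)) :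
    ∃ U : Submodule k F, FiniteDimensional k U ∧ 1 ∈ U ∧
      Algebra.trdeg k (IntermediateField.adjoin k (U : Set F)) = δ ∧
      ∀ n, Module.finrank k (U ^ n : Submodule k F) = hilbertFunction k P n := by
  have hfaithful : FaithfulSMul (MvPolynomial (Fin N) k ⧸ P) F :=
    (faithfulSMul_iff_algebraMap_injective _ F).2 (IsFractionRing.injective _ F)
  let V := (homogeneousSubmodule (Fin N) k 1).map (Ideal.Quotient.mkₐ k P).toLinearMap
  have hadj : Algebra.adjoin k (V : Set (MvPolynomial (Fin N) k ⧸ P)) = ⊤ :=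
    adjoin_map_homogeneousSubmodule_one P
  have hV : V ≠ ⊥ := by
    intro h
    rw [h, Submodule.bot_coe, Algebra.adjoin_singleton_zero, eq_comm,
      ← Algebra.surjective_algebraMap_iff] at hadj
    have := Algebra.IsIntegral.of_surjective (Algebra.ofId k (MvPolynomial (Fin N) k ⧸ P)) hadj
    rw [trdeg_eq_zero] at hδ
    exact absurd hδ (by exact_mod_cast (Nat.succ_ne_zero δ).symm)
  obtain ⟨w, hw, hw0⟩ := Submodule.exists_mem_ne_zero_of_ne_bot hV
  have hw0' : algebraMap _ F w ≠ 0 :=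
    fun h => hw0 ((IsFractionRing.injective _ _) (h.trans (map_zero _).symm))
  have htr := trdeg_adjoin_dehomogenization_add_one hadj
    (iSupIndep_map_homogeneousSubmodule_one_pow hP) hw hw0'
  refine ⟨dehomogenization F V w, inferInstance, one_mem_dehomogenization hw hw0', ?_, fun n => ?_⟩
  · rw [hδ, Nat.cast_add_one] at htr
    exact Cardinal.add_one_inj.1 htr
  · rw [finrank_dehomogenization_pow hw0', hilbertFunction_eq_finrank_pow]

lemma choose_add_mul_choose_le_hilbertFunction [IsAlgClosed k]
    {P : Ideal (MvPolynomial (Fin N) k)} [P.IsPrime]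
    (hP : P.IsHomogeneous (homogeneousSubmodule (Fin N) k)) {δ : ℕ}
    (hδ : Algebra.trdeg k (MvPolynomial (Fin N) k ⧸ P) = (δ + 1 : ℕ)) :
    δ + 1 ≤ hilbertFunction k P 1 ∧ ∀ t : ℕ,
      (t + 1 + δ).choose δ + (hilbertFunction k P 1 - (δ + 1)) * (t + δ).choose δ ≤
        hilbertFunction k P (t + 1) := by
  obtain ⟨U, hU, h1, htr, hfinrank⟩ :=
    exists_finrank_pow_eq_hilbertFunction (FractionRing (MvPolynomial (Fin N) k ⧸ P)) hP hδ
  have := hasMinimalDegreeBound U h1 htr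
  have hfinrank_one := hfinrank 1
  rw [pow_one] at hfinrank_one
  simpa only [HasMinimalDegreeBound, hfinrank_one, hfinrank] using this

lemma exists_hilbertFunction_le_mul_pow {P : Ideal (MvPolynomial (Fin N) k)} [P.IsPrime]
    (hP : P.IsHomogeneous (homogeneousSubmodule (Fin N) k)) {δ : ℕ}
    (hδ : Algebra.trdeg k (MvPolynomial (Fin N) k ⧸ P) = (δ + 1 : ℕ)) :
    ∃ C : ℕ, ∀ t : ℕ, hilbertFunction k P t ≤ C * (t + 1) ^ δ := by
  obtain ⟨U, hU, -, htr, hfinrank⟩ :=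
    exists_finrank_pow_eq_hilbertFunction (FractionRing (MvPolynomial (Fin N) k ⧸ P)) hP hδ
  simp only [← hfinrank]
  rw [trdeg_intermediateField_adjoin] at htr
  exact exists_finrank_pow_le U htr

end HilbertFunction

section DimensionFormula

open Polynomial

variable {k B : Type u} [Field k] [CommRing B] [Algebra k B]

section GenericFiber

variable [IsDomain B] (Q : Ideal B[X]) [hQ : Q.IsPrime]

attribute [local instance] Polynomial.algebra Polynomial.isLocalization in
lemma height_eq_one_of_comap_C_eq_bot (hQB : Q.comap C = ⊥) (hQ0 : Q ≠ ⊥) : Q.height = 1 := by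
  let K := FractionRing B
  have hdisj : Disjoint ((nonZeroDivisors B).map C : Set B[X]) Q := by
    rw [Set.disjoint_left]
    rintro _ ⟨b, hb, rfl⟩ hbQ
    exact nonZeroDivisors.ne_zero hb ((Ideal.mem_bot).1 (hQB.le hbQ))
  have hprime : (Q.map (algebraMap B[X] K[X])).IsPrime :=
    IsLocalization.isPrime_of_isPrime_disjoint ((nonZeroDivisors B).map C) _ _ hQ hdisj
  have hne : Q.map (algebraMap B[X] K[X]) ≠ ⊥ := by
    rwa [Ne, Ideal.map_eq_bot_iff_of_injective
      (Polynomial.map_injective _ (IsFractionRing.injective B K))]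
  have hmax : (Q.map (algebraMap B[X] K[X])).IsMaximal := IsPrime.to_maximal_ideal hne
  rw [← IsLocalization.height_map_of_disjoint (S := K[X]) ((nonZeroDivisors B).map C) Q hdisj]
  exact IsPrincipalIdealRing.height_eq_one_of_isMaximal _ (Polynomial.not_isField K)

lemma trdeg_quotient_eq_of_comap_C_eq_bot (hQB : Q.comap C = ⊥) (hQ0 : Q ≠ ⊥) :
    Algebra.trdeg k (B[X] ⧸ Q) = Algebra.trdeg k B := by
  have hfaithful : FaithfulSMul B (B[X] ⧸ Q) := by
    refine (faithfulSMul_iff_algebraMap_injective B _).2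
      ((injective_iff_map_eq_zero (algebraMap B (B[X] ⧸ Q))).2 fun b hb => ?_)
    have hbQ : C b ∈ Q := Ideal.Quotient.eq_zero_iff_mem.1 hb
    exact Ideal.mem_bot.1 (hQB.le hbQ)
  have hX : IsAlgebraic B (Ideal.Quotient.mk Q X) := by
    obtain ⟨g, hg, hg0⟩ := Submodule.exists_mem_ne_zero_of_ne_bot hQ0
    refine ⟨g, hg0, ?_⟩
    rw [← Ideal.Quotient.mkₐ_eq_mk B, Polynomial.aeval_algHom_apply, Polynomial.aeval_X_left_apply]
    exact Ideal.Quotient.eq_zero_iff_mem.2 hg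
  have halgebraic : Algebra.IsAlgebraic B (B[X] ⧸ Q) := by
    refine ⟨fun x => ?_⟩
    obtain ⟨f, rfl⟩ := Ideal.Quotient.mk_surjective x
    induction f using Polynomial.induction_on' with
    | add p q hp hq => exact map_add (Ideal.Quotient.mk Q) p q ▸ hp.add hq
    | monomial n a =>
      rw [← C_mul_X_pow_eq_monomial, map_mul, map_pow]
      exact (isAlgebraic_algebraMap a).mul (hX.pow n)
  exact trdeg_eq_of_isAlgebraic k B _

end GenericFiber

/-- The dimension formula `height P + dim (R ⧸ P) = n` for all primes `P` of a `k`-algebra `R`,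
the dimension of the quotient being expressed as a transcendence degree. -/
def HasDimensionFormula (k R : Type u) [Field k] [CommRing R] [Algebra k R] (n : ℕ) : Prop :=
  ∀ P : Ideal R, P.IsPrime → P.height + (Algebra.trdeg k (R ⧸ P)).toENat = n

variable {R S : Type u} [CommRing R] [Algebra k R] [CommRing S] [Algebra k S] {n : ℕ}

lemma trdeg_quotient_comap_of_surjective {φ : R →ₐ[k] S} (hφ : Function.Surjective φ)
    (Q : Ideal S) : Algebra.trdeg k (R ⧸ Q.comap φ) = Algebra.trdeg k (S ⧸ Q) :=
  (AlgEquiv.ofBijective (Ideal.quotientMapₐ Q φ le_rfl)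
    ⟨Ideal.quotientMap_injective' (H := le_rfl) le_rfl,
      Ideal.quotientMap_surjective (H := le_rfl) hφ⟩).trdeg_eq

lemma HasDimensionFormula.of_algEquiv (h : HasDimensionFormula k R n) (e : R ≃ₐ[k] S) :
    HasDimensionFormula k S n := by
  intro P hP
  rw [← h (P.comap e) inferInstance,
    ← trdeg_quotient_comap_of_surjective (φ := e.toAlgHom) e.surjective P]
  exact congrArg (· + _) (e.toRingEquiv.height_comap P).symm

lemma height_eq_height_comap_add_height_map [IsNoetherianRing R] (P : Ideal R[X]) [P.IsPrime] :
    P.height = (P.comap C).height +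
      (P.map (mapRingHom (Ideal.Quotient.mk (P.comap C)))).height := by
  let p := P.under R
  have : P.LiesOver p := ⟨rfl⟩
  have hfactor : ((Ideal.polynomialQuotientEquivQuotientPolynomial p).symm : _ →+* _).comp
      (Ideal.Quotient.mk (p.map C)) = mapRingHom (Ideal.Quotient.mk p) := by
    ext x <;> simp
  rw [Ideal.height_eq_height_add_of_liesOver_of_hasGoingDown p P,
    ← (Ideal.polynomialQuotientEquivQuotientPolynomial p).symm.height_map]
  change _ = p.height + (P.map (mapRingHom (Ideal.Quotient.mk p))).height
  rw [← hfactor, ← Ideal.map_map]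
  rfl

lemma comap_map_mapRingHom_mk (P : Ideal R[X]) :
    (P.map (mapRingHom (Ideal.Quotient.mk (P.comap C)))).comap
      (mapRingHom (Ideal.Quotient.mk (P.comap C))) = P := by
  rw [Ideal.comap_map_of_surjective _ (Polynomial.map_surjective _ Ideal.Quotient.mk_surjective),
    ← RingHom.ker_eq_comap_bot, Polynomial.ker_mapRingHom, Ideal.mk_ker, sup_eq_left]
  exact Ideal.map_comap_le

lemma HasDimensionFormula.polynomial [IsNoetherianRing R] (h : HasDimensionFormula k R n) :
    HasDimensionFormula k R[X] (n + 1) := by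
  intro P hP
  let p := P.comap C
  let φ : R[X] →ₐ[k] (R ⧸ p)[X] := Polynomial.mapAlgHom (Ideal.Quotient.mkₐ k p)
  have hφ : Function.Surjective φ := Polynomial.map_surjective _ Ideal.Quotient.mk_surjective
  let Q := P.map φ
  have hQP : Q.comap φ = P := comap_map_mapRingHom_mk P
  have hQ : Q.IsPrime := by
    refine Ideal.map_isPrime_of_surjective hφ ?_
    rw [← hQP]
    exact Ideal.comap_mono bot_le
  have hQB : Q.comap C = ⊥ := by
    refine (Submodule.eq_bot_iff _).2 fun b hb => ?_
    obtain ⟨b, rfl⟩ := Ideal.Quotient.mk_surjective b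
    have hbQ : C b ∈ Q.comap φ := by
      change Polynomial.map _ (C b) ∈ Q
      rw [Polynomial.map_C]
      exact hb
    exact Ideal.Quotient.eq_zero_iff_mem.2 (hQP.le hbQ)
  have htrdeg : Algebra.trdeg k (R[X] ⧸ P) = Algebra.trdeg k ((R ⧸ p)[X] ⧸ Q) :=
    hQP ▸ trdeg_quotient_comap_of_surjective hφ Q
  have hheight : P.height = p.height + Q.height := height_eq_height_comap_add_height_map P
  rw [hheight, htrdeg, Nat.cast_add_one, ← h p inferInstance]
  by_cases hQ0 : Q = ⊥
  · rw [hQ0, Ideal.height_bot, (AlgEquiv.quotientBot k (R ⧸ p)[X]).trdeg_eq,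
      ← trdeg_add_eq k (R ⧸ p), Polynomial.trdeg_of_isDomain, map_add, map_one, add_zero, add_assoc]
  · rw [height_eq_one_of_comap_C_eq_bot Q hQB hQ0, trdeg_quotient_eq_of_comap_C_eq_bot Q hQB hQ0,
      add_right_comm]

lemma hasDimensionFormula_mvPolynomial (k : Type u) [Field k] (n : ℕ) :
    HasDimensionFormula k (MvPolynomial (Fin n) k) n := by
  induction n with
  | zero =>
    refine HasDimensionFormula.of_algEquiv (fun P hP => ?_)
      (MvPolynomial.isEmptyAlgEquiv k (Fin 0)).symm
    obtain rfl : P = ⊥ := (Ideal.eq_bot_or_top P).resolve_right hP.ne_top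
    rw [Ideal.height_bot, (AlgEquiv.quotientBot k k).trdeg_eq, trdeg_eq_zero, map_zero, add_zero,
      Nat.cast_zero]
  | succ n ih => exact ih.polynomial.of_algEquiv (MvPolynomial.finSuccEquiv k n).symm

end DimensionFormula

section Height

lemma heightENat_eq_height {R : Type u} [CommRing R] (I : Ideal R) : I.heightENat = I.height := by
  rw [Ideal.height_eq_inf_minimalPrimes, Ideal.heightENat]
  refine le_antisymm (le_iInf₂ fun p hp => ?_) (le_iInf₂ fun p hp => ?_)
  · exact (iInf₂_le (⟨p, hp.1.1⟩ : PrimeSpectrum R) hp.1.2).trans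
      (PrimeSpectrum.height_eq_orderHeight (⟨p, hp.1.1⟩ : PrimeSpectrum R)).ge
  · rw [← Ideal.height_eq_inf_minimalPrimes, ← PrimeSpectrum.height_eq_orderHeight]
    exact Ideal.height_mono hp

lemma height_le_two_of_le_span_pair {R : Type*} [CommRing R] [IsNoetherianRing R] {I p : Ideal R}
    [hp : p.IsPrime] {a b : R} (ha : a ∈ p) (hb : b ∈ p) (hI : I ≤ Ideal.span {a, b}) :
    I.height ≤ 2 := by
  have hne : Ideal.span {a, b} ≠ ⊤ := fun h =>
    hp.ne_top (top_le_iff.1 (h ▸ Ideal.span_le.2 (Set.pair_subset ha hb)))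
  refine (Ideal.height_mono hI).trans ((Ideal.height_le_spanFinrank _ hne).trans ?_)
  exact (Submodule.spanFinrank_span_le_encard _).trans
    ((Set.encard_insert_le {b} a).trans (by rw [Set.encard_singleton, one_add_one_eq_two]))

lemma isHomogeneous_of_height_le {ι σ A : Type*} [CommRing A] [AddCommMonoid ι] [LinearOrder ι]
    [IsOrderedCancelAddMonoid ι] [SetLike σ A] [AddSubmonoidClass σ A] {𝒜 : ι → σ} [GradedRing 𝒜]
    {I p : Ideal A} [hp : p.IsPrime] [p.FiniteHeight] (hI : I.IsHomogeneous 𝒜) (hIp : I ≤ p)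
    (hheight : p.height ≤ I.height) : p.IsHomogeneous 𝒜 := by
  have hcore : (p.homogeneousCore 𝒜).toIdeal.IsPrime := hp.homogeneousCore
  have hIcore : I ≤ (p.homogeneousCore 𝒜).toIdeal :=
    hI.toIdeal_homogeneousCore_eq_self.ge.trans (Ideal.homogeneousCore_mono 𝒜 hIp)
  rw [← (Ideal.toIdeal_homogeneousCore_le 𝒜 p).eq_of_not_lt fun hlt =>
    (Ideal.height_strict_mono_of_isPrime_of_isPrime hlt).not_ge
      (hheight.trans (Ideal.height_mono hIcore))]
  exact (p.homogeneousCore 𝒜).isHomogeneous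

end Height

section Asymptotics

open Filter Topology Asymptotics

/-- `f t` is asymptotic to `c * t ^ δ / δ!` (and is `o(t ^ δ)` if `c = 0`). For the Hilbert function
of a standard graded algebra of dimension `δ + 1`, this says that its multiplicity is `c`. -/
def HasMultiplicity (f : ℕ → ℕ) (δ : ℕ) (c : ℝ) : Prop :=
  Tendsto (fun t : ℕ => (δ.factorial : ℝ) * f t / (t : ℝ) ^ δ) atTop (𝓝 c)

namespace HasMultiplicity

variable {f g : ℕ → ℕ} {δ D : ℕ} {c d : ℝ}

lemma of_isEquivalent {a : ℝ}
    (h : (fun t : ℕ => (f t : ℝ)) ~[atTop] fun t : ℕ => a * (t : ℝ) ^ δ) :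
    HasMultiplicity f δ (δ.factorial * a) := by
  have hequiv := (IsEquivalent.refl (u := fun _ : ℕ => (δ.factorial : ℝ)).mul h).div
    (IsEquivalent.refl (u := fun t : ℕ => (t : ℝ) ^ δ))
  refine hequiv.symm.tendsto_nhds (tendsto_const_nhds.congr' ?_)
  filter_upwards [eventually_ne_atTop 0] with t ht
  have : (t : ℝ) ≠ 0 := Nat.cast_ne_zero.2 ht
  simp only [Pi.div_apply, Pi.mul_apply]
  field_simp

lemma choose (δ : ℕ) : HasMultiplicity (fun t => t.choose δ) δ 1 := by
  have h := of_isEquivalent (f := fun t => t.choose δ) (a := (δ.factorial : ℝ)⁻¹)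
    ((isEquivalent_choose δ).congr_right (.of_forall fun t => div_eq_inv_mul _ _))
  rwa [mul_inv_cancel₀ (Nat.cast_ne_zero.2 δ.factorial_ne_zero)] at h

lemma pow (δ : ℕ) : HasMultiplicity (fun t => t ^ δ) δ δ.factorial := by
  have h := of_isEquivalent (f := fun t => t ^ δ) (a := 1)
    (by simpa only [Nat.cast_pow, one_mul] using IsEquivalent.refl)
  rwa [mul_one] at h

lemma congr' (hf : HasMultiplicity f δ c) (h : f =ᶠ[atTop] g) : HasMultiplicity g δ c :=
  Tendsto.congr' (h.mono fun t ht => by rw [ht]) hf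

lemma unique (hc : HasMultiplicity f δ c) (hd : HasMultiplicity f δ d) : c = d :=
  tendsto_nhds_unique hc hd

lemma le_of_eventually_le (hf : HasMultiplicity f δ c) (hg : HasMultiplicity g δ d)
    (h : ∀ᶠ t in atTop, f t ≤ g t) : c ≤ d := by
  refine le_of_tendsto_of_tendsto hf hg (h.mono fun t ht => ?_)
  have : (f t : ℝ) ≤ g t := Nat.cast_le.2 ht
  dsimp only
  gcongr

lemma zero_of_eventually_le (hg : HasMultiplicity g δ 0) (h : ∀ᶠ t in atTop, f t ≤ g t) :
    HasMultiplicity f δ 0 := by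
  refine squeeze_zero' (.of_forall fun t => by positivity) (h.mono fun t ht => ?_) hg
  have : (f t : ℝ) ≤ g t := Nat.cast_le.2 ht
  gcongr

lemma add (hf : HasMultiplicity f δ c) (hg : HasMultiplicity g δ d) :
    HasMultiplicity (fun t => f t + g t) δ (c + d) := by
  refine (Tendsto.add hf hg).congr fun t => ?_
  push_cast
  ring

lemma sub (hf : HasMultiplicity f δ c) (hg : HasMultiplicity g δ d) (h : ∀ t, g t ≤ f t) :
    HasMultiplicity (fun t => f t - g t) δ (c - d) := by
  refine (Tendsto.sub hf hg).congr fun t => ?_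
  rw [Nat.cast_sub (h t)]
  ring

lemma sum {ι : Type*} {s : Finset ι} {f : ι → ℕ → ℕ} {c : ι → ℝ}
    (hf : ∀ i ∈ s, HasMultiplicity (f i) δ (c i)) :
    HasMultiplicity (fun t => ∑ i ∈ s, f i t) δ (∑ i ∈ s, c i) := by
  refine (tendsto_finsetSum s hf).congr fun t => ?_
  rw [Nat.cast_sum, Finset.mul_sum, Finset.sum_div]

lemma const_mul (hf : HasMultiplicity f δ c) (a : ℕ) :
    HasMultiplicity (fun t => a * f t) δ (a * c) := by
  refine (Tendsto.const_mul (a : ℝ) hf).congr fun t => ?_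
  push_cast
  ring

lemma comp {s : ℕ → ℕ} (hf : HasMultiplicity f δ c)
    (hs : (fun t => (s t : ℝ)) ~[atTop] fun t => (t : ℝ)) :
    HasMultiplicity (fun t => f (s t)) δ c := by
  have hs_atTop : Tendsto s atTop atTop := tendsto_natCast_atTop_iff.1
    (hs.symm.tendsto_atTop tendsto_natCast_atTop_atTop)
  have hratio : Tendsto (fun t => ((s t : ℝ) / t) ^ δ) atTop (𝓝 (1 ^ δ)) :=
    ((isEquivalent_iff_tendsto_one ((eventually_ne_atTop 0).mono fun t ht =>
      Nat.cast_ne_zero.2 ht)).1 hs).pow δ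
  have h := (Tendsto.comp hf hs_atTop).mul hratio
  rw [one_pow, mul_one] at h
  refine h.congr' ?_
  filter_upwards [hs_atTop.eventually_ne_atTop 0] with t ht
  have : (s t : ℝ) ≠ 0 := Nat.cast_ne_zero.2 ht
  simp only [Function.comp_apply, div_pow]
  field_simp

lemma comp_add_sub (hf : HasMultiplicity f δ c) (a b : ℕ) :
    HasMultiplicity (fun t => f (t + a - b)) δ c := by
  refine hf.comp ?_
  have hlittle : (fun _ : ℕ => (a : ℝ) - b) =o[atTop] fun t : ℕ => (t : ℝ) :=
    isLittleO_const_left.2 (Or.inr (tendsto_norm_atTop_atTop.comp tendsto_natCast_atTop_atTop))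
  refine (IsEquivalent.refl.add_isLittleO hlittle).congr_left ?_
  filter_upwards [eventually_ge_atTop b] with t ht
  rw [Nat.cast_sub (by lia), Nat.cast_add]
  simp only [Pi.add_apply]
  ring

lemma of_lt (hf : HasMultiplicity f D c) (h : D < δ) : HasMultiplicity f δ 0 := by
  obtain ⟨e, rfl⟩ := Nat.exists_eq_add_of_lt h
  have hpow : Tendsto (fun t : ℕ => ((t : ℝ) ^ (e + 1))⁻¹) atTop (𝓝 0) :=
    tendsto_inv_atTop_zero.comp
      ((tendsto_pow_atTop e.succ_ne_zero).comp tendsto_natCast_atTop_atTop)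
  have hlim := (hpow.const_mul (((D + e + 1).factorial : ℝ) / D.factorial)).mul hf
  rw [mul_zero, zero_mul] at hlim
  refine hlim.congr fun t => ?_
  have : (D.factorial : ℝ) ≠ 0 := Nat.cast_ne_zero.2 D.factorial_ne_zero
  rw [show (t : ℝ) ^ (D + e + 1) = (t : ℝ) ^ (e + 1) * (t : ℝ) ^ D by ring]
  field_simp

lemma of_polynomial {P : Polynomial ℚ} (h : ∀ᶠ t : ℕ in atTop, (f t : ℚ) = P.eval (t : ℚ)) :
    HasMultiplicity f P.natDegree ((P.natDegree.factorial * P.leadingCoeff : ℚ) : ℝ) := by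
  let Q := P.map (algebraMap ℚ ℝ)
  have hequiv := (Polynomial.isEquivalent_atTop_lead Q).comp_tendsto tendsto_natCast_atTop_atTop
  have hf : ∀ᶠ t : ℕ in atTop, Q.eval (t : ℝ) = f t := h.mono fun t ht => by
    rw [← Rat.cast_natCast (n := f t), ht, ← Rat.cast_natCast (n := t), Polynomial.eval_map]
    exact Polynomial.eval₂_at_apply (algebraMap ℚ ℝ) (t : ℚ)
  have := of_isEquivalent (hequiv.congr_left hf)
  simpa [Q] using this

lemma of_choose_le_of_le_pow (hf : HasMultiplicity f D c) (hc : 0 < c)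
    (hlower : ∀ᶠ t in atTop, (t + δ).choose δ ≤ f t) {C : ℕ} (hupper : ∀ t, f t ≤ C * (t + 1) ^ δ) :
    HasMultiplicity f δ c := by
  rcases lt_trichotomy D δ with hlt | rfl | hlt
  · have := ((choose δ).comp_add_sub δ 0).le_of_eventually_le (hf.of_lt hlt) hlower
    norm_num at this
  · exact hf
  · have hpow := (((pow δ).comp_add_sub 1 0).of_lt hlt).const_mul C
    have := hf.le_of_eventually_le hpow (.of_forall hupper)
    rw [mul_zero] at this
    exact absurd hc this.not_gt

end HasMultiplicity

end Asymptotics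

section HilbertFunctionIdentities

open MvPolynomial Filter

attribute [local instance] MvPolynomial.gradedAlgebra

lemma homogeneousComponent_mul_of_le {σ R : Type*} [CommRing R] {e t : ℕ} {g : MvPolynomial σ R}
    (hg : g.IsHomogeneous e) (het : e ≤ t) (f : MvPolynomial σ R) :
    homogeneousComponent t (g * f) = g * homogeneousComponent (t - e) f := by
  have h := DirectSum.coe_decompose_mul_of_left_mem_of_le (b := f) (homogeneousSubmodule σ R) hg het
  exact (decomposition.decompose'_apply (g * f) t).symm.trans
    (h.trans (congrArg (g * ·) (decomposition.decompose'_apply f (t - e))))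

lemma finrank_map_add_finrank_inf_ker {K V W : Type*} [Field K] [AddCommGroup V] [Module K V]
    [AddCommGroup W] [Module K W] (φ : V →ₗ[K] W) (U : Submodule K V) [FiniteDimensional K U] :
    Module.finrank K (U.map φ) + Module.finrank K (U ⊓ LinearMap.ker φ : Submodule K V) =
      Module.finrank K U := by
  have h := LinearMap.finrank_range_add_finrank_ker (φ.domRestrict U)
  have hker : LinearMap.ker (φ.domRestrict U) = (U ⊓ LinearMap.ker φ).comap U.subtype := by
    ext x
    simp
  rwa [LinearMap.range_domRestrict, hker,
    (Submodule.comapSubtypeEquivOfLe inf_le_left).finrank_eq] at h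

variable {k : Type u} [Field k] {N : ℕ}

/-- The homogeneous elements of degree `d` in the ideal `J`. -/
noncomputable def homogeneousPart (J : Ideal (MvPolynomial (Fin N) k)) (d : ℕ) :
    Submodule k (MvPolynomial (Fin N) k) :=
  homogeneousSubmodule (Fin N) k d ⊓ J.restrictScalars k

instance finiteDimensional_homogeneousPart (J : Ideal (MvPolynomial (Fin N) k)) (d : ℕ) :
    FiniteDimensional k (homogeneousPart J d) :=
  Submodule.finiteDimensional_of_le (S₂ := homogeneousSubmodule (Fin N) k d) inf_le_left

lemma finrank_map_homogeneousSubmodule_add {V : Type*} [AddCommGroup V] [Module k V]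
    {J : Ideal (MvPolynomial (Fin N) k)} (φ : MvPolynomial (Fin N) k →ₗ[k] V)
    (hφ : LinearMap.ker φ = J.restrictScalars k) (d : ℕ) :
    Module.finrank k ((homogeneousSubmodule (Fin N) k d).map φ) +
      Module.finrank k (homogeneousPart J d) =
        Module.finrank k (homogeneousSubmodule (Fin N) k d) := by
  rw [← finrank_map_add_finrank_inf_ker φ (homogeneousSubmodule (Fin N) k d), hφ, homogeneousPart]

lemma ker_mkₐ_toLinearMap (J : Ideal (MvPolynomial (Fin N) k)) :
    LinearMap.ker (Ideal.Quotient.mkₐ k J).toLinearMap = J.restrictScalars k :=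
  SetLike.ext fun _ => Ideal.Quotient.eq_zero_iff_mem

lemma hilbertFunction_add_finrank_homogeneousPart (J : Ideal (MvPolynomial (Fin N) k)) (d : ℕ) :
    hilbertFunction k J d + Module.finrank k (homogeneousPart J d) =
      Module.finrank k (homogeneousSubmodule (Fin N) k d) :=
  finrank_map_homogeneousSubmodule_add _ (ker_mkₐ_toLinearMap J) d

lemma hilbertFunction_anti {J J' : Ideal (MvPolynomial (Fin N) k)} (h : J ≤ J') (d : ℕ) :
    hilbertFunction k J' d ≤ hilbertFunction k J d := by
  have hJ := hilbertFunction_add_finrank_homogeneousPart J d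
  have hJ' := hilbertFunction_add_finrank_homogeneousPart J' d
  have hpart : Module.finrank k (homogeneousPart J d) ≤ Module.finrank k (homogeneousPart J' d) :=
    Submodule.finrank_mono fun f hf => ⟨hf.1, h hf.2⟩
  lia

lemma map_linearSubst_homogeneousSubmodule {σ τ R : Type*} [CommRing R]
    {φ : homogeneousSubmodule σ R 1 →ₗ[R] homogeneousSubmodule τ R 1}
    {ψ : homogeneousSubmodule τ R 1 →ₗ[R] homogeneousSubmodule σ R 1}
    (h : φ ∘ₗ ψ = LinearMap.id) (d : ℕ) :
    (homogeneousSubmodule σ R d).map (linearSubst φ).toLinearMap = homogeneousSubmodule τ R d := by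
  refine le_antisymm ?_ fun g hg =>
    ⟨linearSubst ψ g, isHomogeneous_linearSubst ψ hg, linearSubst_linearSubst h g⟩
  rintro _ ⟨f, hf, rfl⟩
  exact isHomogeneous_linearSubst φ hf

lemma hilbertFunction_comap_linearSubst {M : ℕ}
    {φ : homogeneousSubmodule (Fin N) k 1 →ₗ[k] homogeneousSubmodule (Fin M) k 1}
    {ψ : homogeneousSubmodule (Fin M) k 1 →ₗ[k] homogeneousSubmodule (Fin N) k 1}
    (h : φ ∘ₗ ψ = LinearMap.id) (J : Ideal (MvPolynomial (Fin M) k)) (d : ℕ) :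
    hilbertFunction k (J.comap (linearSubst φ)) d = hilbertFunction k J d := by
  have hcomap := hilbertFunction_add_finrank_homogeneousPart (J.comap (linearSubst φ)) d
  have hcomp := finrank_map_homogeneousSubmodule_add (J := J.comap (linearSubst φ))
    ((Ideal.Quotient.mkₐ k J).toLinearMap ∘ₗ (linearSubst φ).toLinearMap)
    (SetLike.ext fun _ => Ideal.Quotient.eq_zero_iff_mem) d
  rw [Submodule.map_comp, map_linearSubst_homogeneousSubmodule h] at hcomp
  exact Nat.add_right_cancel (hcomap.trans hcomp.symm)

lemma map_homogeneousPart_sup_span_singleton {J : Ideal (MvPolynomial (Fin N) k)}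
    (hJ : J.IsHomogeneous (homogeneousSubmodule (Fin N) k)) {e t : ℕ} (het : e ≤ t)
    {g : MvPolynomial (Fin N) k} (hg : g.IsHomogeneous e) :
    (homogeneousPart (J ⊔ Ideal.span {g}) t).map (Ideal.Quotient.mkₐ k J).toLinearMap =
      (homogeneousSubmodule (Fin N) k (t - e)).map
        ((Ideal.Quotient.mkₐ k J).toLinearMap ∘ₗ LinearMap.mulLeft k g) := by
  apply le_antisymm
  · rintro _ ⟨f, ⟨hft, hf⟩, rfl⟩
    obtain ⟨j, hj, _, hx, rfl⟩ := Submodule.mem_sup.1 hf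
    obtain ⟨h, rfl⟩ := Ideal.mem_span_singleton.1 hx
    refine ⟨homogeneousComponent (t - e) h, homogeneousComponent_isHomogeneous _ _, ?_⟩
    have hsum : homogeneousComponent t j + homogeneousComponent t (g * h) = j + g * h := by
      rw [← map_add, homogeneousComponent_of_mem hft, if_pos rfl]
    refine (Ideal.Quotient.eq.2 ?_).symm
    rw [LinearMap.mulLeft_apply, ← homogeneousComponent_mul_of_le hg het, ← hsum,
      add_sub_cancel_right]
    exact homogeneousComponent_mem_of_mem hJ hj t
  · rintro _ ⟨f, hf, rfl⟩
    refine ⟨g * f, ⟨?_, Ideal.mem_sup_right (Ideal.mul_mem_right _ _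
      (Ideal.mem_span_singleton_self g))⟩, rfl⟩
    have hgf := hg.mul hf
    rwa [Nat.add_sub_cancel' het] at hgf

lemma hilbertFunction_eq_sup_add_colon {J : Ideal (MvPolynomial (Fin N) k)}
    (hJ : J.IsHomogeneous (homogeneousSubmodule (Fin N) k)) {e t : ℕ} (het : e ≤ t)
    {g : MvPolynomial (Fin N) k} (hg : g.IsHomogeneous e) :
    hilbertFunction k J t = hilbertFunction k (J ⊔ Ideal.span {g}) t +
      hilbertFunction k (J.colon {g}) (t - e) := by
  have hker : LinearMap.ker ((Ideal.Quotient.mkₐ k J).toLinearMap ∘ₗ LinearMap.mulLeft k g) =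
      (J.colon {g}).restrictScalars k := SetLike.ext fun f => by
    rw [Submodule.restrictScalars_mem, Submodule.mem_colon_singleton, smul_eq_mul, mul_comm]
    exact Ideal.Quotient.eq_zero_iff_mem
  have hinf : homogeneousPart (J ⊔ Ideal.span {g}) t ⊓ J.restrictScalars k =
      homogeneousPart J t := by
    rw [homogeneousPart, inf_assoc]
    exact congrArg _ (inf_eq_right.2 fun _ hf => Ideal.mem_sup_left hf)
  have hpart := finrank_map_add_finrank_inf_ker (Ideal.Quotient.mkₐ k J).toLinearMap
    (homogeneousPart (J ⊔ Ideal.span {g}) t)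
  rw [ker_mkₐ_toLinearMap, hinf, map_homogeneousPart_sup_span_singleton hJ het hg] at hpart
  have hmul := finrank_map_homogeneousSubmodule_add _ hker (t - e)
  have hJ_add := hilbertFunction_add_finrank_homogeneousPart J t
  have hsup_add := hilbertFunction_add_finrank_homogeneousPart (J ⊔ Ideal.span {g}) t
  have hcolon_add := hilbertFunction_add_finrank_homogeneousPart (J.colon {g}) (t - e)
  lia

lemma hilbertFunction_bot (t : ℕ) :
    hilbertFunction k (⊥ : Ideal (MvPolynomial (Fin N) k)) t =
      Module.finrank k (homogeneousSubmodule (Fin N) k t) := by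
  have hbot : homogeneousPart (⊥ : Ideal (MvPolynomial (Fin N) k)) t = ⊥ :=
    (Submodule.eq_bot_iff _).2 fun _ hf => hf.2
  rw [← hilbertFunction_add_finrank_homogeneousPart ⊥ t, hbot, finrank_bot, add_zero]

lemma hilbertFunction_span_singleton_add {g : MvPolynomial (Fin N) k} (hg0 : g ≠ 0) {e t : ℕ}
    (hg : g.IsHomogeneous e) (het : e ≤ t) :
    hilbertFunction k (Ideal.span {g}) t + Module.finrank k (homogeneousSubmodule (Fin N) k (t - e))
      = Module.finrank k (homogeneousSubmodule (Fin N) k t) := by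
  have hcolon : (⊥ : Ideal (MvPolynomial (Fin N) k)).colon {g} = ⊥ := by
    ext f
    simp [Submodule.mem_colon_singleton, hg0]
  have h := hilbertFunction_eq_sup_add_colon (Ideal.IsHomogeneous.bot _) het hg
  rw [hcolon, bot_sup_eq, hilbertFunction_bot, hilbertFunction_bot] at h
  exact h.symm

lemma hilbertFunction_span_pair_add {g h : MvPolynomial (Fin N) k} (hgh : IsRelPrime g h)
    {d e t : ℕ} (hg : g.IsHomogeneous d) (hh : h.IsHomogeneous e) (het : e ≤ t) :
    hilbertFunction k (Ideal.span {g, h}) t + hilbertFunction k (Ideal.span {g}) (t - e) =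
      hilbertFunction k (Ideal.span {g}) t := by
  have hcolon : (Ideal.span {g}).colon {h} = Ideal.span {g} := by
    ext f
    rw [Submodule.mem_colon_singleton, smul_eq_mul, Ideal.mem_span_singleton,
      Ideal.mem_span_singleton]
    exact ⟨hgh.dvd_of_dvd_mul_right, fun hf => hf.mul_right _⟩
  have hhom : (Ideal.span {g}).IsHomogeneous (homogeneousSubmodule (Fin N) k) :=
    Ideal.homogeneous_span _ _ (by rintro _ rfl; exact ⟨d, hg⟩)
  have hsplit := hilbertFunction_eq_sup_add_colon hhom het hh
  rw [hcolon, ← Ideal.span_union, Set.singleton_union] at hsplit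
  exact hsplit.symm

lemma finrank_homogeneousSubmodule_fin_succ (m t : ℕ) :
    Module.finrank k (homogeneousSubmodule (Fin (m + 1)) k t) = (t + m).choose m := by
  rw [finrank_homogeneousSubmodule, Fintype.card_fin, show m + 1 + t - 1 = t + m by lia,
    Nat.choose_symm_add]

end HilbertFunctionIdentities

section Bezout

open MvPolynomial

variable {k : Type u} [Field k]

lemma choose_succ_eq_sum_add_choose {e n : ℕ} (hen : e ≤ n) (m : ℕ) :
    n.choose (m + 1) =
      ∑ j ∈ Finset.range e, (n - 1 - j).choose m + (n - e).choose (m + 1) := by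
  induction e with
  | zero => simp
  | succ e ih =>
    rw [ih (by lia), Finset.sum_range_succ, add_assoc, show n - e = n - 1 - e + 1 by lia,
      Nat.choose_succ_succ', show n - (e + 1) = n - 1 - e by lia]

lemma hilbertFunction_span_singleton_eq_sum {m : ℕ} {g : MvPolynomial (Fin (m + 2)) k}
    (hg0 : g ≠ 0) {e t : ℕ} (hg : g.IsHomogeneous e) (het : e ≤ t) :
    hilbertFunction k (Ideal.span {g}) t = ∑ j ∈ Finset.range e, (t + m - j).choose m := by
  have h := hilbertFunction_span_singleton_add hg0 hg het
  rw [finrank_homogeneousSubmodule_fin_succ, finrank_homogeneousSubmodule_fin_succ,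
    choose_succ_eq_sum_add_choose (show e ≤ t + (m + 1) by lia),
    show t + (m + 1) - e = t - e + (m + 1) by lia] at h
  exact Nat.add_right_cancel h

lemma hilbertFunction_span_pair_eq_sum {m : ℕ} {g h : MvPolynomial (Fin (m + 3)) k}
    (hgh : IsRelPrime g h) (hg0 : g ≠ 0) {d e t : ℕ} (hg : g.IsHomogeneous d)
    (hh : h.IsHomogeneous e) (ht : d + e ≤ t) :
    hilbertFunction k (Ideal.span {g, h}) t =
      ∑ i ∈ Finset.range d, ∑ j ∈ Finset.range e, (t + m - i - j).choose m := by
  have hpair := hilbertFunction_span_pair_add hgh hg hh (by lia : e ≤ t)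
  rw [hilbertFunction_span_singleton_eq_sum hg0 hg (by lia),
    hilbertFunction_span_singleton_eq_sum hg0 hg (by lia)] at hpair
  refine Nat.add_right_cancel (hpair.trans ?_)
  rw [← Finset.sum_add_distrib]
  refine Finset.sum_congr rfl fun i hi => ?_
  have hid := Finset.mem_range.1 hi
  rw [choose_succ_eq_sum_add_choose (show e ≤ t + (m + 1) - i by lia),
    show t + (m + 1) - i - 1 = t + m - i by lia,
    show t + (m + 1) - i - e = t - e + (m + 1) - i by lia]

lemma hasMultiplicity_hilbertFunction_bot (δ : ℕ) :
    HasMultiplicity (hilbertFunction k (⊥ : Ideal (MvPolynomial (Fin (δ + 1)) k))) δ 1 := by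
  refine ((HasMultiplicity.choose δ).comp_add_sub δ 0).congr' (.of_forall fun t => ?_)
  rw [hilbertFunction_bot, finrank_homogeneousSubmodule_fin_succ]
  rfl

lemma hasMultiplicity_hilbertFunction_span_singleton {δ : ℕ} {g : MvPolynomial (Fin (δ + 2)) k}
    (hg0 : g ≠ 0) {e : ℕ} (hg : g.IsHomogeneous e) :
    HasMultiplicity (hilbertFunction k (Ideal.span {g})) δ e := by
  have h := HasMultiplicity.sum (s := Finset.range e) fun j _ =>
    (HasMultiplicity.choose δ).comp_add_sub δ j
  rw [Finset.sum_const, Finset.card_range, nsmul_one] at h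
  refine h.congr' ?_
  filter_upwards [Filter.eventually_ge_atTop e] with t ht
  exact (hilbertFunction_span_singleton_eq_sum hg0 hg ht).symm

lemma hasMultiplicity_hilbertFunction_span_pair {δ : ℕ} {g h : MvPolynomial (Fin (δ + 3)) k}
    (hgh : IsRelPrime g h) (hg0 : g ≠ 0) {d e : ℕ} (hg : g.IsHomogeneous d)
    (hh : h.IsHomogeneous e) :
    HasMultiplicity (hilbertFunction k (Ideal.span {g, h})) δ (d * e) := by
  have hsum := HasMultiplicity.sum (s := Finset.range d) fun i _ =>
    HasMultiplicity.sum (s := Finset.range e) fun j _ =>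
      (HasMultiplicity.choose δ).comp_add_sub δ (i + j)
  simp only [Finset.sum_const, Finset.card_range, nsmul_eq_mul, mul_one] at hsum
  refine hsum.congr' ?_
  filter_upwards [Filter.eventually_ge_atTop (d + e)] with t ht
  simp only [hilbertFunction_span_pair_eq_sum hgh hg0 hg hh ht, Nat.sub_sub]

end Bezout

section Colon

variable {ι σ A : Type*} [CommRing A] [AddCancelCommMonoid ι] [LinearOrder ι]
  [SetLike σ A] [AddSubmonoidClass σ A] {𝒜 : ι → σ} [GradedRing 𝒜]
  {J p : Ideal A}

lemma isHomogeneous_colon_singleton (hJ : J.IsHomogeneous 𝒜) {e : ι} {g : A} (hg : g ∈ 𝒜 e) :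
    (J.colon {g}).IsHomogeneous 𝒜 := by
  intro i f hf
  have h := hJ (i + e) (Submodule.mem_colon_singleton.1 hf)
  rw [smul_eq_mul, DirectSum.coe_decompose_mul_add_of_right_mem 𝒜 hg] at h
  exact Submodule.mem_colon_singleton.2 h

lemma exists_mem_sdiff_isPrime_colon [IsOrderedCancelAddMonoid ι] [IsNoetherianRing A]
    (hJ : J.IsHomogeneous 𝒜) (hp : p.IsHomogeneous 𝒜) (hpJ : ¬ p ≤ J) :
    ∃ (e : ι) (g : A), g ∈ 𝒜 e ∧ g ∈ p ∧ g ∉ J ∧ (J.colon {g}).IsPrime := by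
  let colons := {K : Ideal A | ∃ (e : ι) (g : A), g ∈ 𝒜 e ∧ g ∈ p ∧ g ∉ J ∧ K = J.colon {g}}
  have hne : colons.Nonempty := by
    obtain ⟨f, hfp, hfJ⟩ := SetLike.not_le_iff_exists.1 hpJ
    classical
    obtain ⟨i, -, hi⟩ : ∃ i ∈ (DirectSum.decompose 𝒜 f).support,
        (DirectSum.decompose 𝒜 f i : A) ∉ J := by
      by_contra! h
      exact hfJ (DirectSum.sum_support_decompose 𝒜 f ▸ J.sum_mem h)
    exact ⟨_, i, _, SetLike.coe_mem _, hp i hfp, hi, rfl⟩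
  obtain ⟨_, ⟨e, g, hge, hgp, hgJ, rfl⟩, hmax⟩ := set_has_maximal_iff_noetherian.2 ‹_› colons hne
  refine ⟨e, g, hge, hgp, hgJ, (isHomogeneous_colon_singleton hJ hge
    ).isPrime_of_homogeneous_mem_or_mem ?_ ?_⟩
  · rw [Ne, Ideal.eq_top_iff_one, Submodule.mem_colon_singleton, one_smul]
    exact hgJ
  · rintro a b - ⟨j, hb⟩ hab
    rw [or_iff_not_imp_right]
    intro hbg
    rw [Submodule.mem_colon_singleton, smul_eq_mul] at hab hbg
    have hle : J.colon {g} ≤ J.colon {b * g} := fun f hf => by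
      rw [Submodule.mem_colon_singleton, smul_eq_mul] at hf ⊢
      rw [mul_left_comm]
      exact J.mul_mem_left b hf
    rw [hle.eq_of_not_lt (hmax _ ⟨j + e, b * g, SetLike.mul_mem_graded hb hge,
      p.mul_mem_left b hgp, hbg, rfl⟩), Submodule.mem_colon_singleton, smul_eq_mul, ← mul_assoc]
    exact hab

end Colon

section PrimeMultiplicity

open MvPolynomial Filter

attribute [local instance] MvPolynomial.gradedAlgebra

variable {k : Type u} [Field k] {N : ℕ}

lemma exists_hasMultiplicity_of_hilbertSamuelMultiplicity_ne_zero
    {J : Ideal (MvPolynomial (Fin N) k)} (h : hilbertSamuelMultiplicity k J ≠ 0) :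
    ∃ D, HasMultiplicity (hilbertFunction k J) D (hilbertSamuelMultiplicity k J) := by
  rw [hilbertSamuelMultiplicity] at h ⊢
  split_ifs at h ⊢ with hpoly
  · exact ⟨_, .of_polynomial hpoly.choose_spec⟩
  · exact absurd rfl h

variable [IsAlgClosed k] {P : Ideal (MvPolynomial (Fin N) k)} [P.IsPrime]

lemma hilbertFunction_succ_eq_zero (hP : P.IsHomogeneous (homogeneousSubmodule (Fin N) k))
    (htr : Algebra.trdeg k (MvPolynomial (Fin N) k ⧸ P) = 0) (t : ℕ) :
    hilbertFunction k P (t + 1) = 0 := by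
  rw [trdeg_eq_zero_iff] at htr
  have hbij := IsAlgClosed.algebraMap_bijective_of_isIntegral
    (k := k) (K := MvPolynomial (Fin N) k ⧸ P)
  have hX (i : Fin N) : (X i : MvPolynomial (Fin N) k) ∈ P := by
    obtain ⟨c, hc⟩ := hbij.2 (Ideal.Quotient.mk P (X i))
    have h := homogeneousComponent_mem_of_mem hP (Ideal.Quotient.eq.1 hc.symm) 1
    rwa [map_sub, homogeneousComponent_of_mem (isHomogeneous_X k i), if_pos rfl,
      MvPolynomial.algebraMap_eq, homogeneousComponent_of_mem (isHomogeneous_C _ c),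
      if_neg one_ne_zero, sub_zero] at h
  have hV : (homogeneousSubmodule (Fin N) k 1).map (Ideal.Quotient.mkₐ k P).toLinearMap = ⊥ := by
    rw [homogeneousSubmodule_one_eq_span_X, Submodule.map_span, Submodule.span_eq_bot]
    rintro _ ⟨_, ⟨i, rfl⟩, rfl⟩
    exact Ideal.Quotient.eq_zero_iff_mem.2 (hX i)
  rw [hilbertFunction_eq_finrank_pow, hV, pow_succ, Submodule.mul_bot, finrank_bot]

lemma hasMultiplicity_zero_of_trdeg_le (hP : P.IsHomogeneous (homogeneousSubmodule (Fin N) k))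
    {δ : ℕ} (htr : Algebra.trdeg k (MvPolynomial (Fin N) k ⧸ P) ≤ δ) :
    HasMultiplicity (hilbertFunction k P) δ 0 := by
  obtain ⟨τ, hτδ, hτ⟩ := Cardinal.exists_nat_eq_of_le_nat htr
  cases τ with
  | zero =>
    have hzero : HasMultiplicity (fun t => 0 * t ^ δ) δ 0 := by
      simpa only [Nat.cast_zero, zero_mul] using (HasMultiplicity.pow δ).const_mul 0
    refine hzero.congr' ?_
    filter_upwards [eventually_ge_atTop 1] with t ht
    obtain ⟨s, rfl⟩ := Nat.exists_eq_add_of_le' ht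
    rw [hilbertFunction_succ_eq_zero hP (hτ.trans Nat.cast_zero), zero_mul]
  | succ τ =>
    obtain ⟨C, hC⟩ := exists_hilbertFunction_le_mul_pow hP hτ
    have hpow := (((HasMultiplicity.pow τ).comp_add_sub 1 0).of_lt hτδ).const_mul C
    rw [mul_zero] at hpow
    exact hpow.zero_of_eventually_le (.of_forall hC)

lemma exists_hasMultiplicity_hilbertSamuelMultiplicity
    (hP : P.IsHomogeneous (homogeneousSubmodule (Fin N) k))
    (hpos : 0 < hilbertSamuelMultiplicity k P) {τ : ℕ}
    (hτ : Algebra.trdeg k (MvPolynomial (Fin N) k ⧸ P) = τ) :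
    ∃ δ, τ = δ + 1 ∧ HasMultiplicity (hilbertFunction k P) δ (hilbertSamuelMultiplicity k P) := by
  obtain ⟨D, hD⟩ := exists_hasMultiplicity_of_hilbertSamuelMultiplicity_ne_zero hpos.ne'
  have hpos' : (0 : ℝ) < hilbertSamuelMultiplicity k P := by exact_mod_cast hpos
  cases τ with
  | zero =>
    have hzero := hasMultiplicity_zero_of_trdeg_le hP (δ := D)
      (by rw [hτ]; exact_mod_cast D.zero_le)
    exact absurd (hD.unique hzero) hpos'.ne'
  | succ δ =>
    obtain ⟨C, hC⟩ := exists_hilbertFunction_le_mul_pow hP hτ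
    refine ⟨δ, rfl, hD.of_choose_le_of_le_pow hpos' ?_ hC⟩
    filter_upwards [eventually_ge_atTop 1] with t ht
    obtain ⟨s, rfl⟩ := Nat.exists_eq_add_of_le' ht
    exact (Nat.le_add_right _ _).trans ((choose_add_mul_choose_le_hilbertFunction hP hτ).2 s)

lemma one_add_le_of_eventually_hilbertFunction_le
    (hP : P.IsHomogeneous (homogeneousSubmodule (Fin N) k)) {δ : ℕ}
    (hδ : Algebra.trdeg k (MvPolynomial (Fin N) k ⧸ P) = (δ + 1 : ℕ)) {f : ℕ → ℕ} {c : ℝ}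
    (hf : HasMultiplicity f δ c) {e : ℕ} (h : ∀ᶠ t in atTop, hilbertFunction k P (t - e) ≤ f t) :
    1 + ((hilbertFunction k P 1 - (δ + 1) : ℕ) : ℝ) ≤ c := by
  have hlower := ((HasMultiplicity.choose δ).comp_add_sub δ 0).add
    (((HasMultiplicity.choose δ).comp_add_sub δ 1).const_mul (hilbertFunction k P 1 - (δ + 1)))
  rw [mul_one] at hlower
  refine (hlower.comp_add_sub 0 e).le_of_eventually_le hf ?_
  filter_upwards [h, eventually_ge_atTop (e + 1)] with t ht hte
  obtain ⟨s, rfl⟩ := Nat.exists_eq_add_of_le' hte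
  refine le_trans (le_of_eq_of_le ?_ ((choose_add_mul_choose_le_hilbertFunction hP hδ).2 s))
    (le_of_eq_of_le ?_ ht)
  · congr 3 <;> lia
  · congr 1
    lia

lemma exists_isPrime_hilbertFunction_le_sub {p J : Ideal (MvPolynomial (Fin N) k)}
    (hp : p.IsHomogeneous (homogeneousSubmodule (Fin N) k))
    (hJ : J.IsHomogeneous (homogeneousSubmodule (Fin N) k)) (hJp : J ≤ p) {δ : ℕ}
    (h : ¬ HasMultiplicity (fun t => hilbertFunction k J t - hilbertFunction k p t) δ 0) :
    ∃ (P : Ideal (MvPolynomial (Fin N) k)) (e : ℕ), P.IsPrime ∧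
      P.IsHomogeneous (homogeneousSubmodule (Fin N) k) ∧ J ≤ P ∧
      (δ : Cardinal) < Algebra.trdeg k (MvPolynomial (Fin N) k ⧸ P) ∧
      ∀ᶠ t in atTop, hilbertFunction k P (t - e) ≤
        hilbertFunction k J t - hilbertFunction k p t := by
  induction J using WellFoundedGT.induction with
  | ind J ih =>
  have hpJ : ¬ p ≤ J := fun hpJ => h <| by
    simpa [le_antisymm hJp hpJ] using (HasMultiplicity.pow δ).const_mul 0
  obtain ⟨e, g, hge, hgp, hgJ, hprime⟩ := exists_mem_sdiff_isPrime_colon hJ hp hpJ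
  have hcolon := isHomogeneous_colon_singleton hJ hge
  have hsup_le : J ⊔ Ideal.span {g} ≤ p := sup_le hJp ((Ideal.span_singleton_le_iff_mem p).2 hgp)
  have hlt : J < J ⊔ Ideal.span {g} := by
    rwa [left_lt_sup, Ideal.span_singleton_le_iff_mem]
  have hadd : ∀ᶠ t in atTop, hilbertFunction k J t - hilbertFunction k p t =
      hilbertFunction k (J ⊔ Ideal.span {g}) t - hilbertFunction k p t +
        hilbertFunction k (J.colon {g}) (t - e) := by
    filter_upwards [eventually_ge_atTop e] with t ht
    have := hilbertFunction_eq_sup_add_colon hJ ht hge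
    have := hilbertFunction_anti (k := k) hsup_le t
    lia
  by_cases htr : (δ : Cardinal) < Algebra.trdeg k (MvPolynomial (Fin N) k ⧸ J.colon {g})
  · exact ⟨_, e, hprime, hcolon, Ideal.le_colon, htr, hadd.mono fun t ht => by lia⟩
  · obtain ⟨P, e', hP, hPhom, hJP, htrP, hle⟩ := ih _ hlt
      (hJ.sup (Ideal.homogeneous_span _ _ (by rintro _ rfl; exact ⟨e, hge⟩))) hsup_le fun hsup => by
        have hsum := hsup.add
          ((hasMultiplicity_zero_of_trdeg_le hcolon (not_lt.1 htr)).comp_add_sub 0 e)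
        rw [add_zero] at hsum
        exact h (hsum.congr' (hadd.mono fun t ht => ht.symm))
    refine ⟨P, e', hP, hPhom, hlt.le.trans hJP, htrP, ?_⟩
    filter_upwards [hle, hadd] with t ht hadd_t
    lia

end PrimeMultiplicity

section LinearForms

open MvPolynomial Filter

attribute [local instance] MvPolynomial.gradedAlgebra

variable {k : Type u} [Field k] {N : ℕ}

lemma range_fin_two {α : Type*} (w : Fin 2 → α) : Set.range w = {w 0, w 1} :=
  Set.ext fun _ => by simp [eq_comm]

lemma span_homogeneousPart_le (J : Ideal (MvPolynomial (Fin N) k)) (d : ℕ) :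
    Ideal.span (homogeneousPart J d) ≤ J :=
  Ideal.span_le.2 fun _ hf => hf.2

lemma exists_linearSubst_ker_eq_span (J : Ideal (MvPolynomial (Fin N) k)) :
    ∃ (M : ℕ) (φ : homogeneousSubmodule (Fin N) k 1 →ₗ[k] homogeneousSubmodule (Fin M) k 1)
      (ψ : homogeneousSubmodule (Fin M) k 1 →ₗ[k] homogeneousSubmodule (Fin N) k 1),
      φ ∘ₗ ψ = LinearMap.id ∧ RingHom.ker (linearSubst φ) = Ideal.span (homogeneousPart J 1) ∧
        Module.finrank k (homogeneousPart J 1) + M = N := by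
  obtain ⟨M, φ, ψ, h, hker, hM⟩ := exists_linearSubst_ker_eq
    ((J.restrictScalars k).comap (homogeneousSubmodule (Fin N) k 1).subtype)
  have hmap : (LinearMap.ker φ).map (homogeneousSubmodule (Fin N) k 1).subtype =
      homogeneousPart J 1 := by
    rw [hker, Submodule.map_comap_subtype, homogeneousPart]
  refine ⟨M, φ, ψ, h, ?_, ?_⟩
  · rw [ker_linearSubst h, ← hmap]
    rfl
  · rw [← hmap, Submodule.finrank_map_subtype_eq, hker, hM, Fintype.card_fin]

lemma finrank_homogeneousPart_one_add (J : Ideal (MvPolynomial (Fin N) k)) :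
    Module.finrank k (homogeneousPart J 1) + hilbertFunction k J 1 = N := by
  rw [add_comm, hilbertFunction_add_finrank_homogeneousPart, finrank_homogeneousSubmodule]
  simp

lemma linearSubst_surjective {σ τ : Type*}
    {φ : homogeneousSubmodule σ k 1 →ₗ[k] homogeneousSubmodule τ k 1}
    {ψ : homogeneousSubmodule τ k 1 →ₗ[k] homogeneousSubmodule σ k 1}
    (h : φ ∘ₗ ψ = LinearMap.id) : Function.Surjective (linearSubst φ) :=
  fun g => ⟨linearSubst ψ g, linearSubst_linearSubst h g⟩

lemma isHomogeneous_map_linearSubst {σ τ : Type*}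
    (φ : homogeneousSubmodule σ k 1 →ₗ[k] homogeneousSubmodule τ k 1)
    {J : Ideal (MvPolynomial σ k)} (hJ : J.IsHomogeneous (homogeneousSubmodule σ k)) :
    (J.map (linearSubst φ)).IsHomogeneous (homogeneousSubmodule τ k) :=
  (HomogeneousIdeal.map (⟨(linearSubst φ).toRingHom, isHomogeneous_linearSubst φ⟩ :
    homogeneousSubmodule σ k →+*ᵍ homogeneousSubmodule τ k) ⟨J, hJ⟩).isHomogeneous

lemma exists_isPrime_comap_linearSubst_eq {p : Ideal (MvPolynomial (Fin N) k)} [p.IsPrime]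
    (hp : p.IsHomogeneous (homogeneousSubmodule (Fin N) k)) :
    ∃ (M : ℕ) (φ : homogeneousSubmodule (Fin N) k 1 →ₗ[k] homogeneousSubmodule (Fin M) k 1)
      (ψ : homogeneousSubmodule (Fin M) k 1 →ₗ[k] homogeneousSubmodule (Fin N) k 1)
      (p' : Ideal (MvPolynomial (Fin M) k)),
      φ ∘ₗ ψ = LinearMap.id ∧ RingHom.ker (linearSubst φ) = Ideal.span (homogeneousPart p 1) ∧
        Module.finrank k (homogeneousPart p 1) + M = N ∧ p'.IsPrime ∧
        p'.IsHomogeneous (homogeneousSubmodule (Fin M) k) ∧ p'.comap (linearSubst φ) = p ∧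
        homogeneousPart p' 1 = ⊥ := by
  obtain ⟨M, φ, ψ, h, hker, hM⟩ := exists_linearSubst_ker_eq_span p
  have hkerp : RingHom.ker (linearSubst φ) ≤ p := hker.le.trans (span_homogeneousPart_le p 1)
  have hcomap : (p.map (linearSubst φ)).comap (linearSubst φ) = p := by
    rw [Ideal.comap_map_of_surjective' _ (linearSubst_surjective h), sup_eq_left.2 hkerp]
  refine ⟨M, φ, ψ, p.map (linearSubst φ), h, hker, hM,
    Ideal.map_isPrime_of_surjective (linearSubst_surjective h) hkerp,
    isHomogeneous_map_linearSubst φ hp, hcomap, (Submodule.eq_bot_iff _).2 fun g hg => ?_⟩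
  have hlift : linearSubst φ (linearSubst ψ g) = g := linearSubst_linearSubst h g
  have hmem : linearSubst ψ g ∈ homogeneousPart p 1 :=
    ⟨isHomogeneous_linearSubst ψ hg.1, hcomap.le (Ideal.mem_comap.2 (hlift.symm ▸ hg.2))⟩
  rw [← hlift]
  exact RingHom.mem_ker.1 (hker.ge (Ideal.subset_span hmem))

lemma exists_span_range_eq_span_homogeneousPart {J : Ideal (MvPolynomial (Fin N) k)}
    {d m : ℕ} (h : Module.finrank k (homogeneousPart J d) = m) :
    ∃ w : Fin m → MvPolynomial (Fin N) k, (∀ i, w i ∈ homogeneousPart J d) ∧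
      Ideal.span (Set.range w) = Ideal.span (homogeneousPart J d) := by
  have hfinite : FiniteDimensional k
      (Submodule.span k (homogeneousPart J d : Set (MvPolynomial (Fin N) k))) := by
    rw [Submodule.span_eq]
    infer_instance
  have hbasis := Submodule.exists_fun_fin_finrank_span_eq k
    (homogeneousPart J d : Set (MvPolynomial (Fin N) k))
  rw [Submodule.span_eq, h] at hbasis
  obtain ⟨w, hw, hspan, -⟩ := hbasis
  exact ⟨w, hw, hspan ▸ (Submodule.span_span_of_tower k _ (Set.range w)).symm⟩

lemma span_homogeneousPart_one_eq {P : Ideal (MvPolynomial (Fin N) k)} [hP : P.IsPrime]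
    (htr : Algebra.trdeg k (MvPolynomial (Fin N) k ⧸ P) = (hilbertFunction k P 1 : ℕ)) :
    Ideal.span (homogeneousPart P 1) = P := by
  obtain ⟨M, φ, ψ, h, hker, hM⟩ := exists_linearSubst_ker_eq_span P
  obtain rfl : M = hilbertFunction k P 1 := by
    have := finrank_homogeneousPart_one_add P
    lia
  have hprime : (RingHom.ker (linearSubst φ)).IsPrime := RingHom.ker_isPrime _
  have htrker : Algebra.trdeg k (MvPolynomial (Fin N) k ⧸ RingHom.ker (linearSubst φ)) =
      (hilbertFunction k P 1 : ℕ) := by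
    rw [(Ideal.quotientKerAlgEquivOfSurjective (linearSubst_surjective h)).trdeg_eq,
      MvPolynomial.trdeg_of_isDomain]
    simp
  rw [← hker]
  refine (hker.le.trans (span_homogeneousPart_le P 1)).eq_of_not_lt fun hlt => ?_
  have hheight := (hasDimensionFormula_mvPolynomial k N _ hprime).trans
    (hasDimensionFormula_mvPolynomial k N _ hP).symm
  rw [htrker, htr, map_natCast] at hheight
  exact (Ideal.height_strict_mono_of_isPrime_of_isPrime hlt).ne
    (WithTop.add_right_cancel (ENat.natCast_ne_top _) hheight)

variable [IsAlgClosed k]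

/- Peeling off the prime quotients that make up `p ⧸ J` leaves room for exactly one component of
dimension `δ + 1`, and that component has multiplicity `1`. -/
lemma exists_isPrime_of_hasMultiplicity_add_one {p J : Ideal (MvPolynomial (Fin N) k)}
    (hp : p.IsHomogeneous (homogeneousSubmodule (Fin N) k))
    (hJ : J.IsHomogeneous (homogeneousSubmodule (Fin N) k)) (hJp : J ≤ p) {δ : ℕ} {c : ℝ}
    (hpc : HasMultiplicity (hilbertFunction k p) δ c)
    (hJc : HasMultiplicity (hilbertFunction k J) δ (c + 1)) :
    ∃ P : Ideal (MvPolynomial (Fin N) k), P.IsPrime ∧ J ≤ P ∧ hilbertFunction k P 1 = δ + 1 ∧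
      Algebra.trdeg k (MvPolynomial (Fin N) k ⧸ P) = (δ + 1 : ℕ) := by
  have hsub := hJc.sub hpc (hilbertFunction_anti hJp)
  rw [add_sub_cancel_left] at hsub
  obtain ⟨P, e, hP, hPhom, hJP, hlt, hle⟩ := exists_isPrime_hilbertFunction_le_sub hp hJ hJp
    fun hzero => one_ne_zero (hsub.unique hzero)
  obtain ⟨τ, hτ⟩ : ∃ τ : ℕ, Algebra.trdeg k (MvPolynomial (Fin N) k ⧸ P) = τ :=
    Cardinal.lt_aleph0.1 trdeg_lt_aleph0_of_finiteType
  rw [hτ, Nat.cast_lt] at hlt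
  obtain ⟨δ', rfl⟩ := Nat.exists_eq_add_of_lt hlt
  rcases δ'.eq_zero_or_pos with rfl | hpos
  · have hone := one_add_le_of_eventually_hilbertFunction_le hPhom hτ hsub hle
    have hspan := (choose_add_mul_choose_le_hilbertFunction hPhom hτ).1
    have hzero : hilbertFunction k P 1 - (δ + 1) = 0 := by
      exact Nat.le_zero.1 <| by exact_mod_cast (add_le_iff_nonpos_right (1 : ℝ)).1 hone
    exact ⟨P, hP, hJP, by lia, hτ⟩
  · have hone := one_add_le_of_eventually_hilbertFunction_le hPhom hτ
      (hsub.of_lt (Nat.lt_add_of_pos_right hpos)) hle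
    exact absurd hone (by push Not; positivity)

lemma exists_linear_pair_of_hasMultiplicity_add_one {δ : ℕ}
    {p J : Ideal (MvPolynomial (Fin (δ + 3)) k)}
    (hp : p.IsHomogeneous (homogeneousSubmodule (Fin (δ + 3)) k))
    (hJ : J.IsHomogeneous (homogeneousSubmodule (Fin (δ + 3)) k)) (hJp : J ≤ p) {c : ℝ}
    (hpc : HasMultiplicity (hilbertFunction k p) δ c)
    (hJc : HasMultiplicity (hilbertFunction k J) δ (c + 1)) :
    ∃ u v : MvPolynomial (Fin (δ + 3)) k, u.IsHomogeneous 1 ∧ v.IsHomogeneous 1 ∧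
      J ≤ Ideal.span {u, v} := by
  obtain ⟨P, hP, hJP, hone, htr⟩ := exists_isPrime_of_hasMultiplicity_add_one hp hJ hJp hpc hJc
  have hfinrank : Module.finrank k (homogeneousPart P 1) = 2 := by
    have := finrank_homogeneousPart_one_add P
    lia
  obtain ⟨w, hw, hspan⟩ := exists_span_range_eq_span_homogeneousPart hfinrank
  refine ⟨w 0, w 1, (hw 0).1, (hw 1).1, hJP.trans ?_⟩
  rw [← range_fin_two, hspan, span_homogeneousPart_one_eq (by rw [htr, hone])]

end LinearForms

section Quadrics

open MvPolynomial

attribute [local instance] MvPolynomial.gradedAlgebra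

section Forms

variable {σ k : Type*} [Field k]

lemma isUnit_of_totalDegree_eq_zero {f : MvPolynomial σ k} (hf0 : f ≠ 0)
    (hf : f.totalDegree = 0) : IsUnit f := by
  obtain ⟨c, rfl⟩ : ∃ c, f = C c := ⟨_, totalDegree_eq_zero_iff_eq_C.1 hf⟩
  exact (IsUnit.mk0 c fun hc => hf0 (by rw [hc, map_zero])).map C

lemma not_isUnit_of_isHomogeneous {d : ℕ} (hd : d ≠ 0) {f : MvPolynomial σ k}
    (hf : f.IsHomogeneous d) : ¬ IsUnit f := fun hunit =>
  (hunit.map constantCoeff).ne_zero (hf.coeff_eq_zero (by simpa using hd.symm))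

lemma not_irreducible_mul_of_isHomogeneous {d e : ℕ} (hd : d ≠ 0) (he : e ≠ 0)
    {f g : MvPolynomial σ k} (hf : f.IsHomogeneous d) (hg : g.IsHomogeneous e) :
    ¬ Irreducible (f * g) := fun h =>
  (h.isUnit_or_isUnit rfl).elim (not_isUnit_of_isHomogeneous hd hf)
    (not_isUnit_of_isHomogeneous he hg)

lemma prime_of_isHomogeneous_one {f : MvPolynomial σ k} (hf0 : f ≠ 0) (hf : f.IsHomogeneous 1) :
    Prime f :=
  (irreducible_of_totalDegree_eq_one (hf.totalDegree hf0) fun _ hdvd => IsUnit.mk0 _ fun hx =>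
    hf0 (ext _ _ fun i => zero_dvd_iff.1 (hx ▸ hdvd i))).prime

lemma exists_eq_smul_of_dvd {d : ℕ} {f g : MvPolynomial σ k} (hf : f.IsHomogeneous d)
    (hg : g.IsHomogeneous d) (hdvd : f ∣ g) : ∃ c : k, c • f = g := by
  obtain ⟨h, rfl⟩ := hdvd
  have hcomponent := homogeneousComponent_mul_of_le hf le_rfl h
  rw [homogeneousComponent_of_mem hg, if_pos rfl, Nat.sub_self,
    homogeneousComponent_zero] at hcomponent
  exact ⟨_, by rw [hcomponent, smul_eq_C_mul, mul_comm]⟩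

lemma exists_eq_mul_add_mul {d e : ℕ} (hde : d ≤ e) {f u v : MvPolynomial σ k}
    (hf : f.IsHomogeneous e) (hu : u.IsHomogeneous d) (hv : v.IsHomogeneous d)
    (h : f ∈ Ideal.span {u, v}) :
    ∃ a b, a.IsHomogeneous (e - d) ∧ b.IsHomogeneous (e - d) ∧ f = a * u + b * v := by
  obtain ⟨a, b, rfl⟩ := Ideal.mem_span_pair.1 h
  refine ⟨homogeneousComponent (e - d) a, homogeneousComponent (e - d) b,
    homogeneousComponent_isHomogeneous _ _, homogeneousComponent_isHomogeneous _ _, ?_⟩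
  calc a * u + b * v = homogeneousComponent e (u * a + v * b) := by
        rw [mul_comm u, mul_comm v, homogeneousComponent_of_mem hf, if_pos rfl]
    _ = _ := by
        rw [map_add, homogeneousComponent_mul_of_le hu hde, homogeneousComponent_mul_of_le hv hde,
          mul_comm u, mul_comm v]

variable {a b c d u v : MvPolynomial σ k}

lemma det_ne_zero_of_irreducible (ha : a.IsHomogeneous 1) (hb : b.IsHomogeneous 1)
    (hc : c.IsHomogeneous 1) (hu : u.IsHomogeneous 1) (hv : v.IsHomogeneous 1)
    (hirr : Irreducible (a * u + b * v))
    (hli : LinearIndependent k ![a * u + b * v, c * u + d * v]) : a * d - b * c ≠ 0 := by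
  intro h
  rw [sub_eq_zero] at h
  rcases eq_or_ne a 0 with rfl | ha0
  · refine not_irreducible_mul_of_isHomogeneous one_ne_zero one_ne_zero hb hv ?_
    rwa [zero_mul, zero_add] at hirr
  rcases (prime_of_isHomogeneous_one ha0 ha).dvd_or_dvd ⟨d, h.symm⟩ with hdvd | hdvd
  · obtain ⟨κ, rfl⟩ := exists_eq_smul_of_dvd ha hb hdvd
    have huv : (u + κ • v).IsHomogeneous 1 :=
      hu.add ((homogeneousSubmodule σ k 1).smul_mem κ hv)
    refine not_irreducible_mul_of_isHomogeneous one_ne_zero one_ne_zero ha huv ?_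
    rwa [mul_add, mul_smul_comm, ← smul_mul_assoc]
  · obtain ⟨κ, rfl⟩ := exists_eq_smul_of_dvd ha hc hdvd
    obtain rfl : κ • b = d :=
      mul_left_cancel₀ ha0 (by rw [h, mul_smul_comm, mul_smul_comm, mul_comm])
    refine (LinearIndependent.pair_iff' hirr.ne_zero).1 hli κ ?_
    rw [smul_add, smul_mul_assoc, smul_mul_assoc]

/- Replacing `(a, b)` by `(a - t v, b + t u)` leaves `a u + b v` unchanged, so a relation between
the determinant and the two quadrics is the vanishing of another such determinant. -/
lemma linearIndependent_det (ha : a.IsHomogeneous 1) (hb : b.IsHomogeneous 1)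
    (hc : c.IsHomogeneous 1) (hu : u.IsHomogeneous 1) (hv : v.IsHomogeneous 1)
    (hirr : Irreducible (a * u + b * v))
    (hli : LinearIndependent k ![a * u + b * v, c * u + d * v]) :
    LinearIndependent k ![a * d - b * c, a * u + b * v, c * u + d * v] := by
  refine linearIndependent_finCons.2 ⟨hli, ?_⟩
  rw [Matrix.range_cons_cons_empty, Submodule.mem_span_pair]
  rintro ⟨s, t, hst⟩
  have hq₁ : (a - C t * v) * u + (b + C t * u) * v = a * u + b * v := by ring
  have hq₂ : (c + C s * v) * u + (d - C s * u) * v = c * u + d * v := by ring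
  refine det_ne_zero_of_irreducible (ha.sub (hv.C_mul t)) (hb.add (hu.C_mul t))
    (hc.add (hv.C_mul s)) hu hv (hq₁ ▸ hirr) (by rwa [hq₁, hq₂]) ?_
  rw [smul_eq_C_mul, smul_eq_C_mul] at hst
  linear_combination -hst

end Forms

variable {k : Type u} [Field k] {N : ℕ} {p : Ideal (MvPolynomial (Fin N) k)}

lemma eq_zero_of_mem_of_totalDegree_le_one
    (hp : p.IsHomogeneous (homogeneousSubmodule (Fin N) k)) (hne : p ≠ ⊤)
    (hlin : homogeneousPart p 1 = ⊥) {f : MvPolynomial (Fin N) k} (hf : f ∈ p)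
    (hdeg : f.totalDegree ≤ 1) : f = 0 := by
  have hzero : homogeneousComponent 0 f = 0 := by
    by_contra h
    refine hne (p.eq_top_of_isUnit_mem (homogeneousComponent_mem_of_mem hp hf 0)
      (isUnit_of_totalDegree_eq_zero h ?_))
    rw [homogeneousComponent_zero, totalDegree_C]
  have hone : homogeneousComponent 1 f = 0 :=
    (Submodule.eq_bot_iff _).1 hlin _
      ⟨homogeneousComponent_isHomogeneous 1 f, homogeneousComponent_mem_of_mem hp hf 1⟩
  rw [← sum_homogeneousComponent f]
  refine Finset.sum_eq_zero fun i hi => ?_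
  obtain rfl | rfl : i = 0 ∨ i = 1 := by
    have := Finset.mem_range.1 hi
    lia
  exacts [hzero, hone]

lemma irreducible_of_mem_homogeneousPart_two [p.IsPrime]
    (hp : p.IsHomogeneous (homogeneousSubmodule (Fin N) k)) (hlin : homogeneousPart p 1 = ⊥)
    {q : MvPolynomial (Fin N) k} (hq : q ∈ homogeneousPart p 2) (hq0 : q ≠ 0) :
    Irreducible q := by
  have isUnit_of_mem {x y : MvPolynomial (Fin N) k} (hxy : q = x * y) (hx : x ∈ p) :
      IsUnit y := by
    obtain ⟨hx0, hy0⟩ := mul_ne_zero_iff.1 (hxy ▸ hq0)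
    have hdeg := hq.1.totalDegree hq0
    rw [hxy, totalDegree_mul_of_isDomain hx0 hy0] at hdeg
    refine isUnit_of_totalDegree_eq_zero hy0 (by_contra fun hy => hx0 ?_)
    exact eq_zero_of_mem_of_totalDegree_le_one hp (Ideal.IsPrime.ne_top ‹_›) hlin hx (by lia)
  refine ⟨not_isUnit_of_isHomogeneous two_ne_zero hq.1, fun x y hxy => ?_⟩
  rcases Ideal.IsPrime.mem_or_mem ‹_› (hxy ▸ hq.2 : x * y ∈ p) with hx | hy
  · exact Or.inr (isUnit_of_mem hxy hx)
  · exact Or.inl (isUnit_of_mem (hxy.trans (mul_comm x y)) hy)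

lemma isRelPrime_of_linearIndependent [p.IsPrime]
    (hp : p.IsHomogeneous (homogeneousSubmodule (Fin N) k)) (hlin : homogeneousPart p 1 = ⊥)
    {q₁ q₂ : MvPolynomial (Fin N) k} (hq₁ : q₁ ∈ homogeneousPart p 2)
    (hq₂ : q₂ ∈ homogeneousPart p 2) (hli : LinearIndependent k ![q₁, q₂]) :
    IsRelPrime q₁ q₂ := by
  have hq₁0 : q₁ ≠ 0 := hli.ne_zero 0
  refine (irreducible_of_mem_homogeneousPart_two hp hlin hq₁ hq₁0).isRelPrime_iff_not_dvd.2
    fun hdvd => ?_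
  obtain ⟨c, hc⟩ := exists_eq_smul_of_dvd hq₁.1 hq₂.1 hdvd
  exact (LinearIndependent.pair_iff' hq₁0).1 hli c hc

lemma det_mem_of_isPrime [p.IsPrime] (hlin : homogeneousPart p 1 = ⊥)
    {a b c d u v : MvPolynomial (Fin N) k} (hb : b.IsHomogeneous 1) (hu : u.IsHomogeneous 1)
    (hv : v.IsHomogeneous 1) (hirr : Irreducible (a * u + b * v)) (hq₁ : a * u + b * v ∈ p)
    (hq₂ : c * u + d * v ∈ p) : a * d - b * c ∈ p := by
  have hu_notMem : u ∉ p := fun hup => by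
    obtain rfl : u = 0 := (Submodule.eq_bot_iff _).1 hlin u ⟨hu, hup⟩
    refine not_irreducible_mul_of_isHomogeneous one_ne_zero one_ne_zero hb hv ?_
    rwa [mul_zero, zero_add] at hirr
  refine (Ideal.IsPrime.mem_or_mem ‹_› (y := u) ?_).resolve_right hu_notMem
  rw [show (a * d - b * c) * u = d * (a * u + b * v) - b * (c * u + d * v) by ring]
  exact p.sub_mem (p.mul_mem_left _ hq₁) (p.mul_mem_left _ hq₂)

variable [IsAlgClosed k]

lemma finrank_homogeneousPart_two_le [p.IsPrime]
    (hp : p.IsHomogeneous (homogeneousSubmodule (Fin N) k)) (hlin : homogeneousPart p 1 = ⊥)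
    {δ c : ℕ} (hN : N = δ + 1 + c)
    (htr : Algebra.trdeg k (MvPolynomial (Fin N) k ⧸ p) = (δ + 1 : ℕ)) :
    Module.finrank k (homogeneousPart p 2) ≤ (c + 1).choose 2 := by
  have hone := finrank_homogeneousPart_one_add p
  have htwo := hilbertFunction_add_finrank_homogeneousPart p 2
  have hlower := (choose_add_mul_choose_le_hilbertFunction hp htr).2 1
  rw [hlin, finrank_bot, zero_add] at hone
  rw [finrank_homogeneousSubmodule, Fintype.card_fin] at htwo
  rw [hone, show N - (δ + 1) = c by lia, show 1 + 1 + δ = δ + 2 by ring, add_comm 1 δ,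
    Nat.choose_symm_add, Nat.choose_succ_self_right] at hlower
  have hchoose : (N + 2 - 1).choose 2 = (δ + 2).choose 2 + c * (δ + 1) + (c + 1).choose 2 := by
    rw [hN, show δ + 1 + c + 2 - 1 = δ + c + 2 by lia]
    qify
    simp only [Nat.cast_choose_two, Nat.cast_add, Nat.cast_ofNat, Nat.cast_one]
    ring
  lia

lemma exists_eq_mul_add_mul_of_hasMultiplicity_three {δ : ℕ}
    {p : Ideal (MvPolynomial (Fin (δ + 3)) k)} [p.IsPrime]
    (hp : p.IsHomogeneous (homogeneousSubmodule (Fin (δ + 3)) k))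
    (hmult : HasMultiplicity (hilbertFunction k p) δ 3) (hlin : homogeneousPart p 1 = ⊥)
    {q₁ q₂ : MvPolynomial (Fin (δ + 3)) k} (hq₁ : q₁ ∈ homogeneousPart p 2)
    (hq₂ : q₂ ∈ homogeneousPart p 2) (hli : LinearIndependent k ![q₁, q₂]) :
    ∃ a b c d u v : MvPolynomial (Fin (δ + 3)) k, (∀ i, (![a, b, c, d, u, v] i).IsHomogeneous 1) ∧
      q₁ = a * u + b * v ∧ q₂ = c * u + d * v := by
  have hrel := isRelPrime_of_linearIndependent hp hlin hq₁ hq₂ hli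
  have hpair := hasMultiplicity_hilbertFunction_span_pair hrel (hli.ne_zero 0) hq₁.1 hq₂.1
  have hpair' : HasMultiplicity (hilbertFunction k (Ideal.span {q₁, q₂})) δ (3 + 1) := by
    convert hpair using 1
    norm_num
  obtain ⟨u, v, hu, hv, hle⟩ := exists_linear_pair_of_hasMultiplicity_add_one hp
    (Ideal.homogeneous_span _ _ (by
      rintro _ (rfl | rfl)
      exacts [⟨2, hq₁.1⟩, ⟨2, hq₂.1⟩]))
    (Ideal.span_le.2 (Set.pair_subset hq₁.2 hq₂.2)) hmult hpair'
  obtain ⟨a, b, ha, hb, hab⟩ := exists_eq_mul_add_mul one_le_two hq₁.1 hu hv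
    (hle (Ideal.subset_span (Set.mem_insert _ _)))
  obtain ⟨c, d, hc, hd, hcd⟩ := exists_eq_mul_add_mul one_le_two hq₂.1 hu hv
    (hle (Ideal.subset_span (Set.mem_insert_of_mem _ rfl)))
  refine ⟨a, b, c, d, u, v, fun i => ?_, hab, hcd⟩
  fin_cases i
  exacts [ha, hb, hc, hd, hu, hv]

lemma exists_homogeneousPart_two_subset_adjoin {δ : ℕ}
    {p : Ideal (MvPolynomial (Fin (δ + 3)) k)} [p.IsPrime]
    (hp : p.IsHomogeneous (homogeneousSubmodule (Fin (δ + 3)) k))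
    (htr : Algebra.trdeg k (MvPolynomial (Fin (δ + 3)) k ⧸ p) = (δ + 1 : ℕ))
    (hmult : HasMultiplicity (hilbertFunction k p) δ 3) (hlin : homogeneousPart p 1 = ⊥)
    {q₁ q₂ : MvPolynomial (Fin (δ + 3)) k} (hq₁ : q₁ ∈ homogeneousPart p 2)
    (hq₂ : q₂ ∈ homogeneousPart p 2) (hli : LinearIndependent k ![q₁, q₂]) :
    ∃ ℓ : Fin 6 → MvPolynomial (Fin (δ + 3)) k, (∀ i, (ℓ i).IsHomogeneous 1) ∧
      homogeneousPart p 2 ≤ Subalgebra.toSubmodule (Algebra.adjoin k (Set.range ℓ)) := by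
  obtain ⟨a, b, c, d, u, v, hℓ, rfl, rfl⟩ :=
    exists_eq_mul_add_mul_of_hasMultiplicity_three hp hmult hlin hq₁ hq₂ hli
  have hirr := irreducible_of_mem_homogeneousPart_two hp hlin hq₁ (hli.ne_zero 0)
  have hdet : a * d - b * c ∈ homogeneousPart p 2 :=
    ⟨((hℓ 0).mul (hℓ 3)).sub ((hℓ 1).mul (hℓ 2)),
      det_mem_of_isPrime hlin (hℓ 1) (hℓ 4) (hℓ 5) hirr hq₁.2 hq₂.2⟩
  have hli₃ : LinearIndependent k ![a * d - b * c, a * u + b * v, c * u + d * v] :=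
    linearIndependent_det (hℓ 0) (hℓ 1) (hℓ 2) (hℓ 4) (hℓ 5) hirr hli
  have hspan : Submodule.span k (Set.range ![a * d - b * c, a * u + b * v, c * u + d * v]) =
      homogeneousPart p 2 := by
    refine Submodule.eq_of_le_of_finrank_le (Submodule.span_le.2 ?_) ?_
    · rintro _ ⟨i, rfl⟩
      fin_cases i
      exacts [hdet, hq₁, hq₂]
    · rw [finrank_span_eq_card hli₃]
      exact finrank_homogeneousPart_two_le (c := 2) hp hlin rfl htr
  refine ⟨![a, b, c, d, u, v], hℓ, hspan ▸ Submodule.span_le.2 ?_⟩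
  have hmem (i j) : ![a, b, c, d, u, v] i * ![a, b, c, d, u, v] j ∈
      Algebra.adjoin k (Set.range ![a, b, c, d, u, v]) :=
    mul_mem (Algebra.subset_adjoin ⟨i, rfl⟩) (Algebra.subset_adjoin ⟨j, rfl⟩)
  rintro _ ⟨i, rfl⟩
  fin_cases i
  exacts [sub_mem (hmem 0 3) (hmem 1 2), add_mem (hmem 0 4) (hmem 1 5),
    add_mem (hmem 2 4) (hmem 3 5)]

end Quadrics

section ProjectiveDimension

open MvPolynomial

attribute [local instance] MvPolynomial.gradedAlgebra

variable {k : Type u} [Field k]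

lemma multiplicity_le_one {δ : ℕ} {J : Ideal (MvPolynomial (Fin (δ + 1)) k)} {c : ℝ}
    (h : HasMultiplicity (hilbertFunction k J) δ c) : c ≤ 1 :=
  h.le_of_eventually_le (hasMultiplicity_hilbertFunction_bot δ)
    (.of_forall (hilbertFunction_anti bot_le))

lemma multiplicity_le_of_mem {δ d : ℕ} {J : Ideal (MvPolynomial (Fin (δ + 2)) k)} {c : ℝ}
    (h : HasMultiplicity (hilbertFunction k J) δ c) {g : MvPolynomial (Fin (δ + 2)) k}
    (hg0 : g ≠ 0) (hg : g.IsHomogeneous d) (hgJ : g ∈ J) : c ≤ d :=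
  h.le_of_eventually_le (hasMultiplicity_hilbertFunction_span_singleton hg0 hg)
    (.of_forall (hilbertFunction_anti ((Ideal.span_singleton_le_iff_mem J).2 hgJ)))

section LinearSubst

variable {σ τ : Type*} {φ : homogeneousSubmodule σ k 1 →ₗ[k] homogeneousSubmodule τ k 1}
  {ψ : homogeneousSubmodule τ k 1 →ₗ[k] homogeneousSubmodule σ k 1}
  {x : MvPolynomial σ k}

lemma exists_eq_linearSubst_add_mul (h : φ ∘ₗ ψ = LinearMap.id) {e d : ℕ} (hed : e ≤ d)
    (hx : x.IsHomogeneous e) (hker : RingHom.ker (linearSubst φ) ≤ Ideal.span {x})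
    {f : MvPolynomial σ k} (hf : f.IsHomogeneous d) :
    ∃ l, l.IsHomogeneous (d - e) ∧ f = linearSubst ψ (linearSubst φ f) + x * l := by
  have hmem : f - linearSubst ψ (linearSubst φ f) ∈ RingHom.ker (linearSubst φ) := by
    rw [RingHom.mem_ker, map_sub, linearSubst_linearSubst h, sub_self]
  obtain ⟨l, hl⟩ := Ideal.mem_span_singleton.1 (hker hmem)
  have hhom : (f - linearSubst ψ (linearSubst φ f)).IsHomogeneous d :=
    hf.sub (isHomogeneous_linearSubst ψ (isHomogeneous_linearSubst φ hf))
  refine ⟨homogeneousComponent (d - e) l, homogeneousComponent_isHomogeneous _ _, ?_⟩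
  rw [← homogeneousComponent_mul_of_le hx hed, ← hl, homogeneousComponent_of_mem hhom, if_pos rfl,
    add_sub_cancel]

end LinearSubst

lemma projDim_le_of_linearSubst_mem_adjoin {N M m n : ℕ}
    {φ : homogeneousSubmodule (Fin N) k 1 →ₗ[k] homogeneousSubmodule (Fin M) k 1}
    {ψ : homogeneousSubmodule (Fin M) k 1 →ₗ[k] homogeneousSubmodule (Fin N) k 1}
    (h : φ ∘ₗ ψ = LinearMap.id) {x : MvPolynomial (Fin N) k} (hx : x.IsHomogeneous 1)
    (hker : RingHom.ker (linearSubst φ) ≤ Ideal.span {x})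
    {ℓ : Fin m → MvPolynomial (Fin M) k} (hℓ : ∀ i, (ℓ i).IsHomogeneous 1)
    {f : Fin n → MvPolynomial (Fin N) k} (hf : ∀ j, (f j).IsHomogeneous 2)
    (hmem : ∀ j, linearSubst φ (f j) ∈ Algebra.adjoin k (Set.range ℓ)) :
    projDim (MvPolynomial (Fin N) k) (MvPolynomial (Fin N) k ⧸ Ideal.span (Set.range f)) ≤
      (n + (m + 1) : ℕ) := by
  choose l hl hfl using fun j => exists_eq_linearSubst_add_mul h one_le_two hx hker (hf j)
  let g : Fin n ⊕ Option (Fin m) → MvPolynomial (Fin N) k :=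
    Sum.elim l (Option.elim · x (linearSubst ψ ∘ ℓ))
  have hg (i) : (g i).IsHomogeneous 1 :=
    match i with
    | .inl j => hl j
    | .inr none => hx
    | .inr (some i) => isHomogeneous_linearSubst ψ (hℓ i)
  have hg_mem (i) : g i ∈ Algebra.adjoin k (Set.range g) := Algebra.subset_adjoin ⟨i, rfl⟩
  have hlift : (Algebra.adjoin k (Set.range ℓ)).map (linearSubst ψ) ≤
      Algebra.adjoin k (Set.range g) := by
    rw [AlgHom.map_adjoin, Algebra.adjoin_le_iff]
    rintro _ ⟨_, ⟨i, rfl⟩, rfl⟩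
    exact hg_mem (.inr (some i))
  refine (projDim_le_of_mem_adjoin hg fun j => ?_).trans_eq (by simp)
  rw [hfl j]
  exact add_mem (hlift ⟨_, hmem j, rfl⟩) (mul_mem (hg_mem (.inr none)) (hg_mem (.inl j)))

lemma exists_linearIndependent_pair_of_ker_le_span_singleton {R S ι : Type*} [CommRing R]
    [IsNoetherianRing R] [Algebra k R] [CommRing S] [Algebra k S] {p : Ideal R} [p.IsPrime]
    {f : ι → R} (hf : ∀ i, f i ∈ p) (hheight : 2 < (Ideal.span (Set.range f)).height)
    {π : R →ₐ[k] S} {x : R} (hx : x ∈ p) (hker : RingHom.ker π ≤ Ideal.span {x}) :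
    ∃ i j, LinearIndependent k ![π (f i), π (f j)] := by
  have exists_notMem {y : R} (hy : y ∈ p) : ∃ i, f i ∉ Ideal.span {x, y} := by
    by_contra! hmem
    exact hheight.not_ge (height_le_two_of_le_span_pair hx hy
      (Ideal.span_le.2 (Set.range_subset_iff.2 hmem)))
  have hker' (y) : RingHom.ker π ≤ Ideal.span {x, y} :=
    hker.trans (Ideal.span_mono (Set.singleton_subset_iff.2 (Set.mem_insert x _)))
  obtain ⟨i, hi⟩ := exists_notMem hx
  obtain ⟨j, hj⟩ := exists_notMem (hf i)
  refine ⟨i, j, (LinearIndependent.pair_iff' fun hzero => hi (hker' x hzero)).2 fun c hc => hj ?_⟩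
  have hsub : f j - c • f i ∈ Ideal.span {x, f i} :=
    hker' _ (by rw [RingHom.mem_ker, map_sub, map_smul, hc, sub_self])
  rw [← sub_add_cancel (f j) (c • f i)]
  refine add_mem hsub ?_
  rw [Algebra.smul_def]
  exact Ideal.mul_mem_left _ _ (Ideal.subset_span (Set.mem_insert_of_mem x rfl))

variable {N : ℕ} {p : Ideal (MvPolynomial (Fin N) k)} [p.IsPrime]

lemma isHomogeneous_of_span_range_le {ι : Type*} {d : ι → ℕ} {f : ι → MvPolynomial (Fin N) k}
    (hf : ∀ i, (f i).IsHomogeneous (d i)) (hle : Ideal.span (Set.range f) ≤ p)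
    (hheight : p.height ≤ (Ideal.span (Set.range f)).height) :
    p.IsHomogeneous (homogeneousSubmodule (Fin N) k) :=
  isHomogeneous_of_height_le
    (Ideal.homogeneous_span _ _ (by rintro _ ⟨i, rfl⟩; exact ⟨d i, hf i⟩)) hle hheight

variable [IsAlgClosed k]

lemma exists_trdeg_eq_and_hasMultiplicity
    (hp : p.IsHomogeneous (homogeneousSubmodule (Fin N) k)) {c : ℕ} (hheight : p.height = c)
    (hpos : 0 < hilbertSamuelMultiplicity k p) :
    ∃ δ, N = δ + 1 + c ∧ Algebra.trdeg k (MvPolynomial (Fin N) k ⧸ p) = (δ + 1 : ℕ) ∧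
      HasMultiplicity (hilbertFunction k p) δ (hilbertSamuelMultiplicity k p) := by
  obtain ⟨τ, hτ⟩ : ∃ τ : ℕ, Algebra.trdeg k (MvPolynomial (Fin N) k ⧸ p) = τ :=
    Cardinal.lt_aleph0.1 trdeg_lt_aleph0_of_finiteType
  obtain ⟨δ, rfl, hmult⟩ := exists_hasMultiplicity_hilbertSamuelMultiplicity hp hpos hτ
  have hdim := hasDimensionFormula_mvPolynomial k N p ‹_›
  rw [hheight, hτ, map_natCast] at hdim
  exact ⟨δ, by rw [add_comm]; exact_mod_cast hdim.symm, hτ, hmult⟩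

lemma finrank_homogeneousPart_one_mem_Icc
    (hp : p.IsHomogeneous (homogeneousSubmodule (Fin N) k)) {δ c e : ℕ} (hN : N = δ + 1 + c)
    (htr : Algebra.trdeg k (MvPolynomial (Fin N) k ⧸ p) = (δ + 1 : ℕ))
    (hmult : HasMultiplicity (hilbertFunction k p) δ e) :
    Module.finrank k (homogeneousPart p 1) ∈ Set.Icc (c + 1 - e) c := by
  have hlower := (choose_add_mul_choose_le_hilbertFunction hp htr).1
  have hupper : 1 + (hilbertFunction k p 1 - (δ + 1)) ≤ e := by
    exact_mod_cast one_add_le_of_eventually_hilbertFunction_le hp htr hmult (e := 0)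
      (.of_forall fun _ => le_rfl)
  have hfinrank := finrank_homogeneousPart_one_add p
  rw [Set.mem_Icc]
  lia

/- Modulo its linear forms, `p` becomes the zero ideal when it contains three of them and a cubic
hypersurface, which lies on no quadric, when it contains two. -/
lemma finrank_homogeneousPart_one_eq_one {ι : Type*} {f : ι → MvPolynomial (Fin N) k}
    (hf : ∀ i, (f i).IsHomogeneous 2) (hfp : ∀ i, f i ∈ p)
    (hheight : 2 < (Ideal.span (Set.range f)).height)
    (hp : p.IsHomogeneous (homogeneousSubmodule (Fin N) k)) {δ : ℕ} (hN : N = δ + 1 + 3)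
    (htr : Algebra.trdeg k (MvPolynomial (Fin N) k ⧸ p) = (δ + 1 : ℕ))
    (hmult : HasMultiplicity (hilbertFunction k p) δ 3) :
    Module.finrank k (homogeneousPart p 1) = 1 := by
  have hmem := finrank_homogeneousPart_one_mem_Icc hp hN htr (e := 3) (by exact_mod_cast hmult)
  obtain ⟨M, φ, ψ, p', h, hker, hM, -, -, hcomap, -⟩ := exists_isPrime_comap_linearSubst_eq hp
  rw [← hcomap, funext (hilbertFunction_comap_linearSubst h p')] at hmult
  rw [Set.mem_Icc] at hmem
  obtain hs | hs | hs : Module.finrank k (homogeneousPart p 1) = 1 ∨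
    Module.finrank k (homogeneousPart p 1) = 2 ∨ Module.finrank k (homogeneousPart p 1) = 3 := by
    lia
  · exact hs
  · obtain rfl : M = δ + 2 := by lia
    obtain ⟨w, hw, hspan⟩ := exists_span_range_eq_span_homogeneousPart hs
    rw [← hspan, range_fin_two] at hker
    refine absurd ?_ hheight.not_ge
    refine height_le_two_of_le_span_pair (hw 0).2 (hw 1).2 ?_
    rw [← hker, Ideal.span_le]
    rintro _ ⟨i, rfl⟩
    refine RingHom.mem_ker.2 (by_contra fun hzero => ?_)
    have hle := multiplicity_le_of_mem hmult hzero (isHomogeneous_linearSubst φ (hf i))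
      (Ideal.mem_comap.1 (hcomap.ge (hfp i)))
    norm_num at hle
  · obtain rfl : M = δ + 1 := by lia
    exact absurd (multiplicity_le_one hmult) (by norm_num)

lemma projDim_le_of_hasMultiplicity_three {n : ℕ} {f : Fin n → MvPolynomial (Fin N) k}
    (hf : ∀ i, (f i).IsHomogeneous 2) (hfp : ∀ i, f i ∈ p)
    (hheight : 2 < (Ideal.span (Set.range f)).height)
    (hp : p.IsHomogeneous (homogeneousSubmodule (Fin N) k)) {δ : ℕ} (hN : N = δ + 1 + 3)
    (htr : Algebra.trdeg k (MvPolynomial (Fin N) k ⧸ p) = (δ + 1 : ℕ))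
    (hmult : HasMultiplicity (hilbertFunction k p) δ 3) :
    projDim (MvPolynomial (Fin N) k) (MvPolynomial (Fin N) k ⧸ Ideal.span (Set.range f)) ≤
      (n + 7 : ℕ) := by
  have hs := finrank_homogeneousPart_one_eq_one hf hfp hheight hp hN htr hmult
  obtain ⟨w, hw, hspan⟩ := exists_span_range_eq_span_homogeneousPart hs
  obtain ⟨M, φ, ψ, p', h, hker, hM, hp', hp'hom, hcomap, hlin⟩ :=
    exists_isPrime_comap_linearSubst_eq hp
  obtain rfl : M = δ + 3 := by lia
  rw [← hspan, Set.range_unique] at hker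
  obtain ⟨i, j, hli⟩ :=
    exists_linearIndependent_pair_of_ker_le_span_singleton hfp hheight (hw _).2 hker.le
  rw [← hcomap, trdeg_quotient_comap_of_surjective (linearSubst_surjective h)] at htr
  rw [← hcomap, funext (hilbertFunction_comap_linearSubst h p')] at hmult
  have hquadric (i) : linearSubst φ (f i) ∈ homogeneousPart p' 2 :=
    ⟨isHomogeneous_linearSubst φ (hf i), Ideal.mem_comap.1 (hcomap.ge (hfp i))⟩
  obtain ⟨ℓ, hℓ, hadjoin⟩ := exists_homogeneousPart_two_subset_adjoin hp'hom htr hmult hlin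
    (hquadric i) (hquadric j) hli
  exact projDim_le_of_linearSubst_mem_adjoin h (hw _).1 hker.le hℓ hf
    fun i => hadjoin (hquadric i)

end ProjectiveDimension

/-- If `I` is a homogeneous ideal generated by `n` quadrics in a polynomial ring over an
algebraically closed field, and `I` has an associated prime `p` with `height p = 3` and
Hilbert–Samuel multiplicity `e(S/p) = 3`, then the stated bound on `pd_S(S/I)` holds. -/
theorem pd_le_of_assoc_prime_mult_three (k : Type u) [Field k] [IsAlgClosed k] (N : ℕ) (n : ℕ)
    (f : Fin n → MvPolynomial (Fin N) k)
    (hf : ∀ i, (f i).IsHomogeneous 2)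
    (I : Ideal (MvPolynomial (Fin N) k))
    (hI : I = Ideal.span (Set.range f))
    (hht : I.heightENat = 3)
    (p : Ideal (MvPolynomial (Fin N) k))
    (hp : IsAssociatedPrime p (MvPolynomial (Fin N) k ⧸ I))
    (hpht : p.heightENat = 3)
    (hpe : hilbertSamuelMultiplicity k p = 3) :
    projDim (MvPolynomial (Fin N) k) (MvPolynomial (Fin N) k ⧸ I) ≤ (n + 7 : ℕ) := by
  have hp_prime := hp.isPrime
  subst hI
  rw [heightENat_eq_height] at hht hpht
  have hle : Ideal.span (Set.range f) ≤ p := by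
    simpa only [Submodule.annihilator_top, Ideal.annihilator_quotient] using hp.annihilator_le
  have hp_hom := isHomogeneous_of_span_range_le hf hle (hpht.trans hht.symm).le
  obtain ⟨δ, hN, htr, hmult⟩ :=
    exists_trdeg_eq_and_hasMultiplicity hp_hom (c := 3) hpht (by rw [hpe]; norm_num)
  rw [hpe, Rat.cast_ofNat] at hmult
  refine projDim_le_of_hasMultiplicity_three hf (fun i => hle (Ideal.subset_span ⟨i, rfl⟩)) ?_
    hp_hom hN htr hmult
  rw [hht]
  norm_num
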